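/- arXiv:1702.02428 — 6 statements merged into one kernel-verified Lean document; each statement's English description precedes it below -/
import Mathlib

section
/- For every s ∈ I and every f ∈ C¹_b(ℝ^d), any classical solution u bounded on strips with datum f has spatial gradient continuous up to the initial time: the map (t,x) ↦ ∇_x u(t,x), defined for t > s, extends to a continuous function on [s,+∞)×ℝ^d whose value at (s,x) is ∇f(x); equivalently, ∇_x u(t,x) → ∇f(x₀) as (t,x) → (s,x₀) with t > s, for every x₀ ∈ ℝ^d. -/
open Set Filter MeasureTheory

noncomputable section

abbrev Euc (d : ℕ) := EuclideanSpace ℝ (Fin d)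

noncomputable def hess (d : ℕ) (g : Euc d → ℝ) (x : Euc d) (i j : Fin d) : ℝ :=
  fderiv ℝ (fun y => fderiv ℝ g y (EuclideanSpace.single j 1)) x (EuclideanSpace.single i 1)

noncomputable def minEig (d : ℕ) (A : Fin d → Fin d → ℝ) : ℝ :=
  sInf {r : ℝ | ∃ ξ : Euc d, ‖ξ‖ = 1 ∧ (∑ i, ∑ j, A i j * ξ i * ξ j) = r}

noncomputable def pdist (d : ℕ) (p q : ℝ × Euc d) : ℝ :=
  Real.sqrt |p.1 - q.1| + ‖p.2 - q.2‖

def LocHolderParab (d : ℕ) (α : ℝ) (I : Set ℝ) (g : ℝ → Euc d → ℝ) : Prop :=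
  ∀ K : Set (ℝ × Euc d), IsCompact K → K ⊆ I ×ˢ (univ : Set (Euc d)) →
    ∃ C > 0, ∀ p ∈ K, ∀ q ∈ K, |g p.1 p.2 - g q.1 q.2| ≤ C * pdist d p q ^ α

noncomputable def Aop (d : ℕ) (Q : ℝ → Euc d → Fin d → Fin d → ℝ)
    (b : ℝ → Euc d → Fin d → ℝ) (c : ℝ → Euc d → ℝ)
    (t : ℝ) (g : Euc d → ℝ) (x : Euc d) : ℝ :=
  (∑ i, ∑ j, Q t x i j * hess d g x i j)
    + (∑ i, b t x i * fderiv ℝ g x (EuclideanSpace.single i 1))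
    + c t x * g x

structure IsClassicalSolution (d : ℕ) (Q : ℝ → Euc d → Fin d → Fin d → ℝ)
    (b : ℝ → Euc d → Fin d → ℝ) (c : ℝ → Euc d → ℝ)
    (s : ℝ) (f : Euc d → ℝ) (u : ℝ → Euc d → ℝ) : Prop where
  cont : ContinuousOn (fun p : ℝ × Euc d => u p.1 p.2) (Ici s ×ˢ univ)
  tdiff : ∀ t, s < t → ∀ x, DifferentiableAt ℝ (fun τ => u τ x) t
  tderiv_cont : ContinuousOn (fun p : ℝ × Euc d => deriv (fun τ => u τ p.2) p.1) (Ioi s ×ˢ univ)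
  xdiff : ∀ t, s < t → ContDiff ℝ 2 (u t)
  grad_cont : ContinuousOn (fun p : ℝ × Euc d => fderiv ℝ (u p.1) p.2) (Ioi s ×ˢ univ)
  hess_cont : ContinuousOn (fun p : ℝ × Euc d => hess d (u p.1) p.2) (Ioi s ×ˢ univ)
  pde : ∀ t, s < t → ∀ x, deriv (fun τ => u τ x) t = Aop d Q b c t (u t) x
  init : ∀ x, u s x = f x

def BoundedOnStrips (d : ℕ) (s : ℝ) (u : ℝ → Euc d → ℝ) : Prop :=
  ∀ T, s < T → ∃ M, ∀ t ∈ Icc s T, ∀ x, |u t x| ≤ M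

def LocBddOn (I : Set ℝ) (g : ℝ → ℝ) : Prop :=
  ∀ a b : ℝ, Icc a b ⊆ I → ∃ M, ∀ t ∈ Icc a b, |g t| ≤ M

/-!
The argument is local near `(s, x₀)` and rests on the doubling of variables. Subtracting from `u`
the linear map `p = ∇f(x₀)` gives a function `v` which solves an equation with bounded source, and
whose initial datum has an arbitrarily small Lipschitz constant `ε` near `x₀`. To propagate the
smallness of the slope to positive times one maximizes

`v t x - v t y - k (ρ - ρ² / (4 r)) - (2 ε / r) |x - z|²`, `ρ = |x - y| ≤ r`, `|x - z| ≤ r`,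

over `x`, `y` and `t`. A positive maximum cannot sit at the initial time, by the choice of `ε`, nor
on the boundary, by the size of the penalizations. At an interior maximum the equations at `x`
and `y` are subtracted: the concavity of `ρ - ρ² / (4 r)` and the ellipticity contribute a term of order
`-ν k / r`, while all other terms are bounded or of order `ε K / r`, the coefficients `Q` being
Lipschitz in space. For `k` a large multiple of `ε` and then `r` small this is impossible. Hence
`|∇v| ≤ k` near `(s, x₀)`, with `k` as small as desired.
-/

open Matrix Metric
open scoped Topology

section QuadForm

variable {ι : Type*} [Fintype ι]

/-- The quadratic form `ξ ↦ ⟪A ξ, ξ⟫` of a square matrix, written as a double sum to match the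
definition of `minEig`. -/
def quadForm (A : Matrix ι ι ℝ) (ξ : EuclideanSpace ℝ ι) : ℝ := ∑ i, ∑ j, A i j * ξ i * ξ j

lemma quadForm_sub (A B : Matrix ι ι ℝ) (ξ : EuclideanSpace ℝ ι) :
    quadForm (A - B) ξ = quadForm A ξ - quadForm B ξ := by
  simp only [quadForm, Matrix.sub_apply, sub_mul, Finset.sum_sub_distrib]

lemma quadForm_neg (A : Matrix ι ι ℝ) (ξ : EuclideanSpace ℝ ι) :
    quadForm (-A) ξ = -quadForm A ξ := by
  simp only [quadForm, Matrix.neg_apply, neg_mul, Finset.sum_neg_distrib]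

lemma quadForm_smul (a : ℝ) (A : Matrix ι ι ℝ) (ξ : EuclideanSpace ℝ ι) :
    quadForm (a • A) ξ = a * quadForm A ξ := by
  simp only [quadForm, Matrix.smul_apply, smul_eq_mul, Finset.mul_sum, mul_assoc]

lemma quadForm_smul_right (A : Matrix ι ι ℝ) (a : ℝ) (ξ : EuclideanSpace ℝ ι) :
    quadForm A (a • ξ) = a ^ 2 * quadForm A ξ := by
  simp only [quadForm, PiLp.smul_apply, smul_eq_mul, Finset.mul_sum]
  exact Finset.sum_congr rfl fun i _ => Finset.sum_congr rfl fun j _ => by ring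

lemma quadForm_one [DecidableEq ι] (ξ : EuclideanSpace ℝ ι) :
    quadForm (1 : Matrix ι ι ℝ) ξ = ‖ξ‖ ^ 2 := by
  rw [EuclideanSpace.norm_sq_eq]
  simp [quadForm, Matrix.one_apply, sq]

lemma quadForm_vecMulVec_self (e ξ : EuclideanSpace ℝ ι) :
    quadForm (vecMulVec e e) ξ = (inner ℝ e ξ) ^ 2 := by
  simp only [quadForm, vecMulVec_apply, sq, PiLp.inner_apply, Finset.sum_mul_sum]
  refine Finset.sum_congr rfl fun i _ => Finset.sum_congr rfl fun j _ => ?_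
  simp only [RCLike.inner_apply, conj_trivial]
  ring

lemma quadForm_single [DecidableEq ι] (A : Matrix ι ι ℝ) (i : ι) :
    quadForm A (EuclideanSpace.single i 1) = A i i := by
  simp [quadForm, PiLp.single_apply]

lemma abs_quadForm_le (A : Matrix ι ι ℝ) (ξ : EuclideanSpace ℝ ι) :
    |quadForm A ξ| ≤ (∑ i, ∑ j, |A i j|) * ‖ξ‖ ^ 2 := by
  have coord_le (i : ι) : |ξ i| ≤ ‖ξ‖ := PiLp.norm_apply_le ξ i
  simp only [Finset.sum_mul]
  refine (Finset.abs_sum_le_sum_abs _ _).trans (Finset.sum_le_sum fun i _ => ?_)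
  refine (Finset.abs_sum_le_sum_abs _ _).trans (Finset.sum_le_sum fun j _ => ?_)
  rw [abs_mul, abs_mul, mul_assoc, sq]
  gcongr <;> exact coord_le _

lemma trace_le_of_quadForm_le {A : Matrix ι ι ℝ} {a : ℝ}
    (hA : ∀ ξ : EuclideanSpace ℝ ι, quadForm A ξ ≤ a * ‖ξ‖ ^ 2) :
    A.trace ≤ a * Fintype.card ι := by
  classical
  calc A.trace ≤ ∑ _i : ι, a := Finset.sum_le_sum fun i _ => by
        simpa [quadForm_single] using hA (EuclideanSpace.single i 1)
    _ = a * Fintype.card ι := by simp [mul_comm]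

lemma posSemidef_of_quadForm_nonneg {A : Matrix ι ι ℝ} (hsymm : A.IsSymm)
    (hA : ∀ ξ : EuclideanSpace ℝ ι, 0 ≤ quadForm A ξ) : A.PosSemidef := by
  refine .of_dotProduct_mulVec_nonneg (by rwa [IsHermitian, conjTranspose_eq_transpose_of_trivial])
    fun v => (hA (WithLp.toLp 2 v)).trans_eq ?_
  simp only [quadForm, dotProduct, mulVec, Finset.mul_sum, star_trivial]
  exact Finset.sum_congr rfl fun i _ => Finset.sum_congr rfl fun j _ => by ring

lemma sum_mul_le_mul_trace_of_posSemidef {X Y : Matrix ι ι ℝ} {a : ℝ} (hX : X.PosSemidef)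
    (hY : ∀ ξ : EuclideanSpace ℝ ι, quadForm Y ξ ≤ a * ‖ξ‖ ^ 2) :
    ∑ i, ∑ j, X i j * Y i j ≤ a * X.trace := by
  obtain ⟨n, w, hw⟩ := posSemidef_iff_eq_sum_vecMulVec.mp hX
  have X_apply (i j : ι) : X i j = ∑ k, w k i * w k j := by
    simpa [Matrix.sum_apply, vecMulVec_apply] using congrFun₂ hw i j
  calc ∑ i, ∑ j, X i j * Y i j = ∑ k, quadForm Y (WithLp.toLp 2 (w k)) := by
        simp only [X_apply, quadForm, Finset.sum_mul]
        rw [Finset.sum_comm_cycle]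
        refine Finset.sum_congr rfl fun i _ => ?_
        refine Finset.sum_congr rfl fun k _ => Finset.sum_congr rfl fun j _ => by ring
    _ ≤ ∑ k, a * ‖WithLp.toLp 2 (w k)‖ ^ 2 := Finset.sum_le_sum fun k _ => hY _
    _ = a * X.trace := by
        simp only [Matrix.trace, Matrix.diag_apply, X_apply, EuclideanSpace.norm_sq_eq,
          ← Finset.mul_sum]
        rw [Finset.sum_comm]
        simp [sq]

lemma posSemidef_sub_smul_one_sub_smul_vecMulVec [DecidableEq ι] {P : Matrix ι ι ℝ}
    {e : EuclideanSpace ℝ ι} {κ ν : ℝ} (hP : P.IsSymm) (he : ‖e‖ = 1) (hν : 0 ≤ ν)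
    (hell : ∀ ξ : EuclideanSpace ℝ ι, (κ + ν) * ‖ξ‖ ^ 2 ≤ quadForm P ξ) :
    (P - κ • (1 : Matrix ι ι ℝ) - ν • vecMulVec e e).PosSemidef := by
  refine posSemidef_of_quadForm_nonneg ?_ fun ξ => ?_
  · simp [IsSymm, hP.eq, transpose_vecMulVec]
  · have inner_sq_le : (inner ℝ e ξ) ^ 2 ≤ ‖ξ‖ ^ 2 := by
      exact sq_le_sq.mpr (by simpa [he] using abs_real_inner_le_norm e ξ)
    simp only [quadForm_sub, quadForm_smul, quadForm_one, quadForm_vecMulVec_self]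
    nlinarith [hell ξ]

/-- `P = C + κ • 1 + ν • e eᵀ` and `R = C + (κ • 1 - (P - R)) + ν • e eᵀ` with positive
semidefinite summands. The forms are compared in the directions `(ξ, ξ)` on `C`, in `(e, e)` on
`e eᵀ`, and in `(ξ, 0)` or `(0, ξ)` on the remaining parts, which are of size `κ`. -/
lemma sum_mul_sub_sum_mul_le {P R A B : Matrix ι ι ℝ} {e : EuclideanSpace ℝ ι} {κ ν a m θ : ℝ}
    (hP : P.IsSymm) (hR : R.IsSymm) (he : ‖e‖ = 1) (hκ : 0 ≤ κ) (hν : 0 ≤ ν) (ha : 0 ≤ a)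
    (hell : ∀ ξ : EuclideanSpace ℝ ι, (κ + ν) * ‖ξ‖ ^ 2 ≤ quadForm P ξ)
    (hdist : ∀ ξ : EuclideanSpace ℝ ι, |quadForm (P - R) ξ| ≤ κ * ‖ξ‖ ^ 2)
    (hAB : ∀ ξ η : EuclideanSpace ℝ ι,
      quadForm A ξ - quadForm B η ≤ a * ‖ξ - η‖ ^ 2 + m * ‖ξ‖ ^ 2)
    (hABe : quadForm A e - quadForm B e ≤ m - θ) :
    (∑ i, ∑ j, P i j * A i j) - ∑ i, ∑ j, R i j * B i j ≤
      m * P.trace - ν * θ + 3 * a * κ * Fintype.card ι := by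
  classical
  have quadForm_zero_right (M : Matrix ι ι ℝ) : quadForm M 0 = 0 := by simp [quadForm]
  have common := sum_mul_le_mul_trace_of_posSemidef (Y := A - B)
    (posSemidef_sub_smul_one_sub_smul_vecMulVec hP he hν hell)
    fun ξ => by simpa [quadForm_sub] using hAB ξ ξ
  have only_A := sum_mul_le_mul_trace_of_posSemidef (Y := A) (a := a + m) PosSemidef.one
    fun ξ => by simpa [quadForm_zero_right, add_mul] using hAB ξ 0
  have only_B := sum_mul_le_mul_trace_of_posSemidef (X := κ • (1 : Matrix ι ι ℝ) - (P - R))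
    (Y := -B) (a := a)
    (posSemidef_of_quadForm_nonneg (by simp [IsSymm, hP.eq, hR.eq]) fun ξ => by
      rw [quadForm_sub, quadForm_smul, quadForm_one]
      linarith [le_of_abs_le (hdist ξ)])
    fun ξ => by simpa [quadForm_zero_right, quadForm_neg] using hAB 0 ξ
  have neg_trace_le := trace_le_of_quadForm_le (A := -(P - R)) (a := κ) fun ξ => by
    rw [quadForm_neg]
    linarith [neg_le_of_abs_le (hdist ξ)]
  have trace_e : (vecMulVec e e).trace = 1 := by
    rw [trace_vecMulVec, ← one_pow 2, ← he, EuclideanSpace.norm_sq_eq]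
    simp [dotProduct, sq]
  have decomposition : (∑ i, ∑ j, P i j * A i j) - ∑ i, ∑ j, R i j * B i j =
      (∑ i, ∑ j, (P - κ • (1 : Matrix ι ι ℝ) - ν • vecMulVec e e) i j * (A - B) i j) +
        ν * (quadForm A e - quadForm B e) + κ * (∑ i, ∑ j, (1 : Matrix ι ι ℝ) i j * A i j) +
        ∑ i, ∑ j, (κ • (1 : Matrix ι ι ℝ) - (P - R)) i j * (-B) i j := by
    simp only [quadForm, Finset.mul_sum, ← Finset.sum_sub_distrib, ← Finset.sum_add_distrib,
      Matrix.sub_apply, Matrix.smul_apply, Matrix.neg_apply, smul_eq_mul, vecMulVec_apply]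
    exact Finset.sum_congr rfl fun i _ => Finset.sum_congr rfl fun j _ => by ring
  simp only [trace_sub, trace_smul, trace_one, trace_neg, trace_e, smul_eq_mul]
    at common only_A only_B neg_trace_le
  linarith [mul_le_mul_of_nonneg_left hABe hν, mul_le_mul_of_nonneg_left only_A hκ,
    mul_le_mul_of_nonneg_left neg_trace_le ha]

end QuadForm

section MinEig

variable {d : ℕ} {A : Fin d → Fin d → ℝ}

lemma minEig_le_quadForm {ξ : Euc d} (hξ : ‖ξ‖ = 1) : minEig d A ≤ quadForm (of A) ξ := by
  refine csInf_le ⟨-∑ i, ∑ j, |A i j|, ?_⟩ ⟨ξ, hξ, rfl⟩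
  rintro _ ⟨η, hη, rfl⟩
  refine neg_le_of_abs_le ((abs_quadForm_le (of A) η).trans_eq ?_)
  simp [hη]

lemma minEig_le_diag (i : Fin d) : minEig d A ≤ A i i :=
  (minEig_le_quadForm (by simp)).trans_eq (quadForm_single (of A) i)

lemma minEig_le_sum_abs_diag (i : Fin d) : minEig d A ≤ ∑ k, |A k k| :=
  calc minEig d A ≤ |A i i| := (minEig_le_diag i).trans (le_abs_self _)
    _ ≤ ∑ k, |A k k| := Finset.single_le_sum (f := fun k => |A k k|)
      (fun _ _ => abs_nonneg _) (Finset.mem_univ i)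

lemma mul_norm_sq_le_quadForm_of_le_minEig {ν : ℝ} (hν : ν ≤ minEig d A) (ξ : Euc d) :
    ν * ‖ξ‖ ^ 2 ≤ quadForm (of A) ξ := by
  rcases eq_or_ne ξ 0 with rfl | hξ
  · simp [quadForm]
  have unit_le : ν ≤ quadForm (of A) (‖ξ‖⁻¹ • ξ) :=
    hν.trans (minEig_le_quadForm (norm_smul_inv_norm hξ))
  rwa [quadForm_smul_right, inv_pow, le_inv_mul_iff₀ (by positivity), mul_comm] at unit_le

end MinEig

section SecondDerivativeTest

lemma secondDeriv_nonpos_of_isLocalMax {F F' : ℝ → ℝ} {F'' x : ℝ}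
    (hF : ∀ τ, HasDerivAt F (F' τ) τ) (hF' : HasDerivAt F' F'' x) (hmax : IsLocalMax F x) :
    F'' ≤ 0 := by
  have deriv_F : deriv F = F' := funext fun τ => (hF τ).deriv
  by_contra! F''_pos
  have hmin : IsLocalMin F x := isLocalMin_of_deriv_deriv_pos (by rwa [deriv_F, hF'.deriv])
    hmax.deriv_eq_zero (hF x).continuousAt
  have F_const : F =ᶠ[𝓝 x] fun _ => F x := by
    filter_upwards [hmax, hmin] with τ using le_antisymm
  have deriv_F_zero : F' =ᶠ[𝓝 x] fun _ => 0 := by simpa [deriv_F] using F_const.deriv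
  exact F''_pos.ne' ((hF'.congr_of_eventuallyEq deriv_F_zero.symm).unique (hasDerivAt_const x 0))

lemma deriv_eq_and_secondDeriv_le_of_le_quadratic {G G' : ℝ → ℝ} {G'' a b : ℝ}
    (hG : ∀ τ, HasDerivAt G (G' τ) τ) (hG' : HasDerivAt G' G'' 0)
    (hle : ∀ᶠ τ in 𝓝 0, G τ ≤ G 0 + a * τ + b * τ ^ 2) :
    G' 0 = a ∧ G'' ≤ 2 * b := by
  have hF (τ : ℝ) : HasDerivAt (fun τ => G τ - a * τ - b * τ ^ 2) (G' τ - a - b * (2 * τ)) τ :=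
    (((hG τ).sub ((hasDerivAt_id τ).const_mul a)).sub
      (((hasDerivAt_id τ).pow 2).const_mul b)).congr_deriv (by simp)
  have hF' : HasDerivAt (fun τ => G' τ - a - b * (2 * τ)) (G'' - 2 * b) 0 :=
    ((hG'.sub_const a).sub (((hasDerivAt_id (0 : ℝ)).const_mul 2).const_mul b)).congr_deriv
      (by simp [mul_comm])
  have hmax : IsLocalMax (fun τ => G τ - a * τ - b * τ ^ 2) 0 := by
    filter_upwards [hle] with τ hτ
    linarith
  have first_order := hmax.hasDerivAt_eq_zero (hF 0)
  have second_order := secondDeriv_nonpos_of_isLocalMax hF hF' hmax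
  constructor <;> linarith

lemma nonneg_of_hasDerivAt_of_forall_le {g : ℝ → ℝ} {g' s t : ℝ} (hst : s < t)
    (hg : HasDerivAt g g' t) (hmax : ∀ τ ∈ Ioo s t, g τ ≤ g t) : 0 ≤ g' := by
  refine ge_of_tendsto (hasDerivWithinAt_iff_tendsto_slope' self_notMem_Iio |>.mp
    hg.hasDerivWithinAt) ?_
  filter_upwards [Ioo_mem_nhdsLT hst] with τ hτ
  rw [slope_def_field]
  exact div_nonneg_of_nonpos (by linarith [hmax τ hτ]) (by linarith [hτ.2])

variable {E : Type*} [NormedAddCommGroup E] [NormedSpace ℝ E] {g : E → ℝ}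

lemma hasDerivAt_add_smul (x ξ : E) (τ : ℝ) : HasDerivAt (fun τ : ℝ => x + τ • ξ) ξ τ := by
  simpa using ((hasDerivAt_id τ).smul_const ξ).const_add x

lemma hasDerivAt_comp_add_smul (hg : Differentiable ℝ g) (x ξ : E) (τ : ℝ) :
    HasDerivAt (fun τ : ℝ => g (x + τ • ξ)) (fderiv ℝ g (x + τ • ξ) ξ) τ :=
  (hg _).hasFDerivAt.comp_hasDerivAt τ (hasDerivAt_add_smul x ξ τ)

lemma hasDerivAt_fderiv_add_smul_apply (hg : ContDiff ℝ 2 g) (x ξ : E) :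
    HasDerivAt (fun τ : ℝ => fderiv ℝ g (x + τ • ξ) ξ) (fderiv ℝ (fderiv ℝ g) x ξ ξ) 0 := by
  have hg' : Differentiable ℝ (fderiv ℝ g) :=
    (hg.fderiv_right (m := 1) (by norm_num)).differentiable (by norm_num)
  simpa using ((hg' _).hasFDerivAt.comp_hasDerivAt 0 (hasDerivAt_add_smul x ξ 0)).clm_apply
    (hasDerivAt_const 0 ξ)

lemma fderiv_sub_eq_and_secondDeriv_sub_le_of_le_quadratic (hg : ContDiff ℝ 2 g) {x y ξ η : E}
    {a b : ℝ} (hle : ∀ᶠ τ : ℝ in 𝓝 0,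
      g (x + τ • ξ) - g (y + τ • η) ≤ g x - g y + a * τ + b * τ ^ 2) :
    fderiv ℝ g x ξ - fderiv ℝ g y η = a ∧
      fderiv ℝ (fderiv ℝ g) x ξ ξ - fderiv ℝ (fderiv ℝ g) y η η ≤ 2 * b := by
  have hg₁ : Differentiable ℝ g := hg.differentiable (by norm_num)
  simpa using deriv_eq_and_secondDeriv_le_of_le_quadratic
    (fun τ => (hasDerivAt_comp_add_smul hg₁ x ξ τ).sub (hasDerivAt_comp_add_smul hg₁ y η τ))
    ((hasDerivAt_fderiv_add_smul_apply hg x ξ).sub (hasDerivAt_fderiv_add_smul_apply hg y η))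
    (by simpa using hle)

lemma quadForm_hess {d : ℕ} {g : Euc d → ℝ} (hg : ContDiff ℝ 2 g) (x ξ : Euc d) :
    quadForm (of (hess d g x)) ξ = fderiv ℝ (fderiv ℝ g) x ξ ξ := by
  have hg' : DifferentiableAt ℝ (fderiv ℝ g) x :=
    (hg.fderiv_right (m := 1) (by norm_num)).differentiable (by norm_num) x
  have sum_single : ξ = ∑ i, ξ i • EuclideanSpace.single i (1 : ℝ) := by
    ext j
    simp [Pi.single_apply]
  have hess_eq (i j : Fin d) : hess d g x i j =
      fderiv ℝ (fderiv ℝ g) x (EuclideanSpace.single i 1) (EuclideanSpace.single j 1) := by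
    simp [hess, fderiv_clm_apply hg' (differentiableAt_const _)]
  conv_rhs => rw [sum_single]
  simp only [quadForm, of_apply, hess_eq, map_sum, map_smul, _root_.sum_apply,
    _root_.smul_apply, smul_eq_mul, Finset.mul_sum]
  rw [Finset.sum_comm]
  exact Finset.sum_congr rfl fun j _ => Finset.sum_congr rfl fun i _ => by ring

end SecondDerivativeTest

section Doubling

variable {E : Type*} [NormedAddCommGroup E]

/-- The strictly concave modulus `ρ - ρ² / (4 r)` penalizing the distance of the doubled
variables; it is increasing on `[0, 2 r]`. -/
def barrier (r ρ : ℝ) : ℝ := ρ - ρ ^ 2 / (4 * r)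

/-- The function of two copies `(x, y)` of the variable whose maximum is studied in the doubling
argument: it compares `g x - g y` with the concave modulus `k * barrier r ‖x - y‖`, and localizes
`x` near `z`. -/
def doubled (g : E → ℝ) (z : E) (r k m : ℝ) (q : E × E) : ℝ :=
  g q.1 - g q.2 - k * barrier r ‖q.1 - q.2‖ - m * ‖q.1 - z‖ ^ 2

lemma half_le_barrier {r ρ : ℝ} (hρ : 0 ≤ ρ) (hρr : ρ ≤ 2 * r) : ρ / 2 ≤ barrier r ρ := by
  have : ρ ^ 2 / (4 * r) ≤ ρ / 2 := div_le_of_le_mul₀ (by linarith) (by linarith) (by nlinarith)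
  rw [barrier]
  linarith

lemma barrier_le {r : ℝ} (hr : 0 ≤ r) (ρ : ℝ) : barrier r ρ ≤ ρ :=
  sub_le_self _ (by positivity)

variable {g : E → ℝ} {x y z : E} {r k m : ℝ}

lemma doubled_nonpos_of_sub_le {ε : ℝ} (hε : 2 * ε ≤ k) (hk : 0 ≤ k) (hm : 0 ≤ m)
    (hxyr : ‖x - y‖ ≤ 2 * r) (hlip : g x - g y ≤ ε * ‖x - y‖) :
    doubled g z r k m (x, y) ≤ 0 := by
  have barrier_ge := mul_le_mul_of_nonneg_left (half_le_barrier (norm_nonneg (x - y)) hxyr) hk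
  have lip_le := mul_le_mul_of_nonneg_right hε (norm_nonneg (x - y))
  have penalty_nonneg : 0 ≤ m * ‖x - z‖ ^ 2 := by positivity
  rw [doubled]
  linarith

lemma ne_and_lt_of_doubled_pos {ε : ℝ} (hr : 0 < r) (hε : 0 < ε) (hεk : 3 * ε ≤ k)
    (hxy : ‖x - y‖ ≤ r) (hxz : ‖x - z‖ ≤ r) (hosc : g x - g y ≤ 2 * ε * r)
    (hpos : 0 < doubled g z r k (2 * ε / r) (x, y)) :
    x ≠ y ∧ ‖x - y‖ < r ∧ ‖x - z‖ < r := by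
  have k_pos : 0 < k := by linarith
  have penalty_nonneg : 0 ≤ 2 * ε / r * ‖x - z‖ ^ 2 := by positivity
  simp only [doubled] at hpos
  refine ⟨?_, hxy.lt_of_ne fun h => ?_, hxz.lt_of_ne fun h => ?_⟩
  · rintro rfl
    simp only [sub_self, norm_zero, barrier, ne_eq, OfNat.ofNat_ne_zero, not_false_eq_true,
      zero_pow, zero_div, mul_zero, zero_sub, neg_pos] at hpos
    exact hpos.not_ge penalty_nonneg
  · have barrier_r : barrier r r = 3 / 4 * r := by rw [barrier]; field_simp; ring
    rw [h, barrier_r] at hpos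
    nlinarith [mul_le_mul_of_nonneg_right hεk hr.le]
  · have penalty_eq : 2 * ε / r * r ^ 2 = 2 * ε * r := by field_simp
    have barrier_nonneg := half_le_barrier (norm_nonneg (x - y)) (r := r) (by linarith)
    rw [h, penalty_eq] at hpos
    nlinarith [norm_nonneg (x - y)]

lemma isLocalMax_doubled_of_forall_le (hxy : ‖x - y‖ < r) (hxz : ‖x - z‖ < r)
    (hmax : ∀ x' y' : E, ‖x' - z‖ ≤ r → ‖x' - y'‖ ≤ r →
      doubled g z r k m (x', y') ≤ doubled g z r k m (x, y)) :
    IsLocalMax (doubled g z r k m) (x, y) := by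
  have near_diff : ∀ᶠ q : E × E in 𝓝 (x, y), ‖q.1 - q.2‖ < r :=
    Tendsto.eventually_lt_const hxy (Continuous.tendsto' (by fun_prop) _ _ rfl)
  have near_fst : ∀ᶠ q : E × E in 𝓝 (x, y), ‖q.1 - z‖ < r :=
    Tendsto.eventually_lt_const hxz (Continuous.tendsto' (by fun_prop) _ _ rfl)
  filter_upwards [near_diff, near_fst] with q hq hq'
  exact hmax q.1 q.2 hq'.le hq.le

lemma mem_closedBall_two_mul (hxz : ‖x - z‖ ≤ r) (hxy : ‖x - y‖ ≤ r) :
    y ∈ closedBall z (2 * r) := by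
  rw [mem_closedBall_iff_norm]
  linarith [norm_sub_le_norm_sub_add_norm_sub y x z, norm_sub_rev x y]

lemma exists_isMaxOn_doubled [ProperSpace E] {v : ℝ → E → ℝ} {s T : ℝ} (hr : 0 ≤ r)
    (hsT : s ≤ T)
    (hv : ContinuousOn (fun q : ℝ × E => v q.1 q.2) (Icc s T ×ˢ closedBall z (2 * r))) :
    ∃ t ∈ Icc s T, ∃ x y : E, ‖x - z‖ ≤ r ∧ ‖x - y‖ ≤ r ∧
      ∀ t' ∈ Icc s T, ∀ x' y' : E, ‖x' - z‖ ≤ r → ‖x' - y'‖ ≤ r →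
        doubled (v t') z r k m (x', y') ≤ doubled (v t) z r k m (x, y) := by
  have hcompact : IsCompact (Icc s T ×ˢ closedBall z r ×ˢ closedBall (0 : E) r) :=
    isCompact_Icc.prod ((isCompact_closedBall z r).prod (isCompact_closedBall 0 r))
  have fst_mem : MapsTo (fun q : ℝ × E × E => (q.1, q.2.1))
      (Icc s T ×ˢ closedBall z r ×ˢ closedBall (0 : E) r) (Icc s T ×ˢ closedBall z (2 * r)) :=
    fun q hq => ⟨hq.1, closedBall_subset_closedBall (by linarith) hq.2.1⟩
  have snd_mem : MapsTo (fun q : ℝ × E × E => (q.1, q.2.1 - q.2.2))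
      (Icc s T ×ˢ closedBall z r ×ˢ closedBall (0 : E) r) (Icc s T ×ˢ closedBall z (2 * r)) := by
    refine fun q hq => ⟨hq.1, mem_closedBall_two_mul (mem_closedBall_iff_norm.mp hq.2.1) ?_⟩
    simpa using hq.2.2
  have hcont : ContinuousOn
      (fun q : ℝ × E × E => doubled (v q.1) z r k m (q.2.1, q.2.1 - q.2.2))
      (Icc s T ×ˢ closedBall z r ×ˢ closedBall (0 : E) r) := by
    simp only [doubled, barrier]
    exact (((hv.comp (by fun_prop) fst_mem).sub (hv.comp (by fun_prop) snd_mem)).sub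
      (by fun_prop)).sub (by fun_prop)
  obtain ⟨⟨t, x, w⟩, ⟨ht, hx, hw⟩, hmax⟩ := hcompact.exists_isMaxOn
    ⟨(s, z, 0), left_mem_Icc.mpr hsT, mem_closedBall_self hr, mem_closedBall_self hr⟩ hcont
  refine ⟨t, ht, x, x - w, mem_closedBall_iff_norm.mp hx, by simpa using hw,
    fun t' ht' x' y' hx' hy' => ?_⟩
  simpa using hmax (show (t', x', x' - y') ∈ Icc s T ×ˢ closedBall z r ×ˢ closedBall (0 : E) r from
    ⟨ht', mem_closedBall_iff_norm.mpr hx', mem_closedBall_zero_iff.mpr hy'⟩)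

variable [InnerProductSpace ℝ E]

lemma abs_barrier_slope_mul_inner_le {w : E} (hw : w ≠ 0) (hwr : ‖w‖ ≤ 2 * r) (ζ : E) :
    |(1 / ‖w‖ - 1 / (2 * r)) * inner ℝ w ζ| ≤ ‖ζ‖ := by
  have w_pos : 0 < ‖w‖ := norm_pos_iff.mpr hw
  have slope_nonneg : 0 ≤ 1 / ‖w‖ - 1 / (2 * r) :=
    sub_nonneg.mpr (one_div_le_one_div_of_le w_pos hwr)
  have slope_le : 1 / ‖w‖ - 1 / (2 * r) ≤ 1 / ‖w‖ :=
    sub_le_self _ (one_div_nonneg.mpr (w_pos.le.trans hwr))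
  calc |(1 / ‖w‖ - 1 / (2 * r)) * inner ℝ w ζ|
      ≤ 1 / ‖w‖ * (‖w‖ * ‖ζ‖) := by
        rw [abs_mul, abs_of_nonneg slope_nonneg]
        gcongr
        exact abs_real_inner_le_norm w ζ
    _ = ‖ζ‖ := by field_simp

/-- As a function of `ρ ^ 2`, the barrier is concave, so it lies below its tangent. -/
lemma barrier_norm_add_smul_le {w : E} (hw : w ≠ 0) (ζ : E) (τ : ℝ) :
    barrier r ‖w + τ • ζ‖ ≤ barrier r ‖w‖ + (1 / ‖w‖ - 1 / (2 * r)) * inner ℝ w ζ * τ +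
      (1 / ‖w‖ - 1 / (2 * r)) / 2 * ‖ζ‖ ^ 2 * τ ^ 2 := by
  have w_pos : 0 < ‖w‖ := norm_pos_iff.mpr hw
  have norm_sq : ‖w + τ • ζ‖ ^ 2 = ‖w‖ ^ 2 + 2 * τ * inner ℝ w ζ + τ ^ 2 * ‖ζ‖ ^ 2 := by
    rw [norm_add_sq_real, norm_smul, inner_smul_right, mul_pow, Real.norm_eq_abs, sq_abs]
    ring
  have tangent_gap : barrier r ‖w‖ + (1 / ‖w‖ - 1 / (2 * r)) / 2 * (‖w + τ • ζ‖ ^ 2 - ‖w‖ ^ 2) -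
      barrier r ‖w + τ • ζ‖ = (‖w + τ • ζ‖ - ‖w‖) ^ 2 / (2 * ‖w‖) := by
    have : ‖w‖ ≠ 0 := w_pos.ne'
    simp only [barrier]
    field_simp
    ring
  have gap_nonneg : 0 ≤ (‖w + τ • ζ‖ - ‖w‖) ^ 2 / (2 * ‖w‖) := by positivity
  rw [norm_sq] at tangent_gap
  linarith

lemma barrier_norm_add_smul_eq {w : E} (hw : w ≠ 0) :
    ∀ᶠ τ : ℝ in 𝓝 0, barrier r ‖w + τ • ((2 : ℝ) • (‖w‖⁻¹ • w))‖ =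
      barrier r ‖w‖ + (2 - ‖w‖ / r) * τ - 1 / r * τ ^ 2 := by
  have w_pos : 0 < ‖w‖ := norm_pos_iff.mpr hw
  filter_upwards [Ioi_mem_nhds (show -‖w‖ / 2 < 0 by linarith)] with τ hτ
  have norm_eq : ‖w + τ • ((2 : ℝ) • (‖w‖⁻¹ • w))‖ = ‖w‖ + 2 * τ := by
    have factor : w + τ • ((2 : ℝ) • (‖w‖⁻¹ • w)) = ((‖w‖ + 2 * τ) * ‖w‖⁻¹) • w := by
      rw [add_mul, mul_inv_cancel₀ w_pos.ne', add_smul, one_smul, smul_smul, smul_smul]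
      ring_nf
    rw [factor, norm_smul, norm_mul, norm_inv, norm_norm, inv_mul_cancel_right₀ w_pos.ne',
      Real.norm_of_nonneg (by linarith [mem_Ioi.mp hτ])]
  rw [norm_eq, barrier, barrier]
  ring

lemma fderiv_sub_eq_and_secondDeriv_sub_le_of_isLocalMax_doubled (hg : ContDiff ℝ 2 g)
    (hk : 0 ≤ k) (hmax : IsLocalMax (doubled g z r k m) (x, y)) {ξ η : E} {a b : ℝ}
    (hbarrier : ∀ᶠ τ : ℝ in 𝓝 0, barrier r ‖(x - y) + τ • (ξ - η)‖ ≤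
      barrier r ‖x - y‖ + a * τ + b * τ ^ 2) :
    fderiv ℝ g x ξ - fderiv ℝ g y η = k * a + 2 * m * inner ℝ (x - z) ξ ∧
      fderiv ℝ (fderiv ℝ g) x ξ ξ - fderiv ℝ (fderiv ℝ g) y η η ≤ 2 * (k * b + m * ‖ξ‖ ^ 2) := by
  refine fderiv_sub_eq_and_secondDeriv_sub_le_of_le_quadratic hg ?_
  have line_tendsto : Tendsto (fun τ : ℝ => (x + τ • ξ, y + τ • η)) (𝓝 0) (𝓝 (x, y)) :=
    (by fun_prop : Continuous fun τ : ℝ => (x + τ • ξ, y + τ • η)).tendsto' _ _ (by simp)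
  filter_upwards [line_tendsto.eventually hmax, hbarrier] with τ doubled_le barrier_le
  have diff_eq : x + τ • ξ - (y + τ • η) = (x - y) + τ • (ξ - η) := by module
  have norm_sq : ‖x + τ • ξ - z‖ ^ 2 =
      ‖x - z‖ ^ 2 + 2 * τ * inner ℝ (x - z) ξ + τ ^ 2 * ‖ξ‖ ^ 2 := by
    rw [add_sub_right_comm, norm_add_sq_real, norm_smul, inner_smul_right, mul_pow,
      Real.norm_eq_abs, sq_abs]
    ring
  simp only [doubled, diff_eq, norm_sq] at doubled_le
  linarith [mul_le_mul_of_nonneg_left barrier_le hk]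

lemma fderiv_sub_eq_of_isLocalMax_doubled (hg : ContDiff ℝ 2 g) (hk : 0 ≤ k) (hxy : x ≠ y)
    (hmax : IsLocalMax (doubled g z r k m) (x, y)) (ξ η : E) :
    fderiv ℝ g x ξ - fderiv ℝ g y η =
      k * ((1 / ‖x - y‖ - 1 / (2 * r)) * inner ℝ (x - y) (ξ - η)) + 2 * m * inner ℝ (x - z) ξ :=
  (fderiv_sub_eq_and_secondDeriv_sub_le_of_isLocalMax_doubled hg hk hmax (.of_forall fun τ =>
    barrier_norm_add_smul_le (sub_ne_zero.mpr hxy) (ξ - η) τ)).1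

lemma secondDeriv_sub_le_of_isLocalMax_doubled (hg : ContDiff ℝ 2 g) (hk : 0 ≤ k) (hr : 0 ≤ r)
    (hxy : x ≠ y) (hmax : IsLocalMax (doubled g z r k m) (x, y)) (ξ η : E) :
    fderiv ℝ (fderiv ℝ g) x ξ ξ - fderiv ℝ (fderiv ℝ g) y η η ≤
      k / ‖x - y‖ * ‖ξ - η‖ ^ 2 + 2 * m * ‖ξ‖ ^ 2 := by
  have second_order := (fderiv_sub_eq_and_secondDeriv_sub_le_of_isLocalMax_doubled hg hk hmax
    (.of_forall fun τ => barrier_norm_add_smul_le (sub_ne_zero.mpr hxy) (ξ - η) τ)).2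
  have : 0 ≤ k * (1 / (2 * r)) * ‖ξ - η‖ ^ 2 := by positivity
  rw [div_eq_mul_one_div]
  linarith

/-- In the direction `(e, -e)` the distance `‖x - y‖` changes, and the concavity of the barrier
enters. -/
lemma secondDeriv_sub_le_neg_of_isLocalMax_doubled (hg : ContDiff ℝ 2 g) (hk : 0 ≤ k)
    (hxy : x ≠ y) (hmax : IsLocalMax (doubled g z r k m) (x, y)) :
    fderiv ℝ (fderiv ℝ g) x (‖x - y‖⁻¹ • (x - y)) (‖x - y‖⁻¹ • (x - y)) -
      fderiv ℝ (fderiv ℝ g) y (‖x - y‖⁻¹ • (x - y)) (‖x - y‖⁻¹ • (x - y)) ≤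
      2 * m - 2 * k / r := by
  have hw : x - y ≠ 0 := sub_ne_zero.mpr hxy
  generalize he : ‖x - y‖⁻¹ • (x - y) = e
  have second_order := (fderiv_sub_eq_and_secondDeriv_sub_le_of_isLocalMax_doubled
    (ξ := e) (η := -e) (a := 2 - ‖x - y‖ / r) (b := -(1 / r)) hg hk hmax (by
      filter_upwards [barrier_norm_add_smul_eq (r := r) hw] with τ barrier_eq
      rw [he, two_smul] at barrier_eq
      rw [sub_neg_eq_add, barrier_eq]
      linarith)).2
  have norm_e : ‖e‖ = 1 := he ▸ norm_smul_inv_norm hw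
  simp only [norm_e, map_neg, _root_.neg_apply, neg_neg] at second_order
  linarith [mul_one_div (2 * k) r]

lemma norm_fderiv_fst_le_of_isLocalMax_doubled (hg : ContDiff ℝ 2 g) (hk : 0 ≤ k) (hm : 0 ≤ m)
    (hxy : x ≠ y) (hxyr : ‖x - y‖ ≤ 2 * r) (hxz : ‖x - z‖ ≤ r)
    (hmax : IsLocalMax (doubled g z r k m) (x, y)) : ‖fderiv ℝ g x‖ ≤ k + 2 * m * r := by
  have hr : 0 ≤ r := (norm_nonneg _).trans hxz
  refine ContinuousLinearMap.opNorm_le_bound _ (by positivity) fun ξ => ?_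
  have first_order := fderiv_sub_eq_of_isLocalMax_doubled hg hk hxy hmax ξ 0
  rw [map_zero, sub_zero, sub_zero] at first_order
  rw [first_order, Real.norm_eq_abs, add_mul]
  refine (abs_add_le _ _).trans (add_le_add ?_ ?_)
  · rw [abs_mul, abs_of_nonneg hk]
    gcongr
    exact abs_barrier_slope_mul_inner_le (sub_ne_zero.mpr hxy) hxyr ξ
  · rw [abs_mul, abs_of_nonneg (by positivity), mul_assoc _ r]
    gcongr
    exact (abs_real_inner_le_norm _ _).trans (by gcongr)

lemma norm_fderiv_snd_le_of_isLocalMax_doubled (hg : ContDiff ℝ 2 g) (hk : 0 ≤ k)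
    (hxy : x ≠ y) (hxyr : ‖x - y‖ ≤ 2 * r)
    (hmax : IsLocalMax (doubled g z r k m) (x, y)) : ‖fderiv ℝ g y‖ ≤ k := by
  refine ContinuousLinearMap.opNorm_le_bound _ hk fun η => ?_
  have first_order := fderiv_sub_eq_of_isLocalMax_doubled hg hk hxy hmax 0 (-η)
  rw [map_zero, zero_sub, map_neg, neg_neg, zero_sub, neg_neg, inner_zero_right, mul_zero,
    add_zero] at first_order
  rw [first_order, Real.norm_eq_abs, abs_mul, abs_of_nonneg hk]
  gcongr
  exact abs_barrier_slope_mul_inner_le (sub_ne_zero.mpr hxy) hxyr η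

end Doubling

section DoublingEstimate

variable {d : ℕ} {Q : ℝ → Euc d → Fin d → Fin d → ℝ} {b : ℝ → Euc d → Fin d → ℝ}
  {J : Set ℝ} {B : Set (Euc d)} {ν K s T F : ℝ} {v : ℝ → Euc d → ℝ}

/-- Quantitative form, on `J ×ˢ B`, of the local regularity of the second and first order
coefficients: ellipticity, boundedness, and Lipschitz continuity of `Q` in space (not in time). A
single constant `K` serves for all the upper bounds. -/
structure RegularCoeffs (Q : ℝ → Euc d → Fin d → Fin d → ℝ) (b : ℝ → Euc d → Fin d → ℝ)
    (J : Set ℝ) (B : Set (Euc d)) (ν K : ℝ) : Prop where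
  isSymm : ∀ t ∈ J, ∀ x ∈ B, (of (Q t x)).IsSymm
  elliptic : ∀ t ∈ J, ∀ x ∈ B, ∀ ξ : Euc d, ν * ‖ξ‖ ^ 2 ≤ quadForm (of (Q t x)) ξ
  trace_le : ∀ t ∈ J, ∀ x ∈ B, (of (Q t x)).trace ≤ K
  lipschitz : ∀ t ∈ J, ∀ x ∈ B, ∀ y ∈ B, ∀ ξ : Euc d,
    |quadForm (of (Q t x) - of (Q t y)) ξ| ≤ K * ‖x - y‖ * ‖ξ‖ ^ 2
  drift_le : ∀ t ∈ J, ∀ x ∈ B, ∑ i, |b t x i| ≤ K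

lemma RegularCoeffs.mono {J' : Set ℝ} {B' : Set (Euc d)} (h : RegularCoeffs Q b J B ν K)
    (hJ : J' ⊆ J) (hB : B' ⊆ B) : RegularCoeffs Q b J' B' ν K where
  isSymm t ht x hx := h.isSymm t (hJ ht) x (hB hx)
  elliptic t ht x hx := h.elliptic t (hJ ht) x (hB hx)
  trace_le t ht x hx := h.trace_le t (hJ ht) x (hB hx)
  lipschitz t ht x hx y hy := h.lipschitz t (hJ ht) x (hB hx) y (hB hy)
  drift_le t ht x hx := h.drift_le t (hJ ht) x (hB hx)

lemma RegularCoeffs.nonneg (h : RegularCoeffs Q b J B ν K) {t : ℝ} (ht : t ∈ J) {x : Euc d}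
    (hx : x ∈ B) : 0 ≤ K :=
  (Finset.sum_nonneg fun _ _ => abs_nonneg _).trans (h.drift_le t ht x hx)

lemma abs_sum_mul_apply_single_le (β : Fin d → ℝ) (p : Euc d →L[ℝ] ℝ) :
    |∑ i, β i * p (EuclideanSpace.single i 1)| ≤ (∑ i, |β i|) * ‖p‖ := by
  rw [Finset.sum_mul]
  refine (Finset.abs_sum_le_sum_abs _ _).trans (Finset.sum_le_sum fun i _ => ?_)
  rw [abs_mul]
  gcongr
  simpa using p.le_opNorm (EuclideanSpace.single i 1)

lemma abs_drift_le (h : RegularCoeffs Q b J B ν K) {t : ℝ} (ht : t ∈ J) {x : Euc d} (hx : x ∈ B)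
    (p : Euc d →L[ℝ] ℝ) : |∑ i, b t x i * p (EuclideanSpace.single i 1)| ≤ K * ‖p‖ :=
  (abs_sum_mul_apply_single_le _ p).trans (by gcongr; exact h.drift_le t ht x hx)

lemma aop_sub_le_of_isLocalMax_doubled (hQ : RegularCoeffs Q b J B ν K) {t : ℝ} (ht : t ∈ J)
    {x y z : Euc d} (hx : x ∈ B) (hy : y ∈ B) {g : Euc d → ℝ} (hg : ContDiff ℝ 2 g) {r k m : ℝ}
    (hν : 0 ≤ ν) (hk : 0 ≤ k) (hm : 0 ≤ m) (hxy : x ≠ y) (hxyr : ‖x - y‖ ≤ r)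
    (hxz : ‖x - z‖ ≤ r) (hKr : K * r ≤ ν / 2)
    (hmax : IsLocalMax (doubled g z r k m) (x, y)) :
    Aop d Q b (fun _ _ => 0) t g x - Aop d Q b (fun _ _ => 0) t g y ≤
      2 * m * K - ν * k / r + 3 * k * K * d + K * (2 * k + 2 * m * r) := by
  have hK : 0 ≤ K := hQ.nonneg ht hx
  have hr : 0 ≤ r := (norm_nonneg _).trans hxz
  have dist_pos : 0 < ‖x - y‖ := norm_sub_pos_iff.mpr hxy
  have second_order := sum_mul_sub_sum_mul_le (A := of (hess d g x)) (B := of (hess d g y))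
    (e := ‖x - y‖⁻¹ • (x - y)) (κ := K * ‖x - y‖) (ν := ν / 2) (a := k / ‖x - y‖) (m := 2 * m)
    (θ := 2 * k / r) (hQ.isSymm t ht x hx) (hQ.isSymm t ht y hy)
    (norm_smul_inv_norm (sub_ne_zero.mpr hxy)) (by positivity) (by positivity) (by positivity)
    (fun ξ => le_trans (by gcongr; nlinarith) (hQ.elliptic t ht x hx ξ))
    (hQ.lipschitz t ht x hx y hy)
    (fun ξ η => by
      simpa only [quadForm_hess hg] using
        secondDeriv_sub_le_of_isLocalMax_doubled hg hk hr hxy hmax ξ η)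
    (by simpa only [quadForm_hess hg] using
      secondDeriv_sub_le_neg_of_isLocalMax_doubled hg hk hxy hmax)
  have drift_x := (le_abs_self _).trans ((abs_drift_le hQ ht hx (fderiv ℝ g x)).trans
    (mul_le_mul_of_nonneg_left
      (norm_fderiv_fst_le_of_isLocalMax_doubled hg hk hm hxy (by linarith) hxz hmax) hK))
  have drift_y := (neg_le_abs _).trans ((abs_drift_le hQ ht hy (fderiv ℝ g y)).trans
    (mul_le_mul_of_nonneg_left
      (norm_fderiv_snd_le_of_isLocalMax_doubled hg hk hxy (by linarith) hmax) hK))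
  have trace_x := mul_le_mul_of_nonneg_left (hQ.trace_le t ht x hx) hm
  have lipschitz_term : 3 * (k / ‖x - y‖) * (K * ‖x - y‖) * Fintype.card (Fin d) =
      3 * k * K * d := by
    rw [Fintype.card_fin]
    field_simp
  have ellipticity_term : ν / 2 * (2 * k / r) = ν * k / r := by ring
  simp only [of_apply, lipschitz_term, ellipticity_term] at second_order
  simp only [Aop, zero_mul, add_zero]
  linarith

/-- `v` is regular on `(s, T] × B`, continuous up to time `s`, and solves there the equation
`∂ₜ v = Tr (Q D²v) + ⟪b, ∇v⟫ + h` for some source `h` with `|h| ≤ F`. -/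
structure IsBoundedSourceSolution (Q : ℝ → Euc d → Fin d → Fin d → ℝ)
    (b : ℝ → Euc d → Fin d → ℝ) (s T : ℝ) (B : Set (Euc d)) (F : ℝ) (v : ℝ → Euc d → ℝ) :
    Prop where
  continuousOn : ContinuousOn (fun q : ℝ × Euc d => v q.1 q.2) (Icc s T ×ˢ B)
  differentiableAt : ∀ t ∈ Ioc s T, ∀ x ∈ B, DifferentiableAt ℝ (fun τ => v τ x) t
  contDiff : ∀ t ∈ Ioc s T, ContDiff ℝ 2 (v t)
  source_le : ∀ t ∈ Ioc s T, ∀ x ∈ B,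
    |deriv (fun τ => v τ x) t - Aop d Q b (fun _ _ => 0) t (v t) x| ≤ F

lemma IsBoundedSourceSolution.mono {T' : ℝ} {B' : Set (Euc d)}
    (h : IsBoundedSourceSolution Q b s T B F v) (hT : T' ≤ T) (hB : B' ⊆ B) :
    IsBoundedSourceSolution Q b s T' B' F v where
  continuousOn := h.continuousOn.mono (prod_mono (Icc_subset_Icc_right hT) hB)
  differentiableAt t ht x hx := h.differentiableAt t (Ioc_subset_Ioc_right hT ht) x (hB hx)
  contDiff t ht := h.contDiff t (Ioc_subset_Ioc_right hT ht)
  source_le t ht x hx := h.source_le t (Ioc_subset_Ioc_right hT ht) x (hB hx)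

lemma IsBoundedSourceSolution.neg_le_aop_sub (h : IsBoundedSourceSolution Q b s T B F v)
    {t : ℝ} (ht : t ∈ Ioc s T) {x y : Euc d} (hx : x ∈ B) (hy : y ∈ B)
    (hmax : ∀ τ ∈ Ioo s t, v τ x - v τ y ≤ v t x - v t y) :
    -(2 * F) ≤ Aop d Q b (fun _ _ => 0) t (v t) x - Aop d Q b (fun _ _ => 0) t (v t) y := by
  have time_deriv_nonneg := nonneg_of_hasDerivAt_of_forall_le ht.1
    ((h.differentiableAt t ht x hx).hasDerivAt.sub (h.differentiableAt t ht y hy).hasDerivAt) hmax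
  linarith [le_of_abs_le (h.source_le t ht x hx), neg_le_of_abs_le (h.source_le t ht y hy)]

/-- At an interior maximum the concavity of the barrier contributes `-ν * k / r` to the equation. -/
lemma IsBoundedSourceSolution.mul_le_of_forall_doubled_le {x y z : Euc d} {r k ε t : ℝ}
    (hv : IsBoundedSourceSolution Q b s T B F v) (hQ : RegularCoeffs Q b (Ioc s T) B ν K)
    (ht : t ∈ Ioc s T) (hx : x ∈ B) (hy : y ∈ B) (hε : 0 ≤ ε) (hν : 0 ≤ ν) (hk : 0 ≤ k)
    (hKr : K * r ≤ ν / 2) (hxy : x ≠ y) (hxyr : ‖x - y‖ < r) (hxz : ‖x - z‖ < r)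
    (hmax : ∀ t' ∈ Icc s T, ∀ x' y' : Euc d, ‖x' - z‖ ≤ r → ‖x' - y'‖ ≤ r →
      doubled (v t') z r k (2 * ε / r) (x', y') ≤ doubled (v t) z r k (2 * ε / r) (x, y)) :
    ν * k ≤ r * (3 * k * K * d + 2 * K * k + 4 * K * ε + 2 * F) + 4 * ε * K := by
  have hr : 0 < r := (norm_nonneg _).trans_lt hxz
  have time_max (τ : ℝ) (hτ : τ ∈ Ioo s t) : v τ x - v τ y ≤ v t x - v t y := by
    have := hmax τ ⟨hτ.1.le, hτ.2.le.trans ht.2⟩ x y hxz.le hxyr.le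
    simp only [doubled] at this
    linarith
  have lower := hv.neg_le_aop_sub ht hx hy time_max
  have upper := aop_sub_le_of_isLocalMax_doubled hQ ht hx hy (hv.contDiff t ht) hν hk
    (by positivity) hxy hxyr.le hxz.le hKr
    (isLocalMax_doubled_of_forall_le hxyr hxz (hmax t ⟨ht.1.le, ht.2⟩))
  have scaled := mul_le_mul_of_nonneg_left (lower.trans upper) hr.le
  have clear_r : r * (2 * (2 * ε / r) * K - ν * k / r + 3 * k * K * d +
      K * (2 * k + 2 * (2 * ε / r) * r)) =
      4 * ε * K - ν * k + r * (3 * k * K * d + 2 * K * k + 4 * K * ε) := by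
    field_simp
    ring
  linarith

lemma IsBoundedSourceSolution.sub_le_mul_norm_sub {z : Euc d} {r k ε : ℝ}
    (hv : IsBoundedSourceSolution Q b s T (closedBall z (2 * r)) F v)
    (hQ : RegularCoeffs Q b (Ioc s T) (closedBall z (2 * r)) ν K) (hr : 0 < r) (hε : 0 < ε)
    (hν : 0 ≤ ν) (hεk : 3 * ε ≤ k) (hKr : K * r ≤ ν / 2)
    (hinit : ∀ x ∈ closedBall z (2 * r), ∀ y ∈ closedBall z (2 * r),
      v s x - v s y ≤ ε * ‖x - y‖)
    (hosc : ∀ t ∈ Icc s T, ∀ x ∈ closedBall z (2 * r), ∀ y ∈ closedBall z (2 * r), ‖x - y‖ ≤ r →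
      v t x - v t y ≤ 2 * ε * r)
    (hsmall : r * (3 * k * K * d + 2 * K * k + 4 * K * ε + 2 * F) + 4 * ε * K < ν * k)
    {t : ℝ} (ht : t ∈ Icc s T) {y : Euc d} (hy : ‖z - y‖ ≤ r) :
    v t z - v t y ≤ k * ‖z - y‖ := by
  have hk : 0 ≤ k := by linarith
  obtain ⟨τ, hτ, x, y', hxz, hxy, hmax⟩ := exists_isMaxOn_doubled (z := z) (r := r) (k := k)
    (m := 2 * ε / r) hr.le (ht.1.trans ht.2) hv.continuousOn
  have hx : x ∈ closedBall z (2 * r) :=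
    closedBall_subset_closedBall (by linarith) (mem_closedBall_iff_norm.mpr hxz)
  have hy' : y' ∈ closedBall z (2 * r) := mem_closedBall_two_mul hxz hxy
  by_contra! estimate_fails
  have max_pos : 0 < doubled (v τ) z r k (2 * ε / r) (x, y') := by
    refine lt_of_lt_of_le ?_ (hmax t ht z y (by simpa using hr.le) hy)
    have := mul_le_mul_of_nonneg_left (barrier_le hr.le ‖z - y‖) hk
    simp only [doubled, sub_self, norm_zero, ne_eq, OfNat.ofNat_ne_zero, not_false_eq_true,
      zero_pow, mul_zero, sub_zero]
    linarith
  have hsτ : s < τ := hτ.1.lt_of_ne fun h => max_pos.not_ge <| h ▸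
    doubled_nonpos_of_sub_le (by linarith) hk (by positivity) (by linarith) (hinit x hx y' hy')
  obtain ⟨hne, hxy_lt, hxz_lt⟩ := ne_and_lt_of_doubled_pos hr hε hεk hxy hxz
    (hosc τ hτ x hx y' hy' hxy) max_pos
  exact hsmall.not_ge (hv.mul_le_of_forall_doubled_le hQ ⟨hsτ, hτ.2⟩ hx hy' hε.le hν hk hKr hne
    hxy_lt hxz_lt hmax)

end DoublingEstimate

section GradientLimit

variable {d : ℕ} {Q : ℝ → Euc d → Fin d → Fin d → ℝ} {b : ℝ → Euc d → Fin d → ℝ}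
  {c : ℝ → Euc d → ℝ} {B : Set (Euc d)} {ν K s T F : ℝ} {v : ℝ → Euc d → ℝ} {x₀ : Euc d}

lemma IsBoundedSourceSolution.norm_fderiv_le {r k ε : ℝ}
    (hv : IsBoundedSourceSolution Q b s T (closedBall x₀ (3 * r)) F v)
    (hQ : RegularCoeffs Q b (Ioc s T) (closedBall x₀ (3 * r)) ν K) (hε : 0 < ε)
    (hν : 0 ≤ ν) (hεk : 3 * ε ≤ k) (hKr : K * r ≤ ν / 2)
    (hinit : ∀ x ∈ closedBall x₀ (3 * r), ∀ y ∈ closedBall x₀ (3 * r),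
      v s x - v s y ≤ ε * ‖x - y‖)
    (htime : ∀ t ∈ Icc s T, ∀ x ∈ closedBall x₀ (3 * r), |v t x - v s x| ≤ ε * r / 2)
    (hsmall : r * (3 * k * K * d + 2 * K * k + 4 * K * ε + 2 * F) + 4 * ε * K < ν * k)
    {t : ℝ} (ht : t ∈ Icc s T) {z : Euc d} (hz : z ∈ ball x₀ (r / 2)) :
    ‖fderiv ℝ (v t) z‖ ≤ k := by
  have hr : 0 < r := by linarith [pos_of_mem_ball hz]
  have subset_of_mem {x : Euc d} (hx : x ∈ ball x₀ (r / 2)) :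
      closedBall x (2 * r) ⊆ closedBall x₀ (3 * r) :=
    closedBall_subset_closedBall' (by linarith [mem_ball.mp hx])
  have hosc (t : ℝ) (ht : t ∈ Icc s T) (x : Euc d) (hx : x ∈ closedBall x₀ (3 * r)) (y : Euc d)
      (hy : y ∈ closedBall x₀ (3 * r)) (hxy : ‖x - y‖ ≤ r) : v t x - v t y ≤ 2 * ε * r := by
    linarith [le_of_abs_le (htime t ht x hx), neg_le_of_abs_le (htime t ht y hy),
      hinit x hx y hy, mul_le_mul_of_nonneg_left hxy hε.le]
  have one_sided {x y : Euc d} (hx : x ∈ ball x₀ (r / 2)) (hy : y ∈ ball x₀ (r / 2)) :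
      v t x - v t y ≤ k * ‖x - y‖ := by
    have hsub := subset_of_mem hx
    refine (hv.mono le_rfl hsub).sub_le_mul_norm_sub (hQ.mono le_rfl hsub) hr hε hν hεk hKr
      (fun x hx y hy => hinit x (hsub hx) y (hsub hy))
      (fun t ht x hx y hy => hosc t ht x (hsub hx) y (hsub hy)) hsmall ht ?_
    rw [← dist_eq_norm]
    linarith [dist_triangle_right x y x₀, mem_ball.mp hx, mem_ball.mp hy]
  refine norm_fderiv_le_of_lip' ℝ (by linarith) ?_
  filter_upwards [isOpen_ball.mem_nhds hz] with y hy
  rw [Real.norm_eq_abs, abs_sub_le_iff]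
  exact ⟨one_sided hy hz, norm_sub_rev z y ▸ one_sided hz hy⟩

lemma exists_forall_abs_sub_initial_le {X : Type*} [TopologicalSpace X] {B : Set X}
    {v : ℝ → X → ℝ} (hB : IsCompact B) (hsT : s < T)
    (hv : ContinuousOn (fun q : ℝ × X => v q.1 q.2) (Icc s T ×ˢ B)) {ε : ℝ} (hε : 0 < ε) :
    ∃ T' ∈ Ioc s T, ∀ t ∈ Icc s T', ∀ x ∈ B, |v t x - v s x| ≤ ε := by
  obtain ⟨V, hV, hclose⟩ := hB.mem_uniformity_of_prod (f := v) hv (left_mem_Icc.mpr hsT.le)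
    (Metric.dist_mem_uniformity hε)
  rw [nhdsWithin_Icc_eq_nhdsGE hsT, mem_nhdsGE_iff_exists_Icc_subset] at hV
  obtain ⟨T', hsT', hV⟩ := hV
  refine ⟨min T' T, ⟨lt_min hsT' hsT, min_le_right _ _⟩, fun t ht x hx => ?_⟩
  exact (hclose t (hV ⟨ht.1, ht.2.trans (min_le_left _ _)⟩) x hx).le

lemma exists_pos_forall_mul_lt {ι : Type*} [Finite ι] (a : ι → ℝ) {b : ι → ℝ}
    (hb : ∀ i, 0 < b i) : ∃ r : ℝ, 0 < r ∧ ∀ i, a i * r < b i := by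
  have small (i : ι) : ∀ᶠ r in 𝓝[>] (0 : ℝ), a i * r < b i :=
    Tendsto.eventually_lt_const (hb i) (tendsto_nhdsWithin_of_tendsto_nhds
      (Continuous.tendsto' (by fun_prop) _ _ (mul_zero (a i))))
  exact (eventually_mem_nhdsWithin.and (eventually_all.mpr small)).exists

/-- The slope `k` of the barrier is a large multiple of the initial slope `ε`, so that the
localization term `4 * ε * K` is absorbed by `ν * k`; the radius is chosen afterwards. -/
lemma IsBoundedSourceSolution.exists_forall_norm_fderiv_le {R k : ℝ}
    (hv : IsBoundedSourceSolution Q b s T (closedBall x₀ R) F v)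
    (hQ : RegularCoeffs Q b (Ioc s T) (closedBall x₀ R) ν K) (hsT : s < T) (hR : 0 < R)
    (hν : 0 < ν) (hinit : HasStrictFDerivAt (v s) (0 : Euc d →L[ℝ] ℝ) x₀) (hk : 0 < k) :
    ∃ T' > s, ∃ r > 0, ∀ t ∈ Icc s T', ∀ x ∈ ball x₀ r, ‖fderiv ℝ (v t) x‖ ≤ k := by
  have hK : 0 ≤ K := hQ.nonneg (right_mem_Ioc.mpr hsT) (mem_closedBall_self hR.le)
  obtain ⟨ε, ε_pos, hε⟩ : ∃ ε > 0, ν * k = 4 * ε * K + 3 * ν * ε :=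
    ⟨ν * k / (4 * K + 3 * ν), by positivity, by field_simp⟩
  have hεk : 3 * ε ≤ k :=
    le_of_mul_le_mul_left (by linarith [mul_nonneg ε_pos.le hK]) hν
  obtain ⟨V, hV, hlip⟩ := hinit.exists_lipschitzOnWith_of_nnnorm_lt ε.toNNReal (by simpa)
  obtain ⟨ρ, ρ_pos, hρ⟩ := Metric.mem_nhds_iff.mp hV
  obtain ⟨r, r_pos, hr⟩ := exists_pos_forall_mul_lt
    ![3, K, 3 * k * K * d + 2 * K * k + 4 * K * ε + 2 * F]
    (b := ![min R ρ, ν / 2, 3 * ν * ε]) (by simp [Fin.forall_fin_succ, *])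
  obtain ⟨hrR, hKr, hsmall⟩ : 3 * r < min R ρ ∧ K * r < ν / 2 ∧
      (3 * k * K * d + 2 * K * k + 4 * K * ε + 2 * F) * r < 3 * ν * ε :=
    ⟨hr 0, hr 1, hr 2⟩
  have hsub : closedBall x₀ (3 * r) ⊆ closedBall x₀ R :=
    closedBall_subset_closedBall (hrR.le.trans (min_le_left R ρ))
  have hsubV : closedBall x₀ (3 * r) ⊆ V :=
    (closedBall_subset_ball (hrR.trans_le (min_le_right R ρ))).trans hρ
  obtain ⟨T', hT', htime⟩ := exists_forall_abs_sub_initial_le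
    (isCompact_closedBall x₀ (3 * r)) hsT (hv.mono le_rfl hsub).continuousOn
    (by positivity : 0 < ε * r / 2)
  refine ⟨T', hT'.1, r / 2, half_pos r_pos, fun t ht x hx =>
    (hv.mono hT'.2 hsub).norm_fderiv_le (hQ.mono (Ioc_subset_Ioc_right hT'.2) hsub) ε_pos
      hν.le hεk hKr.le (fun x hx y hy => ?_) htime (by linarith) ht hx⟩
  have := (le_abs_self _).trans (hlip.dist_le_mul x (hsubV hx) y (hsubV hy))
  rwa [Real.coe_toNNReal _ ε_pos.le, dist_eq_norm] at this

lemma IsBoundedSourceSolution.tendsto_fderiv_zero {R : ℝ}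
    (hv : IsBoundedSourceSolution Q b s T (closedBall x₀ R) F v)
    (hQ : RegularCoeffs Q b (Ioc s T) (closedBall x₀ R) ν K) (hsT : s < T) (hR : 0 < R)
    (hν : 0 < ν) (hinit : HasStrictFDerivAt (v s) (0 : Euc d →L[ℝ] ℝ) x₀) :
    Tendsto (fun q : ℝ × Euc d => fderiv ℝ (v q.1) q.2) (𝓝[Ioi s ×ˢ univ] (s, x₀)) (𝓝 0) := by
  rw [Metric.tendsto_nhds]
  intro η hη
  obtain ⟨T', hT', r, hr, hbound⟩ := hv.exists_forall_norm_fderiv_le hQ hsT hR hν hinit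
    (half_pos hη)
  have near : ∀ᶠ q : ℝ × Euc d in 𝓝[Ioi s ×ˢ univ] (s, x₀), q ∈ Iio T' ×ˢ ball x₀ r :=
    mem_nhdsWithin_of_mem_nhds (prod_mem_nhds (Iio_mem_nhds hT') (ball_mem_nhds x₀ hr))
  filter_upwards [near, self_mem_nhdsWithin] with q hq hqs
  rw [dist_zero_right]
  linarith [hbound q.1 ⟨hqs.1.le, hq.1.le⟩ q.2 hq.2]

end GradientLimit

section LocalBounds

variable {d : ℕ} {α : ℝ} {I : Set ℝ}

lemma LocHolderParab.exists_abs_le {g : ℝ → Euc d → ℝ} (h : LocHolderParab d α I g) (hα : 0 ≤ α)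
    {J : Set ℝ} {B : Set (Euc d)} (hJ : IsCompact J) (hB : IsCompact B) (hJI : J ⊆ I) :
    ∃ C, ∀ t ∈ J, ∀ x ∈ B, |g t x| ≤ C := by
  obtain ⟨C, hC, hg⟩ := h (J ×ˢ B) (hJ.prod hB) (prod_mono hJI (subset_univ B))
  rcases (J ×ˢ B).eq_empty_or_nonempty with hempty | ⟨q₀, hq₀⟩
  · exact ⟨0, fun _ ht _ hx => (hempty.subset (mk_mem_prod ht hx)).elim⟩
  have hcont : Continuous fun q : ℝ × Euc d => pdist d q q₀ ^ α := by
    unfold pdist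
    exact Continuous.rpow_const (by fun_prop) fun _ => Or.inr hα
  obtain ⟨D, hD⟩ := (hJ.prod hB).bddAbove_image hcont.continuousOn
  refine ⟨|g q₀.1 q₀.2| + C * D, fun t ht x hx => ?_⟩
  have holder := hg (t, x) ⟨ht, hx⟩ q₀ hq₀
  have bounded := mul_le_mul_of_nonneg_left (hD (mem_image_of_mem _ (mk_mem_prod ht hx))) hC.le
  linarith [abs_sub_abs_le_abs_sub (g t x) (g q₀.1 q₀.2)]

lemma abs_quadForm_sub_le_of_norm_fderiv_le {A : Euc d → Fin d → Fin d → ℝ} {B : Set (Euc d)}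
    {D : ℝ} (hB : Convex ℝ B) (hdiff : ∀ x ∈ B, ∀ i j, DifferentiableAt ℝ (fun y => A y i j) x)
    (hgrad : ∀ x ∈ B, ∀ i j, ‖fderiv ℝ (fun y => A y i j) x‖ ≤ D) {x y : Euc d} (hx : x ∈ B)
    (hy : y ∈ B) (ξ : Euc d) :
    |quadForm (of (A x) - of (A y)) ξ| ≤ d * d * D * ‖x - y‖ * ‖ξ‖ ^ 2 := by
  have entry_lipschitz (i j : Fin d) : |A x i j - A y i j| ≤ D * ‖x - y‖ :=
    hB.norm_image_sub_le_of_norm_fderiv_le (𝕜 := ℝ) (f := fun y => A y i j)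
      (fun z hz => hdiff z hz i j) (fun z hz => hgrad z hz i j) hy hx
  calc |quadForm (of (A x) - of (A y)) ξ| ≤ (∑ i, ∑ j, |A x i j - A y i j|) * ‖ξ‖ ^ 2 :=
        abs_quadForm_le _ ξ
    _ ≤ (∑ _i : Fin d, ∑ _j : Fin d, D * ‖x - y‖) * ‖ξ‖ ^ 2 := by
        gcongr with i _ j _
        exact entry_lipschitz i j
    _ = d * d * D * ‖x - y‖ * ‖ξ‖ ^ 2 := by
        simp only [Finset.sum_const, Finset.card_univ, Fintype.card_fin, nsmul_eq_mul]
        ring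

lemma exists_sum_abs_le_of_locHolderParab {ι : Type*} [Fintype ι] {g : ι → ℝ → Euc d → ℝ}
    (h : ∀ i, LocHolderParab d α I (g i)) (hα : 0 ≤ α) {J : Set ℝ} {B : Set (Euc d)}
    (hJ : IsCompact J) (hB : IsCompact B) (hJI : J ⊆ I) :
    ∃ C, ∀ t ∈ J, ∀ x ∈ B, ∑ i, |g i t x| ≤ C := by
  choose C hC using fun i => (h i).exists_abs_le hα hJ hB hJI
  exact ⟨∑ i, C i, fun t ht x hx => Finset.sum_le_sum fun i _ => hC i t ht x hx⟩

variable {Q : ℝ → Euc d → Fin d → Fin d → ℝ} {b : ℝ → Euc d → Fin d → ℝ} {C : ℝ → ℝ}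
  {B : Set (Euc d)} {s T ν : ℝ}

lemma eventually_atTop_regularCoeffs (hα : 0 ≤ α)
    (hQhold : ∀ i, LocHolderParab d α I (fun t x => Q t x i i))
    (hbhold : ∀ j, LocHolderParab d α I (fun t x => b t x j)) (hI : Icc s T ⊆ I)
    (hB : IsCompact B) (hBconv : Convex ℝ B) (hν : 0 ≤ ν)
    (hsymm : ∀ t ∈ I, ∀ x, ∀ i j, Q t x i j = Q t x j i)
    (hell : ∀ t ∈ I, ∀ x, ν ≤ minEig d (Q t x))
    (hQdiff : ∀ t ∈ I, ∀ x i j, DifferentiableAt ℝ (fun y => Q t y i j) x)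
    (hC : LocBddOn I C)
    (hQgrad : ∀ t ∈ I, ∀ x i j, ‖fderiv ℝ (fun y => Q t y i j) x‖ ≤ C t * minEig d (Q t x)) :
    ∀ᶠ K in atTop, RegularCoeffs Q b (Icc s T) B ν K := by
  obtain ⟨Λ, hΛ⟩ := exists_sum_abs_le_of_locHolderParab hQhold hα isCompact_Icc hB hI
  obtain ⟨β, hβ⟩ := exists_sum_abs_le_of_locHolderParab hbhold hα isCompact_Icc hB hI
  obtain ⟨Γ, hΓ⟩ := hC s T hI
  filter_upwards [eventually_ge_atTop Λ, eventually_ge_atTop β,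
    eventually_ge_atTop (d * d * (Γ * Λ))] with K hΛK hβK hΓK
  refine ⟨fun t ht x _ => ?_, fun t ht x _ => ?_, fun t ht x hx => ?_,
    fun t ht x hx y hy ξ => ?_, fun t ht x hx => (hβ t ht x hx).trans hβK⟩
  · exact IsSymm.ext fun i j => hsymm t (hI ht) x j i
  · exact mul_norm_sq_le_quadForm_of_le_minEig (hell t (hI ht) x)
  · exact (Finset.sum_le_sum fun i _ => le_abs_self _).trans ((hΛ t ht x hx).trans hΛK)
  · have gradient_bound (z : Euc d) (hz : z ∈ B) (i j : Fin d) :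
        ‖fderiv ℝ (fun y => Q t y i j) z‖ ≤ Γ * Λ :=
      (hQgrad t (hI ht) z i j).trans (mul_le_mul ((le_abs_self _).trans (hΓ t ht))
        ((minEig_le_sum_abs_diag i).trans (hΛ t ht z hz)) (hν.trans (hell t (hI ht) z))
        ((abs_nonneg _).trans (hΓ t ht)))
    refine (abs_quadForm_sub_le_of_norm_fderiv_le hBconv (fun z _ => hQdiff t (hI ht) z)
      gradient_bound hx hy ξ).trans ?_
    gcongr

end LocalBounds

section Reduction

variable {d : ℕ} {Q : ℝ → Euc d → Fin d → Fin d → ℝ} {b : ℝ → Euc d → Fin d → ℝ}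
  {c : ℝ → Euc d → ℝ} {s : ℝ} {f : Euc d → ℝ} {u : ℝ → Euc d → ℝ}

lemma fderiv_sub_clm {𝕜 E G : Type*} [NontriviallyNormedField 𝕜] [NormedAddCommGroup E]
    [NormedSpace 𝕜 E] [NormedAddCommGroup G] [NormedSpace 𝕜 G] {g : E → G} {x : E}
    (hg : DifferentiableAt 𝕜 g x) (p : E →L[𝕜] G) :
    fderiv 𝕜 (fun y => g y - p y) x = fderiv 𝕜 g x - p := by
  rw [fderiv_fun_sub hg p.differentiableAt, p.fderiv]

lemma aop_sub_clm {g : Euc d → ℝ} (hg : Differentiable ℝ g) (p : Euc d →L[ℝ] ℝ) (t : ℝ)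
    (x : Euc d) :
    Aop d Q b (fun _ _ => 0) t (fun y => g y - p y) x =
      Aop d Q b c t g x - ∑ i, b t x i * p (EuclideanSpace.single i 1) - c t x * g x := by
  have hess_eq (i j : Fin d) : hess d (fun y => g y - p y) x i j = hess d g x i j := by
    simp only [hess, fderiv_sub_clm (hg _), _root_.sub_apply, fderiv_sub_const]
  simp only [Aop, hess_eq, fderiv_sub_clm (hg _), _root_.sub_apply, mul_sub,
    Finset.sum_sub_distrib]
  ring

lemma IsClassicalSolution.isBoundedSourceSolution_sub_clm {T ν K U : ℝ} {B : Set (Euc d)}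
    (hu : IsClassicalSolution d Q b c s f u) (hQ : RegularCoeffs Q b (Ioc s T) B ν K)
    (hc : ∀ t ∈ Ioc s T, ∀ x ∈ B, |c t x| ≤ K) (hU : ∀ t ∈ Icc s T, ∀ x ∈ B, |u t x| ≤ U)
    (p : Euc d →L[ℝ] ℝ) :
    IsBoundedSourceSolution Q b s T B (K * ‖p‖ + K * U) (fun t y => u t y - p y) where
  continuousOn := (hu.cont.mono (prod_mono Icc_subset_Ici_self (subset_univ B))).sub
    (by fun_prop)
  differentiableAt t ht x _ := (hu.tdiff t ht.1 x).sub_const _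
  contDiff t ht := (hu.xdiff t ht.1).sub p.contDiff
  source_le t ht x hx := by
    have source_eq : deriv (fun τ => u τ x - p x) t -
        Aop d Q b (fun _ _ => 0) t (fun y => u t y - p y) x =
          ∑ i, b t x i * p (EuclideanSpace.single i 1) + c t x * u t x := by
      rw [deriv_sub_const, hu.pde t ht.1, aop_sub_clm (c := c)
        ((hu.xdiff t ht.1).differentiable (by norm_num))]
      ring
    rw [source_eq]
    refine (abs_add_le _ _).trans (add_le_add (abs_drift_le hQ ht hx p) ?_)
    rw [abs_mul]
    exact mul_le_mul (hc t ht x hx) (hU t (Ioc_subset_Icc_self ht) x hx) (abs_nonneg _)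
      (hQ.nonneg ht hx)

lemma IsClassicalSolution.tendsto_fderiv {T R ν K : ℝ} {x₀ : Euc d}
    (hu : IsClassicalSolution d Q b c s f u) (hf : ContDiff ℝ 1 f) (hsT : s < T) (hR : 0 < R)
    (hν : 0 < ν) (hQ : RegularCoeffs Q b (Ioc s T) (closedBall x₀ R) ν K)
    (hc : ∀ t ∈ Ioc s T, ∀ x ∈ closedBall x₀ R, |c t x| ≤ K) :
    Tendsto (fun q : ℝ × Euc d => fderiv ℝ (u q.1) q.2) (𝓝[Ioi s ×ˢ univ] (s, x₀))
      (𝓝 (fderiv ℝ f x₀)) := by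
  obtain ⟨U, hU⟩ := (isCompact_Icc.prod (isCompact_closedBall x₀ R)).exists_bound_of_continuousOn
    (hu.cont.mono (prod_mono (fun _ (ht : _ ∈ Icc s T) => ht.1) (subset_univ _)))
  have flat : HasStrictFDerivAt (fun y => u s y - fderiv ℝ f x₀ y) (0 : Euc d →L[ℝ] ℝ) x₀ := by
    have strict : HasStrictFDerivAt f (fderiv ℝ f x₀) x₀ :=
      hf.contDiffAt.hasStrictFDerivAt one_ne_zero
    simpa only [funext hu.init, sub_self] using
      strict.fun_sub (fderiv ℝ f x₀).hasStrictFDerivAt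
  have zero_limit := (hu.isBoundedSourceSolution_sub_clm hQ hc
    (fun t ht x hx => hU (t, x) ⟨ht, hx⟩) (fderiv ℝ f x₀)).tendsto_fderiv_zero hQ hsT hR hν flat
  have shifted := zero_limit.add_const (fderiv ℝ f x₀)
  rw [zero_add] at shifted
  refine shifted.congr' ?_
  filter_upwards [self_mem_nhdsWithin] with q hq
  rw [fderiv_sub_clm ((hu.xdiff q.1 hq.1).differentiable (by norm_num) q.2), sub_add_cancel]

lemma IsClassicalSolution.continuousOn_fderiv (hu : IsClassicalSolution d Q b c s f u)
    (hf : ContDiff ℝ 1 f)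
    (hlim : ∀ x₀ : Euc d, Tendsto (fun q : ℝ × Euc d => fderiv ℝ (u q.1) q.2)
      (𝓝[Ioi s ×ˢ univ] (s, x₀)) (𝓝 (fderiv ℝ f x₀))) :
    ContinuousOn (fun q : ℝ × Euc d => fderiv ℝ (u q.1) q.2) (Ici s ×ˢ univ) := by
  rintro ⟨t, x⟩ ⟨ht, -⟩
  rcases eq_or_lt_of_le (mem_Ici.mp ht) with rfl | hst
  · have fderiv_initial : fderiv ℝ (u s) x = fderiv ℝ f x := by rw [funext hu.init]
    rw [← Ioi_insert, insert_eq, union_comm, union_prod]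
    refine ContinuousWithinAt.union
      (by simpa only [ContinuousWithinAt, fderiv_initial] using hlim x) ?_
    refine ((hf.continuous_fderiv one_ne_zero).comp continuous_snd).continuousWithinAt.congr ?_ ?_
    · rintro ⟨τ, y⟩ ⟨rfl, -⟩
      simp only [Function.comp_apply, funext hu.init]
    · simp only [Function.comp_apply, funext hu.init]
  · exact (hu.grad_cont.continuousAt
      ((isOpen_Ioi.prod isOpen_univ).mem_nhds ⟨hst, mem_univ x⟩)).continuousWithinAt

theorem gradient_continuity_up_to_initial_time_general (hf : ContDiff ℝ 1 f)
    (hu : IsClassicalSolution d Q b c s f u)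
    (hloc : ∀ x₀ : Euc d, ∃ T > s, ∃ R > 0, ∃ ν > 0, ∃ K,
      RegularCoeffs Q b (Ioc s T) (closedBall x₀ R) ν K ∧
        ∀ t ∈ Ioc s T, ∀ x ∈ closedBall x₀ R, |c t x| ≤ K) :
    ContinuousOn (fun q : ℝ × Euc d => fderiv ℝ (u q.1) q.2) (Ici s ×ˢ univ) ∧
    ∀ x₀ : Euc d,
      Tendsto (fun q : ℝ × Euc d => fderiv ℝ (u q.1) q.2)
        (nhdsWithin (s, x₀) (Ioi s ×ˢ univ)) (nhds (fderiv ℝ f x₀)) := by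
  have hlim (x₀ : Euc d) : Tendsto (fun q : ℝ × Euc d => fderiv ℝ (u q.1) q.2)
      (𝓝[Ioi s ×ˢ univ] (s, x₀)) (𝓝 (fderiv ℝ f x₀)) := by
    obtain ⟨T, hsT, R, hR, ν, hν, K, hQ, hc⟩ := hloc x₀
    exact hu.tendsto_fderiv hf hsT hR hν hQ hc
  exact ⟨hu.continuousOn_fderiv hf hlim, hlim⟩

end Reduction

/-- continuity of the spatial gradient up to the initial time for
`C¹_b` initial data. -/
theorem gradient_continuity_up_to_initial_time
    (d : ℕ) (hd : 1 ≤ d) (I : Set ℝ)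
    (hI : ∀ ⦃t t' : ℝ⦄, t ∈ I → t ≤ t' → t' ∈ I)
    (Q : ℝ → Euc d → Fin d → Fin d → ℝ) (b : ℝ → Euc d → Fin d → ℝ) (c : ℝ → Euc d → ℝ)
    (α : ℝ) (hα : α ∈ Ioo (0:ℝ) 1)
    (hQhold : ∀ i j, LocHolderParab d α I (fun t x => Q t x i j))
    (hbhold : ∀ j, LocHolderParab d α I (fun t x => b t x j))
    (hchold : LocHolderParab d α I c)
    (hsymm : ∀ t ∈ I, ∀ x : Euc d, ∀ i j, Q t x i j = Q t x j i)
    (ν₀ : ℝ) (hν₀ : 0 < ν₀) (hell : ∀ t ∈ I, ∀ x : Euc d, ν₀ ≤ minEig d (Q t x))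
    (c₀ : ℝ) (hc₀ : ∀ t ∈ I, ∀ x : Euc d, c t x ≤ c₀)
    -- Lyapunov condition
    (hLyap : ∃ φ : Euc d → ℝ, ContDiff ℝ 2 φ ∧ (∀ x, 0 < φ x) ∧
      (∀ M : ℝ, ∃ R : ℝ, ∀ x : Euc d, R ≤ ‖x‖ → M ≤ φ x) ∧
      (∀ a b' : ℝ, Icc a b' ⊆ I → ∃ lam > 0, ∀ t ∈ Icc a b', ∀ x : Euc d,
        Aop d Q b c t φ x ≤ lam * φ x))
    -- first-order Bernstein hypotheses with locally bounded coefficients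
    (hQdiff : ∀ t ∈ I, ∀ (x : Euc d) (i j : Fin d),
      DifferentiableAt ℝ (fun y => Q t y i j) x)
    (hbdiff : ∀ t ∈ I, ∀ (x : Euc d) (j : Fin d),
      DifferentiableAt ℝ (fun y => b t y j) x)
    (hcdiff : ∀ t ∈ I, ∀ x : Euc d, DifferentiableAt ℝ (fun y => c t y) x)
    (hgradHold : ∃ α' ∈ Ioo (0:ℝ) 1,
      (∀ i j k, LocHolderParab d α' I
        (fun t x => fderiv ℝ (fun y => Q t y i j) x (EuclideanSpace.single k 1))) ∧
      (∀ j k, LocHolderParab d α' I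
        (fun t x => fderiv ℝ (fun y => b t y j) x (EuclideanSpace.single k 1))) ∧
      (∀ k, LocHolderParab d α' I
        (fun t x => fderiv ℝ (fun y => c t y) x (EuclideanSpace.single k 1))))
    (C₁ C₂ : ℝ → ℝ) (hC₁ : LocBddOn I C₁) (hC₂ : LocBddOn I C₂)
    (hgrowthQ : ∀ t ∈ I, ∀ x : Euc d,
      Real.sqrt (∑ i, (∑ j, Q t x i j * x j) ^ 2) + (∑ i, Q t x i i) ≤
        C₁ t * (1 + ‖x‖ ^ 2) * minEig d (Q t x))
    (hgrowthb : ∀ t ∈ I, ∀ x : Euc d,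
      (∑ i, b t x i * x i) ≤ C₂ t * (1 + ‖x‖ ^ 2) * minEig d (Q t x))
    (r₀ : ℝ → Euc d → ℝ)
    (hJac : ∀ t ∈ I, ∀ (x : Euc d) (ξ : Euc d),
      (∑ i, ∑ j, fderiv ℝ (fun y => b t y i) x (EuclideanSpace.single j 1) * ξ i * ξ j) ≤
        r₀ t x * ‖ξ‖ ^ 2)
    (C : ℝ → ℝ) (hCloc : LocBddOn I C)
    (hQgrad : ∀ t ∈ I, ∀ (x : Euc d) (i j : Fin d),
      ‖fderiv ℝ (fun y => Q t y i j) x‖ ≤ C t * minEig d (Q t x))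
    (ϱ : ℝ → Euc d → ℝ)
    (hϱpos : ∀ a b' : ℝ, Icc a b' ⊆ I → ∃ ε > 0, ∀ t ∈ Icc a b', ∀ x : Euc d, ε ≤ ϱ t x)
    (hcbd : ∀ t ∈ I, ∀ x : Euc d, |c t x| ≤ ϱ t x)
    (hcgrad : ∀ t ∈ I, ∀ x : Euc d, ‖fderiv ℝ (fun y => c t y) x‖ ≤ ϱ t x)
    (L M : ℝ → ℝ) (hLloc : LocBddOn I L) (hMloc : LocBddOn I M)
    (hLpos : ∀ t ∈ I, 0 < L t) (hMpos : ∀ t ∈ I, 0 < M t)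
    (hdiss : ∀ t ∈ I, ∀ x : Euc d,
      r₀ t x + L t * ϱ t x ^ 2 ≤ M t * minEig d (Q t x))
    -- data and solution
    (s : ℝ) (hs : s ∈ I)
    (f : Euc d → ℝ) (hf : ContDiff ℝ 1 f)
    (hfb : ∃ Mf, ∀ x, |f x| ≤ Mf) (hfg : ∃ Mf, ∀ x, ‖fderiv ℝ f x‖ ≤ Mf)
    (u : ℝ → Euc d → ℝ)
    (hu : IsClassicalSolution d Q b c s f u) (hub : BoundedOnStrips d s u) :
    ContinuousOn (fun q : ℝ × Euc d => fderiv ℝ (u q.1) q.2) (Ici s ×ˢ univ) ∧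
    ∀ x₀ : Euc d,
      Tendsto (fun q : ℝ × Euc d => fderiv ℝ (u q.1) q.2)
        (nhdsWithin (s, x₀) (Ioi s ×ˢ univ)) (nhds (fderiv ℝ f x₀)) := by
  refine gradient_continuity_up_to_initial_time_general hf hu fun x₀ => ?_
  have hI' : Icc s (s + 1) ⊆ I := fun t ht => hI hs ht.1
  have hB : IsCompact (closedBall x₀ (1 : ℝ)) := isCompact_closedBall x₀ 1
  have regular : ∀ᶠ K in atTop, RegularCoeffs Q b (Icc s (s + 1)) (closedBall x₀ 1) ν₀ K :=
    eventually_atTop_regularCoeffs hα.1.le (fun i => hQhold i i) hbhold hI' hB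
      (convex_closedBall x₀ 1) hν₀.le hsymm hell hQdiff hCloc hQgrad
  obtain ⟨Kc, hKc⟩ := hchold.exists_abs_le hα.1.le isCompact_Icc hB hI'
  obtain ⟨K, hK, hKcK⟩ := (regular.and (eventually_ge_atTop Kc)).exists
  exact ⟨s + 1, lt_add_one s, 1, one_pos, ν₀, hν₀, K, hK.mono Ioc_subset_Icc_self subset_rfl,
    fun t ht x hx => (hKc t (Ioc_subset_Icc_self ht) x hx).trans hKcK⟩
end
end

section
/- Assume the negative uniform gradient estimate holds for some σ_∞ < 0 and let (μ_t)_{t∈I} be a tight evolution system of measures. Then for every s ∈ I, every f ∈ C¹_b(ℝ^d), every classical solution u bounded on strips with datum f, and every R > 0, one has sup_{|x|≤R} |u(t,x) − ∫_{ℝ^d} f dμ_s| → 0 as t → +∞; that is, u(t,·) converges locally uniformly on ℝ^d to the constant ∫_{ℝ^d} f dμ_s. -/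
open Set Filter MeasureTheory

noncomputable section

/-- The negative uniform gradient estimate with rate `σinf < 0`. -/
def NegUniformGradEst (d : ℕ) (I : Set ℝ) (Q : ℝ → Euc d → Fin d → Fin d → ℝ)
    (b : ℝ → Euc d → Fin d → ℝ) (σinf : ℝ) : Prop :=
  ∀ s ∈ I, ∀ f : Euc d → ℝ, ContDiff ℝ 1 f →
    ∀ F G : ℝ, (∀ x, |f x| ≤ F) → (∀ x, ‖fderiv ℝ f x‖ ≤ G) →
    ∀ u : ℝ → Euc d → ℝ,
      IsClassicalSolution d Q b (fun _ _ => 0) s f u → BoundedOnStrips d s u →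
      ∀ t, s < t → ∀ x : Euc d,
        ‖fderiv ℝ (u t) x‖ ≤ Real.exp (σinf * (t - s)) * (F + G)

/-- A tight evolution system of measures for the evolution operator associated to `A`. -/
structure IsTightEvolutionSystem (d : ℕ) (I : Set ℝ)
    (Q : ℝ → Euc d → Fin d → Fin d → ℝ) (b : ℝ → Euc d → Fin d → ℝ)
    (μ : ℝ → Measure (Euc d)) : Prop where
  prob : ∀ t ∈ I, IsProbabilityMeasure (μ t)
  tight : ∀ ε : ℝ, 0 < ε → ∃ R > (0:ℝ), ∀ t ∈ I,
    1 - ε < ((μ t) (Metric.ball (0 : Euc d) R)).toReal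
  invariant : ∀ s ∈ I, ∀ t ∈ I, s < t →
    ∀ f : Euc d → ℝ, Continuous f → (∃ M, ∀ x, |f x| ≤ M) →
    ∀ u : ℝ → Euc d → ℝ,
      IsClassicalSolution d Q b (fun _ _ => 0) s f u → BoundedOnStrips d s u →
      ∫ x, u t x ∂(μ t) = ∫ x, f x ∂(μ s)

/-!
The weak maximum principle bounds `|u|` by `sup |f|` for all times: if `u - F - δ e^{(λ+1)(t-s)} φ`
had a positive value, the Lyapunov function `φ` would force a positive maximum at a finite point,
where the equation is violated. When `∇ₓu(t,·) → 0` uniformly, `u(t,·)` is nearly constant on each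
ball, so by tightness and boundedness it is close there to its mean `∫ u(t,·) dμ_t`, which
invariance identifies with `∫ f dμ_s`.
-/

open scoped Topology NNReal

section Calculus

theorem deriv_deriv_nonpos_of_isLocalMax {h : ℝ → ℝ} {a : ℝ} (hmax : IsLocalMax h a)
    (hcont : ContinuousAt h a) : deriv (deriv h) a ≤ 0 := by
  by_contra! hpos
  have hmin : IsLocalMin h a := isLocalMin_of_deriv_deriv_pos hpos hmax.deriv_eq_zero hcont
  have hconst : h =ᶠ[𝓝 a] fun _ => h a := by
    filter_upwards [hmax, hmin] with x hle hge using le_antisymm hle hge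
  rw [hconst.deriv.deriv_eq] at hpos
  simp at hpos

theorem fderiv_fderiv_apply_self_nonpos_of_isLocalMax {E : Type*} [NormedAddCommGroup E]
    [NormedSpace ℝ E] {g : E → ℝ} {x : E} (hg : ∀ᶠ y in 𝓝 x, DifferentiableAt ℝ g y)
    (hg' : DifferentiableAt ℝ (fderiv ℝ g) x) (hmax : IsLocalMax g x) (v : E) :
    fderiv ℝ (fderiv ℝ g) x v v ≤ 0 := by
  set line : ℝ → E := fun r => x + r • v
  have hline (r : ℝ) : HasDerivAt line v r := by
    simpa [line] using ((hasDerivAt_id r).smul_const v).const_add x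
  have hline0 : line 0 = x := by simp [line]
  have htendsto : Tendsto line (𝓝 0) (𝓝 x) := hline0 ▸ (hline 0).continuousAt.tendsto
  have hderiv : deriv (g ∘ line) =ᶠ[𝓝 0] fun r => fderiv ℝ g (line r) v := by
    filter_upwards [htendsto.eventually hg] with r hr
    exact (hr.hasFDerivAt.comp_hasDerivAt r (hline r)).deriv
  have hderiv₂ : HasDerivAt (fun r => fderiv ℝ g (line r) v) (fderiv ℝ (fderiv ℝ g) x v v) 0 := by
    have hgrad : HasDerivAt (fun r => fderiv ℝ g (line r)) (fderiv ℝ (fderiv ℝ g) x v) 0 :=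
      hg'.hasFDerivAt.comp_hasDerivAt_of_eq 0 (hline 0) hline0.symm
    simpa using hgrad.clm_apply (hasDerivAt_const 0 v)
  rw [← hderiv₂.deriv, ← hderiv.deriv_eq]
  refine deriv_deriv_nonpos_of_isLocalMax ?_ ?_
  · filter_upwards [htendsto.eventually hmax] with r hr
    simpa [hline0] using hr
  · exact ContinuousAt.comp (hline0 ▸ hg.self_of_nhds.continuousAt) (hline 0).continuousAt

theorem deriv_nonneg_of_isLocalMaxOn_Iic {h : ℝ → ℝ} {a : ℝ} (hmax : IsLocalMaxOn h (Iic a) a) :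
    0 ≤ deriv h a := by
  by_cases hdiff : DifferentiableAt ℝ h a
  · have hleft : (-1 : ℝ) ∈ posTangentConeAt (Iic a) a :=
      mem_posTangentConeAt_of_segment_subset <|
        (convex_Iic a).segment_subset (mem_Iic.2 le_rfl) (mem_Iic.2 (by linarith))
    simpa using hmax.hasFDerivWithinAt_nonpos hdiff.hasFDerivAt.hasFDerivWithinAt hleft
  · exact (deriv_zero_of_not_differentiableAt hdiff).ge

end Calculus

section LinearAlgebra

open scoped MatrixOrder in
theorem sum_mul_bilinForm_nonpos {ι M : Type*} [Fintype ι] [AddCommGroup M] [Module ℝ M]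
    {A : Matrix ι ι ℝ} (hA : A.PosSemidef) (D : LinearMap.BilinForm ℝ M)
    (hD : ∀ v, D v v ≤ 0) (e : ι → M) : ∑ i, ∑ j, A i j * D (e i) (e j) ≤ 0 := by
  classical
  obtain ⟨B, hB⟩ := CStarAlgebra.nonneg_iff_eq_star_mul_self.mp hA.nonneg
  have hAB (i j : ι) : A i j = ∑ k, B k i * B k j := by
    simp [hB, Matrix.mul_apply, Matrix.star_apply]
  calc ∑ i, ∑ j, A i j * D (e i) (e j)
      = ∑ i, ∑ j, ∑ k, B k i * B k j * D (e i) (e j) := by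
        simp only [hAB, Finset.sum_mul]
    _ = ∑ k, ∑ i, ∑ j, B k i * B k j * D (e i) (e j) :=
        (Finset.sum_congr rfl fun i _ => Finset.sum_comm).trans Finset.sum_comm
    _ = ∑ k, D (∑ i, B k i • e i) (∑ j, B k j • e j) := by
        refine Finset.sum_congr rfl fun k _ => ?_
        rw [LinearMap.BilinForm.sum_left]
        simp only [LinearMap.BilinForm.sum_right, LinearMap.BilinForm.smul_left,
          LinearMap.BilinForm.smul_right]
        exact Finset.sum_congr rfl fun i _ => Finset.sum_congr rfl fun j _ => by ring
    _ ≤ 0 := Finset.sum_nonpos fun k _ => hD _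

theorem posSemidef_of_minEig_nonneg {d : ℕ} {A : Fin d → Fin d → ℝ}
    (hsymm : ∀ i j, A i j = A j i) (hmin : 0 ≤ minEig d A) : (Matrix.of A).PosSemidef := by
  set q : Euc d → ℝ := fun ξ => ∑ i, ∑ j, A i j * ξ i * ξ j
  have hq_smul (r : ℝ) (ξ : Euc d) : q (r • ξ) = r ^ 2 * q ξ := by
    simp only [q, PiLp.smul_apply, smul_eq_mul, Finset.mul_sum]
    exact Finset.sum_congr rfl fun i _ => Finset.sum_congr rfl fun j _ => by ring
  have hbdd : BddBelow {r | ∃ ξ : Euc d, ‖ξ‖ = 1 ∧ q ξ = r} := by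
    have hcont : Continuous q := by fun_prop
    simpa [image, mem_sphere_zero_iff_norm] using
      (isCompact_sphere (0 : Euc d) 1).bddBelow_image hcont.continuousOn
  have hq_nonneg (ξ : Euc d) : 0 ≤ q ξ := by
    rcases eq_or_ne ξ 0 with rfl | hξ
    · simp [q]
    have hunit : 0 ≤ q (‖ξ‖⁻¹ • ξ) := hmin.trans (csInf_le hbdd ⟨_, norm_smul_inv_norm hξ, rfl⟩)
    rw [hq_smul] at hunit
    exact nonneg_of_mul_nonneg_right hunit (by positivity)
  refine .of_dotProduct_mulVec_nonneg (Matrix.IsHermitian.ext fun i j => by simp [hsymm i j]) ?_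
  intro v
  refine (hq_nonneg (WithLp.toLp 2 v)).trans_eq ?_
  simp only [q, dotProduct, Matrix.mulVec, Finset.mul_sum, star_trivial, Matrix.of_apply]
  exact Finset.sum_congr rfl fun i _ => Finset.sum_congr rfl fun j _ => by ring

end LinearAlgebra

section EllipticOperator

variable {d : ℕ} {Q : ℝ → Euc d → Fin d → Fin d → ℝ} {b : ℝ → Euc d → Fin d → ℝ}
  {c : ℝ → Euc d → ℝ} {t : ℝ} {g h : Euc d → ℝ} {x : Euc d}

theorem hess_eq_fderiv_fderiv (hg : DifferentiableAt ℝ (fderiv ℝ g) x) (i j : Fin d) :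
    hess d g x i j =
      fderiv ℝ (fderiv ℝ g) x (EuclideanSpace.single i 1) (EuclideanSpace.single j 1) := by
  rw [hess, fderiv_clm_apply hg (by fun_prop)]
  simp

theorem differentiable_fderiv_of_contDiff_two (hg : ContDiff ℝ 2 g) :
    Differentiable ℝ (fderiv ℝ g) :=
  (hg.fderiv_right (m := 1) (by norm_num)).differentiable one_ne_zero

theorem Aop_sub (hg : ContDiff ℝ 2 g) (hh : ContDiff ℝ 2 h) :
    Aop d Q b c t (fun y => g y - h y) x = Aop d Q b c t g x - Aop d Q b c t h x := by
  have hgrad : fderiv ℝ (fun y => g y - h y) = fderiv ℝ g - fderiv ℝ h :=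
    funext fun y => fderiv_fun_sub (hg.differentiable two_ne_zero y)
      (hh.differentiable two_ne_zero y)
  have hg' := differentiable_fderiv_of_contDiff_two hg x
  have hh' := differentiable_fderiv_of_contDiff_two hh x
  have hhess (i j : Fin d) :
      hess d (fun y => g y - h y) x i j = hess d g x i j - hess d h x i j := by
    rw [hess_eq_fderiv_fderiv (hgrad ▸ hg'.sub hh'), hgrad, fderiv_sub hg' hh',
      hess_eq_fderiv_fderiv hg', hess_eq_fderiv_fderiv hh']
    rfl
  simp only [Aop, hhess, hgrad, Pi.sub_apply, sub_apply, mul_sub,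
    Finset.sum_sub_distrib]
  ring

theorem Aop_const_mul (r : ℝ) (g : Euc d → ℝ) :
    Aop d Q b c t (fun y => r * g y) x = r * Aop d Q b c t g x := by
  have hfderiv (k : Euc d → ℝ) : fderiv ℝ (fun y => r * k y) = r • fderiv ℝ k :=
    fderiv_const_smul_field r
  have hhess (i j : Fin d) : hess d (fun y => r * g y) x i j = r * hess d g x i j := by
    simp only [hess, hfderiv, Pi.smul_apply, smul_apply, smul_eq_mul]
  simp only [Aop, hhess, hfderiv, Pi.smul_apply, smul_apply, smul_eq_mul,
    mul_add, Finset.mul_sum, mul_left_comm r]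

theorem Aop_const (r : ℝ) : Aop d Q b c t (fun _ => r) x = c t x * r := by
  simp [Aop, hess]

theorem Aop_nonpos_of_isLocalMax (hQ : (Matrix.of (Q t x)).PosSemidef) (hc : c t x ≤ 0)
    (hg : ContDiff ℝ 2 g) (hmax : IsLocalMax g x) (hpos : 0 ≤ g x) :
    Aop d Q b c t g x ≤ 0 := by
  have hg' := differentiable_fderiv_of_contDiff_two hg x
  have hsecond : ∑ i, ∑ j, Q t x i j * hess d g x i j ≤ 0 := by
    simp only [hess_eq_fderiv_fderiv hg']
    exact sum_mul_bilinForm_nonpos hQ (fderiv ℝ (fderiv ℝ g) x).toLinearMap₁₂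
        (fderiv_fderiv_apply_self_nonpos_of_isLocalMax
          (.of_forall (hg.differentiable two_ne_zero)) hg' hmax)
        fun i => EuclideanSpace.single i 1
  have hzero : c t x * g x ≤ 0 := mul_nonpos_of_nonpos_of_nonneg hc hpos
  simpa [Aop, hmax.fderiv_eq_zero] using add_nonpos hsecond hzero

end EllipticOperator

section MaximumPrinciple

theorem tendsto_cocompact_atTop_of_forall_exists_norm_ge {E : Type*} [NormedAddCommGroup E]
    [ProperSpace E] {φ : E → ℝ} (hφ : ∀ M, ∃ R, ∀ x, R ≤ ‖x‖ → M ≤ φ x) :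
    Tendsto φ (cocompact E) atTop :=
  tendsto_atTop.2 fun M =>
    let ⟨R, hR⟩ := hφ M
    (tendsto_norm_cocompact_atTop.eventually_ge_atTop R).mono hR

/-- `φ` is a Lyapunov function for the time-dependent operator `A`: it blows up at infinity and
`A φ ≤ λ φ` locally uniformly in time. Its existence replaces any growth condition on the
coefficients in the maximum principle. -/
structure IsLyapunovFunction (d : ℕ) (I : Set ℝ) (Q : ℝ → Euc d → Fin d → Fin d → ℝ)
    (b : ℝ → Euc d → Fin d → ℝ) (c : ℝ → Euc d → ℝ) (φ : Euc d → ℝ) : Prop where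
  contDiff : ContDiff ℝ 2 φ
  pos : ∀ x, 0 < φ x
  tendsto_cocompact : Tendsto φ (cocompact (Euc d)) atTop
  Aop_le : ∀ a b' : ℝ, Icc a b' ⊆ I → ∃ lam > 0, ∀ t ∈ Icc a b', ∀ x,
    Aop d Q b c t φ x ≤ lam * φ x

variable {d : ℕ} {I : Set ℝ} {Q : ℝ → Euc d → Fin d → Fin d → ℝ} {b : ℝ → Euc d → Fin d → ℝ}
  {c : ℝ → Euc d → ℝ} {s T F : ℝ} {f φ : Euc d → ℝ} {u : ℝ → Euc d → ℝ}

theorem nonpos_of_deriv_lt_Aop {w : ℝ → Euc d → ℝ}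
    (hQ : ∀ t ∈ Ioc s T, ∀ x, (Matrix.of (Q t x)).PosSemidef)
    (hc : ∀ t ∈ Ioc s T, ∀ x, c t x ≤ 0)
    (hcont : ContinuousOn (fun p : ℝ × Euc d => w p.1 p.2) (Icc s T ×ˢ univ))
    (hdiff : ∀ t ∈ Ioc s T, ContDiff ℝ 2 (w t)) (hinit : ∀ x, w s x ≤ 0)
    (hinfty : ∀ᶠ x in cocompact (Euc d), ∀ t ∈ Icc s T, w t x ≤ 0)
    (hlt : ∀ t ∈ Ioc s T, ∀ x, deriv (fun τ => w τ x) t < Aop d Q b c t (w t) x) :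
    ∀ t ∈ Icc s T, ∀ x, w t x ≤ 0 := by
  intro t₀ ht₀ x₀
  by_contra! hpos₀
  obtain ⟨K, hK, hKw⟩ := mem_cocompact.1 hinfty
  have hout : ∀ᶠ p in cocompact (ℝ × Euc d) ⊓ 𝓟 (Icc s T ×ˢ univ), w p.1 p.2 ≤ w t₀ x₀ := by
    rw [eventually_inf_principal]
    filter_upwards [(isCompact_Icc.prod hK).compl_mem_cocompact] with p hpK hpS
    exact (hKw (fun hp => hpK ⟨hpS.1, hp⟩) p.1 hpS.1).trans hpos₀.le
  obtain ⟨⟨t, x⟩, ⟨ht, -⟩, hmax⟩ := hcont.exists_isMaxOn' (isClosed_Icc.prod isClosed_univ)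
    (x₀ := (t₀, x₀)) ⟨ht₀, mem_univ _⟩ hout
  have hle {τ : ℝ} (hτ : τ ∈ Icc s T) (y : Euc d) : w τ y ≤ w t x :=
    hmax (show (τ, y) ∈ Icc s T ×ˢ univ from ⟨hτ, mem_univ y⟩)
  have hpos : 0 < w t x := hpos₀.trans_le (hle ht₀ x₀)
  have hst : s < t := ht.1.lt_of_ne <| by
    rintro rfl
    exact hpos.not_ge (hinit x)
  have hderiv : 0 ≤ deriv (fun τ => w τ x) t := deriv_nonneg_of_isLocalMaxOn_Iic <| by
    filter_upwards [Icc_mem_nhdsLE hst] with τ hτ using hle ⟨hτ.1, hτ.2.trans ht.2⟩ x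
  have hAop : Aop d Q b c t (w t) x ≤ 0 :=
    Aop_nonpos_of_isLocalMax (hQ t ⟨hst, ht.2⟩ x) (hc t ⟨hst, ht.2⟩ x) (hdiff t ⟨hst, ht.2⟩)
      (.of_forall (hle ht)) hpos.le
  exact (hderiv.trans_lt (hlt t ⟨hst, ht.2⟩ x)).not_ge hAop

namespace IsClassicalSolution

theorem continuous_init (hu : IsClassicalSolution d Q b c s f u) : Continuous f := by
  have hus : Continuous (u s) :=
    hu.cont.comp_continuous (Continuous.prodMk_right s) fun x => ⟨self_mem_Ici, mem_univ x⟩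
  exact hus.congr hu.init

theorem neg (hu : IsClassicalSolution d Q b c s f u) :
    IsClassicalSolution d Q b c s (fun x => -f x) (fun t x => -u t x) where
  cont := hu.cont.neg
  tdiff t ht x := (hu.tdiff t ht x).neg
  tderiv_cont := by simpa only [deriv.fun_neg] using hu.tderiv_cont.fun_neg
  xdiff t ht := (hu.xdiff t ht).neg
  grad_cont := by simpa only [fderiv_fun_neg] using hu.grad_cont.fun_neg
  hess_cont := by
    refine hu.hess_cont.neg.congr fun p _ => ?_
    ext i j
    simp [hess, fderiv_fun_neg]
  pde t ht x := by
    simpa only [deriv.fun_neg, neg_one_mul, hu.pde t ht x] using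
      (Aop_const_mul (-1) (u t)).symm
  init x := congrArg Neg.neg (hu.init x)

theorem deriv_sub_exp_mul_lt_Aop {lam δ t : ℝ} {x : Euc d}
    (hu : IsClassicalSolution d Q b c s f u) (ht : s < t) (hc : c t x ≤ 0)
    (hφ : ContDiff ℝ 2 φ) (hφ_pos : 0 < φ x) (hφ_le : Aop d Q b c t φ x ≤ lam * φ x)
    (hF : 0 ≤ F) (hδ : 0 < δ) :
    deriv (fun τ => u τ x - F - δ * Real.exp ((lam + 1) * (τ - s)) * φ x) t <
      Aop d Q b c t (fun y => u t y - F - δ * Real.exp ((lam + 1) * (t - s)) * φ y) x := by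
  set κ := δ * Real.exp ((lam + 1) * (t - s)) with hκ
  have hκ_pos : 0 < κ := mul_pos hδ (Real.exp_pos _)
  have hderiv : deriv (fun τ => u τ x - F - δ * Real.exp ((lam + 1) * (τ - s)) * φ x) t =
      Aop d Q b c t (u t) x - (lam + 1) * (κ * φ x) := by
    have hexp : HasDerivAt (fun τ => Real.exp ((lam + 1) * (τ - s)))
        (Real.exp ((lam + 1) * (t - s)) * ((lam + 1) * 1)) t :=
      (((hasDerivAt_id t).sub_const s).const_mul (lam + 1)).exp
    refine (((hu.tdiff t ht x).hasDerivAt.sub_const F).sub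
      ((hexp.const_mul δ).mul_const (φ x))).deriv.trans ?_
    rw [hu.pde t ht x, hκ]
    ring
  have hAop : Aop d Q b c t (fun y => u t y - F - κ * φ y) x =
      Aop d Q b c t (u t) x - c t x * F - κ * Aop d Q b c t φ x := by
    rw [Aop_sub ((hu.xdiff t ht).sub contDiff_const) (contDiff_const.mul hφ),
      Aop_sub (hu.xdiff t ht) contDiff_const, Aop_const, Aop_const_mul]
  have hκφ : κ * Aop d Q b c t φ x ≤ lam * (κ * φ x) := by
    rw [mul_left_comm]
    exact mul_le_mul_of_nonneg_left hφ_le hκ_pos.le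
  have hcF : c t x * F ≤ 0 := mul_nonpos_of_nonpos_of_nonneg hc hF
  rw [hderiv, hAop]
  linarith [mul_pos hκ_pos hφ_pos]

theorem sub_exp_mul_nonpos {lam δ : ℝ}
    (hQ : ∀ t ∈ Ioc s T, ∀ x, (Matrix.of (Q t x)).PosSemidef)
    (hc : ∀ t ∈ Ioc s T, ∀ x, c t x ≤ 0)
    (hφ : ContDiff ℝ 2 φ) (hφ_pos : ∀ x, 0 < φ x) (hφ_lim : Tendsto φ (cocompact (Euc d)) atTop)
    (hlam : 0 ≤ lam) (hφ_le : ∀ t ∈ Ioc s T, ∀ x, Aop d Q b c t φ x ≤ lam * φ x)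
    (hu : IsClassicalSolution d Q b c s f u) (hub : ∃ M, ∀ t ∈ Icc s T, ∀ x, u t x ≤ M)
    (hF : 0 ≤ F) (hf : ∀ x, f x ≤ F) (hδ : 0 < δ) :
    ∀ t ∈ Icc s T, ∀ x, u t x - F - δ * Real.exp ((lam + 1) * (t - s)) * φ x ≤ 0 := by
  have hpen : ∀ t x, 0 < δ * Real.exp ((lam + 1) * (t - s)) * φ x :=
    fun t x => mul_pos (mul_pos hδ (Real.exp_pos _)) (hφ_pos x)
  refine nonpos_of_deriv_lt_Aop (Q := Q) (b := b) (c := c) hQ hc ?_ (fun t ht => ?_)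
    (fun x => ?_) ?_ (fun t ht x => ?_)
  · have hφ_cont := hφ.continuous
    exact ((hu.cont.mono (prod_mono Icc_subset_Ici_self subset_rfl)).sub continuousOn_const).sub
      (by fun_prop)
  · exact ((hu.xdiff t ht.1).sub contDiff_const).sub (contDiff_const.mul hφ)
  · linarith [hu.init x, hf x, hpen s x]
  · obtain ⟨M, hM⟩ := hub
    filter_upwards [hφ_lim.eventually_ge_atTop ((M - F) / δ)] with x hx t ht
    have hexp : 1 ≤ Real.exp ((lam + 1) * (t - s)) :=
      Real.one_le_exp (mul_nonneg (by linarith) (by linarith [ht.1]))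
    calc u t x - F - δ * Real.exp ((lam + 1) * (t - s)) * φ x
        ≤ M - F - δ * 1 * φ x := by
          have := hφ_pos x
          gcongr
          exact hM t ht x
      _ ≤ 0 := by linarith [(div_le_iff₀ hδ).1 hx]
  · exact hu.deriv_sub_exp_mul_lt_Aop ht.1 (hc t ht x) hφ (hφ_pos x) (hφ_le t ht x) hF hδ

theorem le_of_init_le (hI : IsUpperSet I) (hQ : ∀ t ∈ I, ∀ x, (Matrix.of (Q t x)).PosSemidef)
    (hc : ∀ t ∈ I, ∀ x, c t x ≤ 0) (hφ : IsLyapunovFunction d I Q b c φ) (hs : s ∈ I)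
    (hu : IsClassicalSolution d Q b c s f u) (hub : BoundedOnStrips d s u)
    (hF : 0 ≤ F) (hf : ∀ x, f x ≤ F) {t : ℝ} (ht : s < t) (x : Euc d) : u t x ≤ F := by
  have hIcc : Icc s t ⊆ I := Icc_subset_Ici_self.trans (hI.Ici_subset hs)
  obtain ⟨lam, hlam, hφ_le⟩ := hφ.Aop_le s t hIcc
  have hub_above : ∃ M, ∀ τ ∈ Icc s t, ∀ y, u τ y ≤ M :=
    (hub t ht).imp fun M hM τ hτ y => (le_abs_self _).trans (hM τ hτ y)
  have hpen {δ : ℝ} (hδ : 0 < δ) :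
      u t x - F - δ * Real.exp ((lam + 1) * (t - s)) * φ x ≤ 0 :=
    hu.sub_exp_mul_nonpos (fun τ hτ => hQ τ (hIcc (Ioc_subset_Icc_self hτ)))
      (fun τ hτ => hc τ (hIcc (Ioc_subset_Icc_self hτ))) hφ.contDiff hφ.pos hφ.tendsto_cocompact
      hlam.le (fun τ hτ => hφ_le τ (Ioc_subset_Icc_self hτ)) hub_above hF hf hδ t
      (right_mem_Icc.2 ht.le) x
  have hlim : Tendsto (fun δ => u t x - F - δ * Real.exp ((lam + 1) * (t - s)) * φ x)
      (𝓝[>] 0) (𝓝 (u t x - F)) :=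
    tendsto_nhdsWithin_of_tendsto_nhds (Continuous.tendsto' (by fun_prop) _ _ (by simp))
  exact sub_nonpos.1 (le_of_tendsto hlim (eventually_mem_nhdsWithin.mono fun δ hδ => hpen hδ))

theorem abs_le_of_abs_init_le (hI : IsUpperSet I)
    (hQ : ∀ t ∈ I, ∀ x, (Matrix.of (Q t x)).PosSemidef) (hc : ∀ t ∈ I, ∀ x, c t x ≤ 0)
    (hφ : IsLyapunovFunction d I Q b c φ) (hs : s ∈ I)
    (hu : IsClassicalSolution d Q b c s f u) (hub : BoundedOnStrips d s u)
    (hf : ∀ x, |f x| ≤ F) {t : ℝ} (ht : s < t) (x : Euc d) : |u t x| ≤ F := by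
  have hF : 0 ≤ F := (abs_nonneg _).trans (hf 0)
  have hub_neg : BoundedOnStrips d s (fun t x => -u t x) := by
    simpa only [BoundedOnStrips, abs_neg] using hub
  exact abs_le'.2 ⟨hu.le_of_init_le hI hQ hc hφ hs hub hF (fun y => (abs_le'.1 (hf y)).1) ht x,
    hu.neg.le_of_init_le hI hQ hc hφ hs hub_neg hF (fun y => (abs_le'.1 (hf y)).2) ht x⟩

end IsClassicalSolution

end MaximumPrinciple

section Concentration

variable {X : Type*} [MeasurableSpace X]

theorem abs_sub_integral_le_of_forall_mem {ν : Measure X} [IsProbabilityMeasure ν] {g : X → ℝ}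
    (hg : AEStronglyMeasurable g ν) {F δ : ℝ} (hF : ∀ y, |g y| ≤ F) {S : Set X}
    (hS : MeasurableSet S) {x : X} (hδ : 0 ≤ δ) (hosc : ∀ y ∈ S, |g x - g y| ≤ δ) :
    |g x - ∫ y, g y ∂ν| ≤ δ + 2 * F * ν.real Sᶜ := by
  have hint : Integrable g ν := .of_bound hg F (.of_forall hF)
  have hind : Integrable (Sᶜ.indicator fun _ => 2 * F) ν :=
    (integrable_const _).indicator hS.compl
  have hpointwise (y : X) : ‖g x - g y‖ ≤ δ + Sᶜ.indicator (fun _ => 2 * F) y := by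
    rw [Real.norm_eq_abs]
    by_cases hy : y ∈ S
    · simpa [hy] using hosc y hy
    · have htriangle := abs_sub (g x) (g y)
      simp only [mem_compl_iff, hy, not_false_eq_true, indicator_of_mem]
      linarith [hF x, hF y]
  calc |g x - ∫ y, g y ∂ν|
      = ‖∫ y, (g x - g y) ∂ν‖ := by
        rw [integral_sub (integrable_const _) hint, integral_const, probReal_univ, one_smul,
          Real.norm_eq_abs]
    _ ≤ ∫ y, (δ + Sᶜ.indicator (fun _ => 2 * F) y) ∂ν :=
        norm_integral_le_of_norm_le ((integrable_const _).add hind) (.of_forall hpointwise)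
    _ = δ + 2 * F * ν.real Sᶜ := by
        rw [integral_add (integrable_const _) hind, integral_indicator_const _ hS.compl]
        simp [mul_comm]

theorem tendstoUniformlyOn_of_lipschitzWith_of_tight [PseudoMetricSpace X] [OpensMeasurableSpace X]
    {ι : Type*} {l : Filter ι} {ν : ι → Measure X} {g : ι → X → ℝ} {F m : ℝ} {o : X}
    (hν : ∀ᶠ n in l, IsProbabilityMeasure (ν n))
    (htight : ∀ ε > 0, ∃ r > 0, ∀ᶠ n in l, (ν n).real (Metric.ball o r)ᶜ < ε)
    (hF : ∀ᶠ n in l, ∀ x, |g n x| ≤ F)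
    (hLip : ∀ L : ℝ≥0, 0 < L → ∀ᶠ n in l, LipschitzWith L (g n))
    (hm : ∀ᶠ n in l, ∫ x, g n x ∂ν n = m) (R : ℝ) :
    TendstoUniformlyOn g (fun _ => m) l (Metric.closedBall o R) := by
  rw [Metric.tendstoUniformlyOn_iff]
  intro ε hε
  obtain ⟨η, hη, hFη⟩ := exists_pos_mul_lt (half_pos hε) (2 * F)
  obtain ⟨r, hr, hball⟩ := htight η hη
  obtain ⟨L, hL, hLr⟩ := exists_pos_mul_lt (half_pos hε) (R + r)
  lift L to ℝ≥0 using hL.le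
  filter_upwards [hν, hball, hF, hLip L hL, hm] with n hνn hballn hFn hLn hmn x hx
  have hF_nonneg : 0 ≤ F := (abs_nonneg _).trans (hFn x)
  have hR : 0 ≤ R := dist_nonneg.trans hx
  have hosc : ∀ y ∈ Metric.ball o r, |g n x - g n y| ≤ (R + r) * L := fun y hy =>
    calc |g n x - g n y| ≤ L * dist x y := hLn.dist_le_mul x y
      _ ≤ L * (dist x o + dist y o) := by gcongr; exact dist_triangle_right x y o
      _ ≤ L * (R + r) := by gcongr; exacts [hx, (Metric.mem_ball.1 hy).le]
      _ = (R + r) * L := mul_comm _ _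
  calc dist m (g n x)
      = |g n x - ∫ y, g n y ∂ν n| := by rw [hmn, dist_comm, Real.dist_eq]
    _ ≤ (R + r) * L + 2 * F * (ν n).real (Metric.ball o r)ᶜ :=
        abs_sub_integral_le_of_forall_mem hLn.continuous.aestronglyMeasurable hFn
          measurableSet_ball (by positivity) hosc
    _ ≤ (R + r) * L + 2 * F * η := by gcongr
    _ < ε := by linarith

end Concentration

section EvolutionSystem

variable {d : ℕ} {I : Set ℝ} {Q : ℝ → Euc d → Fin d → Fin d → ℝ} {b : ℝ → Euc d → Fin d → ℝ}
  {s : ℝ} {f : Euc d → ℝ} {u : ℝ → Euc d → ℝ}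

theorem NegUniformGradEst.tendstoUniformly_fderiv {σinf : ℝ}
    (hgrad : NegUniformGradEst d I Q b σinf) (hσ : σinf < 0) (hs : s ∈ I)
    (hf : ContDiff ℝ 1 f) (hfb : ∃ F, ∀ x, |f x| ≤ F) (hfg : ∃ G, ∀ x, ‖fderiv ℝ f x‖ ≤ G)
    (hu : IsClassicalSolution d Q b (fun _ _ => 0) s f u) (hub : BoundedOnStrips d s u) :
    TendstoUniformly (fun t => fderiv ℝ (u t)) 0 atTop := by
  obtain ⟨F, hF⟩ := hfb
  obtain ⟨G, hG⟩ := hfg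
  have hrate : Tendsto (fun t => Real.exp (σinf * (t - s)) * (F + G)) atTop (𝓝 0) := by
    have hexponent : Tendsto (fun t => σinf * (t - s)) atTop atBot :=
      (tendsto_atTop_add_const_right _ (-s) tendsto_id).const_mul_atTop_of_neg hσ
    simpa using (Real.tendsto_exp_atBot.comp hexponent).mul_const (F + G)
  rw [Metric.tendstoUniformly_iff]
  intro ε hε
  filter_upwards [eventually_gt_atTop s, hrate.eventually_lt_const hε] with t ht hlt x
  rw [Pi.zero_apply, dist_zero_left]
  exact (hgrad s hs f hf F G hF hG u hu hub t ht x).trans_lt hlt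

theorem IsTightEvolutionSystem.exists_real_compl_ball_lt {μ : ℝ → Measure (Euc d)}
    (hμ : IsTightEvolutionSystem d I Q b μ) {ε : ℝ} (hε : 0 < ε) :
    ∃ r > 0, ∀ t ∈ I, (μ t).real (Metric.ball 0 r)ᶜ < ε := by
  obtain ⟨r, hr, hball⟩ := hμ.tight ε hε
  refine ⟨r, hr, fun t ht => ?_⟩
  have := hμ.prob t ht
  rw [probReal_compl_eq_one_sub measurableSet_ball]
  exact sub_lt_comm.1 (hball t ht)

theorem locally_uniform_convergence_to_average_general (hI : IsUpperSet I)
    (hQ : ∀ t ∈ I, ∀ x, (Matrix.of (Q t x)).PosSemidef) {φ : Euc d → ℝ}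
    (hφ : IsLyapunovFunction d I Q b (fun _ _ => 0) φ) {μ : ℝ → Measure (Euc d)}
    (hμ : IsTightEvolutionSystem d I Q b μ) (hs : s ∈ I) (hfb : ∃ F, ∀ x, |f x| ≤ F)
    (hu : IsClassicalSolution d Q b (fun _ _ => 0) s f u) (hub : BoundedOnStrips d s u)
    (hgrad : TendstoUniformly (fun t => fderiv ℝ (u t)) 0 atTop) (R : ℝ) :
    TendstoUniformlyOn u (fun _ => ∫ y, f y ∂μ s) atTop (Metric.closedBall 0 R) := by
  obtain ⟨F, hF⟩ := hfb
  have hlate : ∀ᶠ t in atTop, s < t := eventually_gt_atTop s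
  have hmem {t : ℝ} (ht : s < t) : t ∈ I := hI ht.le hs
  have hbdd : ∀ᶠ t in atTop, ∀ x, |u t x| ≤ F := hlate.mono fun t ht =>
    hu.abs_le_of_abs_init_le hI hQ (fun _ _ _ => le_rfl) hφ hs hub hF ht
  have hmean : ∀ᶠ t in atTop, ∫ x, u t x ∂μ t = ∫ y, f y ∂μ s := hlate.mono fun t ht =>
    hμ.invariant s hs t (hmem ht) ht f hu.continuous_init ⟨F, hF⟩ u hu hub
  have hLip (L : ℝ≥0) (hL : 0 < L) : ∀ᶠ t in atTop, LipschitzWith L (u t) := by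
    filter_upwards [hlate, Metric.tendstoUniformly_iff.1 hgrad L hL] with t ht hlt
    refine lipschitzWith_of_nnnorm_fderiv_le ((hu.xdiff t ht).differentiable two_ne_zero)
      fun x => ?_
    simpa [← NNReal.coe_le_coe] using (hlt x).le
  refine tendstoUniformlyOn_of_lipschitzWith_of_tight
    (hlate.mono fun t ht => hμ.prob t (hmem ht)) (fun ε hε => ?_) hbdd hLip hmean R
  obtain ⟨r, hr, hball⟩ := hμ.exists_real_compl_ball_lt hε
  exact ⟨r, hr, hlate.mono fun t ht => hball t (hmem ht)⟩

end EvolutionSystem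

/-- under the negative uniform gradient estimate, `u(t,·)` converges locally
uniformly, as `t → +∞`, to the constant `∫ f dμ_s`. -/
theorem locally_uniform_convergence_to_average
    (d : ℕ) (hd : 1 ≤ d) (I : Set ℝ)
    (hI : ∀ ⦃t t' : ℝ⦄, t ∈ I → t ≤ t' → t' ∈ I)
    (Q : ℝ → Euc d → Fin d → Fin d → ℝ) (b : ℝ → Euc d → Fin d → ℝ)
    (α : ℝ) (hα : α ∈ Ioo (0:ℝ) 1)
    (hQhold : ∀ i j, LocHolderParab d α I (fun t x => Q t x i j))
    (hbhold : ∀ j, LocHolderParab d α I (fun t x => b t x j))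
    (hsymm : ∀ t ∈ I, ∀ x : Euc d, ∀ i j, Q t x i j = Q t x j i)
    (ν₀ : ℝ) (hν₀ : 0 < ν₀) (hell : ∀ t ∈ I, ∀ x : Euc d, ν₀ ≤ minEig d (Q t x))
    (hLyap : ∃ φ : Euc d → ℝ, ContDiff ℝ 2 φ ∧ (∀ x, 0 < φ x) ∧
      (∀ M : ℝ, ∃ R : ℝ, ∀ x : Euc d, R ≤ ‖x‖ → M ≤ φ x) ∧
      (∀ a b' : ℝ, Icc a b' ⊆ I → ∃ lam > 0, ∀ t ∈ Icc a b', ∀ x : Euc d,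
        Aop d Q b (fun _ _ => 0) t φ x ≤ lam * φ x))
    (σinf : ℝ) (hσ : σinf < 0)
    (hgrad : NegUniformGradEst d I Q b σinf)
    (μ : ℝ → Measure (Euc d))
    (hμ : IsTightEvolutionSystem d I Q b μ)
    (s : ℝ) (hs : s ∈ I)
    (f : Euc d → ℝ) (hf : ContDiff ℝ 1 f)
    (hfb : ∃ Mf, ∀ x, |f x| ≤ Mf) (hfg : ∃ Mf, ∀ x, ‖fderiv ℝ f x‖ ≤ Mf)
    (u : ℝ → Euc d → ℝ)
    (hu : IsClassicalSolution d Q b (fun _ _ => 0) s f u)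
    (hub : BoundedOnStrips d s u) :
    ∀ R : ℝ, 0 < R →
      TendstoUniformlyOn (fun t x => u t x) (fun _ => ∫ y, f y ∂(μ s)) atTop
        (Metric.closedBall (0 : Euc d) R) := by
  obtain ⟨φ, hφ, hφ_pos, hφ_coercive, hφ_le⟩ := hLyap
  exact fun R _ => locally_uniform_convergence_to_average_general (fun _ _ h ht => hI ht h)
    (fun t ht x => posSemidef_of_minEig_nonneg (hsymm t ht x) (hν₀.le.trans (hell t ht x)))
    ⟨hφ, hφ_pos, tendsto_cocompact_atTop_of_forall_exists_norm_ge hφ_coercive, hφ_le⟩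
    hμ hs hfb hu hub (hgrad.tendstoUniformly_fderiv hσ hs hf hfb hfg hu hub) R
end
end

section
/- For every bounded continuous f : ℝ → ℝ, every twice continuously differentiable function u : ℝ → ℝ satisfying u(x) − u''(x) − x³u'(x) = f(x) for all x ∈ ℝ is bounded on ℝ. -/
open Set Filter

noncomputable section

/-!
The energy `E = u² + u'² + K`, with a constant `K > f²`, has derivative
`E' = 2(1 + λ)uu' - 2bu'² - 2fu'`, where `b` is the drift. As the drift points to infinity, half of
its dissipation `2bu'²` absorbs each cross term (completing the square), at the price of
`((1 + λ)²u² + f²) / b`. Hence `E' ≤ (c / b) E`, and since `1 / b` is integrable at infinity,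
Grönwall's inequality bounds `E`. Reflection `x ↦ -x` takes care of the other end of the line.
-/

open MeasureTheory

/-- The flow of `x' = b x` moves every point of `(a, ∞)` to the right and reaches `+∞` in finite
time, the travel time being the integral of `1 / b`. This is the condition on the drift that bounds
the solutions of the resolvent equation near `+∞`; near `-∞`, it is imposed on the reflected drift
`x ↦ -b (-x)`. -/
structure IsExplosiveDrift (b : ℝ → ℝ) (a : ℝ) : Prop where
  pos : ∀ x ∈ Ioi a, 0 < b x
  integrableOn_inv : IntegrableOn (fun x ↦ (b x)⁻¹) (Ioi a)

theorem isExplosiveDrift_pow {n : ℕ} (hn : 1 < n) {a : ℝ} (ha : 0 < a) :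
    IsExplosiveDrift (fun x ↦ x ^ n) a where
  pos x hx := pow_pos (ha.trans hx) n
  integrableOn_inv := by
    have hexponent : (-n : ℝ) < -1 := neg_lt_neg (mod_cast hn)
    refine (integrableOn_Ioi_rpow_of_lt hexponent ha).congr_fun (fun x hx ↦ ?_) measurableSet_Ioi
    simp only [Real.rpow_neg (ha.trans hx).le, Real.rpow_natCast]

theorem le_mul_exp_integral_of_deriv_right_le_mul {E E' k : ℝ → ℝ} {a b : ℝ} (hab : a ≤ b)
    (hpos : ∀ x ∈ Icc a b, 0 < E x) (hcont : ContinuousOn E (Icc a b))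
    (hderiv : ∀ x ∈ Ioo a b, HasDerivWithinAt E (E' x) (Ioi x) x)
    (hk : IntegrableOn k (Icc a b)) (hle : ∀ x ∈ Ioo a b, E' x ≤ k x * E x) :
    E b ≤ E a * Real.exp (∫ x in a..b, k x) := by
  have ha := hpos a (left_mem_Icc.mpr hab)
  have hb := hpos b (right_mem_Icc.mpr hab)
  have hlog : Real.log (E b) - Real.log (E a) ≤ ∫ x in a..b, k x := by
    refine intervalIntegral.sub_le_integral_of_hasDeriv_right_of_le hab
      (hcont.log fun x hx ↦ (hpos x hx).ne')
      (fun x hx ↦ (hderiv x hx).log (hpos x (Ioo_subset_Icc_self hx)).ne') hk fun x hx ↦ ?_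
    exact (div_le_iff₀ (hpos x (Ioo_subset_Icc_self hx))).mpr (hle x hx)
  calc E b = Real.exp (Real.log (E a) + (Real.log (E b) - Real.log (E a))) := by
        rw [add_sub_cancel, Real.exp_log hb]
    _ ≤ Real.exp (Real.log (E a) + ∫ x in a..b, k x) := by gcongr
    _ = E a * Real.exp (∫ x in a..b, k x) := by rw [Real.exp_add, Real.exp_log ha]

theorem bddAbove_image_Ici_of_deriv_le_mul {E E' k : ℝ → ℝ} {a : ℝ} (hpos : ∀ x ∈ Ici a, 0 < E x)
    (hderiv : ∀ x ∈ Ici a, HasDerivWithinAt E (E' x) (Ici a) x)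
    (hk : IntegrableOn k (Ioi a)) (hk_nonneg : ∀ x ∈ Ioi a, 0 ≤ k x)
    (hle : ∀ x ∈ Ioi a, E' x ≤ k x * E x) : BddAbove (E '' Ici a) := by
  refine ⟨E a * Real.exp (∫ x in Ioi a, k x), forall_mem_image.mpr fun x hx ↦ ?_⟩
  have hgronwall : E x ≤ E a * Real.exp (∫ y in a..x, k y) :=
    le_mul_exp_integral_of_deriv_right_le_mul hx (fun y hy ↦ hpos y hy.1)
      (fun y hy ↦ (hderiv y hy.1).continuousWithinAt.mono Icc_subset_Ici_self)
      (fun y hy ↦ (hderiv y hy.1.le).mono (Ioi_subset_Ici hy.1.le))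
      ((Iff.mpr integrableOn_Ici_iff_integrableOn_Ioi hk).mono_set Icc_subset_Ici_self)
      (fun y hy ↦ hle y hy.1)
  have hintegral : ∫ y in a..x, k y ≤ ∫ y in Ioi a, k y := by
    rw [intervalIntegral.integral_of_le hx]
    exact setIntegral_mono_set hk
      (ae_restrict_of_forall_mem measurableSet_Ioi hk_nonneg)
      Ioc_subset_Ioi_self.eventuallyLE
  have := (hpos a self_mem_Ici).le
  exact hgronwall.trans (by gcongr)

theorem energy_deriv_le (lam u v f : ℝ) {b : ℝ} (hb : 0 < b) :
    2 * u * v + 2 * v * (lam * u - b * v - f) ≤ ((1 + lam) ^ 2 * u ^ 2 + f ^ 2) / b := by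
  have hsquares : ((1 + lam) ^ 2 * u ^ 2 + f ^ 2) / b
      - (2 * u * v + 2 * v * (lam * u - b * v - f))
      = (((1 + lam) * u - b * v) ^ 2 + (b * v + f) ^ 2) / b := by
    field_simp
    ring
  rw [← sub_nonneg, hsquares]
  positivity

section ResolventEquation

variable {b f u : ℝ → ℝ} {lam M : ℝ}

theorem IsExplosiveDrift.exists_bound_Ici {v : ℝ → ℝ} {a : ℝ} (hb : IsExplosiveDrift b a)
    (hf : ∀ x ∈ Ioi a, |f x| ≤ M) (hu : ∀ x ∈ Ici a, HasDerivWithinAt u (v x) (Ici a) x)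
    (hv : ∀ x ∈ Ici a, HasDerivWithinAt v (lam * u x - b x * v x - f x) (Ici a) x) :
    ∃ C, ∀ x ∈ Ici a, |u x| ≤ C := by
  let E : ℝ → ℝ := fun x ↦ u x ^ 2 + v x ^ 2 + (M ^ 2 + 1)
  let c : ℝ := (1 + lam) ^ 2 + 1
  have hderiv : ∀ x ∈ Ici a, HasDerivWithinAt E
      (2 * u x * v x + 2 * v x * (lam * u x - b x * v x - f x)) (Ici a) x := fun x hx ↦
    ((((hu x hx).pow 2).add ((hv x hx).pow 2)).add_const _).congr_deriv (by simp)
  have hle : ∀ x ∈ Ioi a, 2 * u x * v x + 2 * v x * (lam * u x - b x * v x - f x)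
      ≤ c * (b x)⁻¹ * E x := fun x hx ↦ by
    have hbx := hb.pos x hx
    have hfx : f x ^ 2 ≤ M ^ 2 := sq_le_sq.mpr ((hf x hx).trans (le_abs_self M))
    calc 2 * u x * v x + 2 * v x * (lam * u x - b x * v x - f x)
        ≤ ((1 + lam) ^ 2 * u x ^ 2 + f x ^ 2) / b x := energy_deriv_le lam (u x) (v x) (f x) hbx
      _ ≤ ((1 + lam) ^ 2 * E x + E x) / b x := by
          gcongr <;> simp only [E] <;> nlinarith [sq_nonneg (u x), sq_nonneg (v x), sq_nonneg M]
      _ = c * (b x)⁻¹ * E x := by ring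
  obtain ⟨C, hC⟩ := bddAbove_image_Ici_of_deriv_le_mul (fun x _ ↦ by positivity) hderiv
    (hb.integrableOn_inv.const_mul c)
    (fun x hx ↦ mul_nonneg (by positivity) (inv_pos.mpr (hb.pos x hx)).le) hle
  refine ⟨√C, fun x hx ↦ Real.abs_le_sqrt ?_⟩
  calc u x ^ 2 ≤ E x := by simp only [E]; nlinarith [sq_nonneg (v x), sq_nonneg M]
    _ ≤ C := hC (mem_image_of_mem E hx)

theorem IsExplosiveDrift.exists_bound_Iic {v : ℝ → ℝ} {a : ℝ}
    (hb : IsExplosiveDrift (fun x ↦ -b (-x)) (-a))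
    (hf : ∀ x ∈ Iio a, |f x| ≤ M) (hu : ∀ x ∈ Iic a, HasDerivWithinAt u (v x) (Iic a) x)
    (hv : ∀ x ∈ Iic a, HasDerivWithinAt v (lam * u x - b x * v x - f x) (Iic a) x) :
    ∃ C, ∀ x ∈ Iic a, |u x| ≤ C := by
  have hmaps : MapsTo Neg.neg (Ici (-a)) (Iic a) := fun _ hx ↦ neg_le.mp (mem_Ici.mp hx)
  have hneg : ∀ x, HasDerivWithinAt Neg.neg (-1) (Ici (-a)) x := fun x ↦ hasDerivWithinAt_neg x _
  obtain ⟨C, hC⟩ := hb.exists_bound_Ici (f := f ∘ Neg.neg) (u := u ∘ Neg.neg) (lam := lam)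
    (v := fun x ↦ -(v ∘ Neg.neg) x) (fun x hx ↦ hf (-x) (neg_lt.mp (mem_Ioi.mp hx)))
    (fun x hx ↦ ((hu _ (hmaps hx)).comp x (hneg x) hmaps).congr_deriv
      (by simp only [Function.comp_apply]; ring))
    (fun x hx ↦ ((hv _ (hmaps hx)).comp x (hneg x) hmaps).neg.congr_deriv
      (by simp only [Function.comp_apply]; ring))
  exact ⟨C, fun x hx ↦ by simpa using hC (-x) (neg_le_neg (mem_Iic.mp hx))⟩

theorem solutions_of_resolvent_equation_are_bounded_general {l r : ℝ}
    (hl : IsExplosiveDrift (fun x ↦ -b (-x)) (-l)) (hr : IsExplosiveDrift b r)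
    (hf : ∃ M, ∀ x, |f x| ≤ M) (hu : Differentiable ℝ u) (hu' : Differentiable ℝ (deriv u))
    (heq : ∀ x, lam * u x - deriv (deriv u) x - b x * deriv u x = f x) :
    ∃ M, ∀ x, |u x| ≤ M := by
  obtain ⟨M, hM⟩ := hf
  have hu₁ (x : ℝ) : HasDerivAt u (deriv u x) x := (hu x).hasDerivAt
  have hu₂ (x : ℝ) : HasDerivAt (deriv u) (lam * u x - b x * deriv u x - f x) x :=
    (hu' x).hasDerivAt.congr_deriv (by linarith [heq x])
  obtain ⟨A, hA⟩ := hl.exists_bound_Iic (fun x _ ↦ hM x)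
    (fun x _ ↦ (hu₁ x).hasDerivWithinAt) (fun x _ ↦ (hu₂ x).hasDerivWithinAt)
  obtain ⟨B, hB⟩ := isCompact_Icc.exists_bound_of_continuousOn
    (hu.continuous.continuousOn (s := Icc l r))
  obtain ⟨C, hC⟩ := hr.exists_bound_Ici (fun x _ ↦ hM x)
    (fun x _ ↦ (hu₁ x).hasDerivWithinAt) (fun x _ ↦ (hu₂ x).hasDerivWithinAt)
  refine ⟨max A (max B C), fun x ↦ ?_⟩
  rcases le_total x l with hxl | hlx
  · exact le_max_of_le_left (hA x hxl)
  rcases le_total x r with hxr | hrx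
  · exact le_max_of_le_right (le_max_of_le_left (hB x ⟨hlx, hxr⟩))
  · exact le_max_of_le_right (le_max_of_le_right (hC x hrx))

end ResolventEquation

/-- every `C²` solution of `u − u'' − x³u' = f`, with `f` bounded and
continuous, is bounded on `ℝ`. -/
theorem solutions_of_resolvent_equation_are_bounded
    (f : ℝ → ℝ) (hfc : Continuous f) (hfb : ∃ M, ∀ x, |f x| ≤ M)
    (u : ℝ → ℝ) (hu : ContDiff ℝ 2 u)
    (heq : ∀ x : ℝ, u x - deriv (deriv u) x - x ^ 3 * deriv u x = f x) :
    ∃ M, ∀ x, |u x| ≤ M := by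
  have hdrift : IsExplosiveDrift (fun x ↦ x ^ 3) 1 := isExplosiveDrift_pow (by norm_num) one_pos
  exact solutions_of_resolvent_equation_are_bounded_general (l := -1) (lam := 1)
    (by simpa [Odd.neg_pow (by decide : Odd 3)] using hdrift) hdrift hfb
    (hu.differentiable two_ne_zero) hu.differentiable_deriv_two (by simpa using heq)
end
end

section
/- For every bounded continuous f : ℝ → ℝ, the set of bounded twice continuously differentiable functions u : ℝ → ℝ satisfying u(x) − u''(x) − x³u'(x) = f(x) for all x ∈ ℝ is infinite. -/
open Set Filter

noncomputable section

/-!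
Fix a drift `b` and let `S q` be the solution of `w'' + b w' = q` with `w 0 = w' 0 = 0`.
The operator `S` is linear and positive. If `h = S 1` is bounded (as it is when `b` grows so fast
that the diffusion reaches `±∞` in finite time), then `h'' + b h' = 1` gives
`(h ^ (n + 1) / (n + 1))'' + b (h ^ (n + 1) / (n + 1))' ≥ h ^ n`, hence `S ^ n 1 ≤ h ^ n / n!`.
So `S` is quasinilpotent on bounded continuous functions, and for every real `a` the equation
`u = a + S (μ u - f)` has a bounded solution. It solves `μ u - u'' - b u' = f` with `u 0 = a`.
For `b x = x ^ 3`, the function `2 arctan (x ^ 2 / 2)` is a bounded supersolution, which bounds `h`.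
-/

open scoped BoundedContinuousFunction Nat

section Primitive

/-- The Volterra operator: the primitive, vanishing at `0`, of a continuous function. -/
def primitive : C(ℝ, ℝ) →ₗ[ℝ] C(ℝ, ℝ) where
  toFun q := ⟨fun x ↦ ∫ t in 0..x, q t, intervalIntegral.continuous_primitive
    (fun _ _ ↦ q.continuous.intervalIntegrable _ _) 0⟩
  map_add' p q := ContinuousMap.ext fun _ ↦ intervalIntegral.integral_add
    (p.continuous.intervalIntegrable _ _) (q.continuous.intervalIntegrable _ _)
  map_smul' c q := ContinuousMap.ext fun _ ↦ intervalIntegral.integral_const_mul c q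

lemma primitive_apply (q : C(ℝ, ℝ)) (x : ℝ) : primitive q x = ∫ t in 0..x, q t := rfl

lemma primitive_zero_right (q : C(ℝ, ℝ)) : primitive q 0 = 0 := intervalIntegral.integral_same

lemma hasDerivAt_primitive (q : C(ℝ, ℝ)) (x : ℝ) : HasDerivAt (primitive q) (q x) x :=
  (q.continuous.integral_hasStrictDerivAt 0 x).hasDerivAt

lemma primitive_eq_sub {v : ℝ → ℝ} {q : C(ℝ, ℝ)} (hv : ∀ x, HasDerivAt v (q x) x) (x : ℝ) :
    primitive q x = v x - v 0 :=
  intervalIntegral.integral_eq_sub_of_hasDerivAt (fun y _ ↦ hv y)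
    (q.continuous.intervalIntegrable _ _)

lemma mul_primitive_nonneg {q : C(ℝ, ℝ)} (hq : 0 ≤ q) (x : ℝ) : 0 ≤ x * primitive q x := by
  rcases le_total 0 x with hx | hx
  · exact mul_nonneg hx (intervalIntegral.integral_nonneg hx fun y _ ↦ hq y)
  · rw [primitive_apply, intervalIntegral.integral_symm]
    exact mul_nonneg_of_nonpos_of_nonpos hx
      (neg_nonpos.2 (intervalIntegral.integral_nonneg hx fun y _ ↦ hq y))

lemma primitive_nonneg_of_mul_nonneg {q : C(ℝ, ℝ)} (hq : ∀ x, 0 ≤ x * q x) (x : ℝ) :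
    0 ≤ primitive q x := by
  rcases le_total 0 x with hx | hx
  · have hpos (y : ℝ) (hy : y ∈ Ioo 0 x) : 0 ≤ q y := nonneg_of_mul_nonneg_right (hq y) hy.1
    rw [primitive_apply, intervalIntegral.integral_of_le hx,
      MeasureTheory.integral_Ioc_eq_integral_Ioo]
    exact MeasureTheory.setIntegral_nonneg measurableSet_Ioo hpos
  · have hneg (y : ℝ) (hy : y ∈ Ioo x 0) : q y ≤ 0 :=
      nonpos_of_mul_nonneg_right (hq y) hy.2
    rw [primitive_apply, intervalIntegral.integral_of_ge hx,
      MeasureTheory.integral_Ioc_eq_integral_Ioo, neg_nonneg]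
    exact MeasureTheory.setIntegral_nonpos measurableSet_Ioo hneg

end Primitive

section DriftSolution

variable (b : C(ℝ, ℝ))

/-- The integrating factor `ρ = exp (∫ b)` of the operator `w ↦ w'' + b w'`, for which
`ρ (w'' + b w') = (ρ w')'`. Its inverse is `integratingFactor (-b)`. -/
def integratingFactor : C(ℝ, ℝ) := ⟨fun x ↦ Real.exp (primitive b x), by fun_prop⟩

lemma integratingFactor_pos (x : ℝ) : 0 < integratingFactor b x := Real.exp_pos _

lemma integratingFactor_neg_mul_self (x : ℝ) :
    integratingFactor (-b) x * integratingFactor b x = 1 := by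
  simp [integratingFactor, ← Real.exp_add]

lemma hasDerivAt_integratingFactor (x : ℝ) :
    HasDerivAt (integratingFactor b) (integratingFactor b x * b x) x :=
  (hasDerivAt_primitive b x).exp

/-- The derivative `w'` of the solution `w` of `w'' + b w' = q`, `w 0 = w' 0 = 0`. -/
def driftSolutionDeriv : C(ℝ, ℝ) →ₗ[ℝ] C(ℝ, ℝ) :=
  LinearMap.mulLeft ℝ (integratingFactor (-b)) ∘ₗ primitive ∘ₗ
    LinearMap.mulLeft ℝ (integratingFactor b)

/-- The solution operator `q ↦ w` of the Cauchy problem `w'' + b w' = q`, `w 0 = w' 0 = 0`. -/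
def driftSolution : C(ℝ, ℝ) →ₗ[ℝ] C(ℝ, ℝ) := primitive ∘ₗ driftSolutionDeriv b

lemma driftSolutionDeriv_apply (q : C(ℝ, ℝ)) (x : ℝ) :
    driftSolutionDeriv b q x =
      integratingFactor (-b) x * primitive (integratingFactor b * q) x := rfl

lemma driftSolutionDeriv_zero_right (q : C(ℝ, ℝ)) : driftSolutionDeriv b q 0 = 0 := by
  rw [driftSolutionDeriv_apply, primitive_zero_right, mul_zero]

lemma driftSolution_zero_right (q : C(ℝ, ℝ)) : driftSolution b q 0 = 0 :=
  primitive_zero_right _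

lemma hasDerivAt_driftSolution (q : C(ℝ, ℝ)) (x : ℝ) :
    HasDerivAt (driftSolution b q) (driftSolutionDeriv b q x) x :=
  hasDerivAt_primitive _ x

lemma hasDerivAt_driftSolutionDeriv (q : C(ℝ, ℝ)) (x : ℝ) :
    HasDerivAt (driftSolutionDeriv b q) (q x - b x * driftSolutionDeriv b q x) x := by
  refine ((hasDerivAt_integratingFactor (-b) x).mul
    (hasDerivAt_primitive (integratingFactor b * q) x)).congr_deriv ?_
  simp only [driftSolutionDeriv_apply, ContinuousMap.mul_apply, ContinuousMap.neg_apply]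
  linear_combination q x * integratingFactor_neg_mul_self b x

lemma deriv_driftSolution (q : C(ℝ, ℝ)) : deriv (driftSolution b q) = driftSolutionDeriv b q :=
  funext fun x ↦ (hasDerivAt_driftSolution b q x).deriv

lemma deriv_driftSolutionDeriv (q : C(ℝ, ℝ)) :
    deriv (driftSolutionDeriv b q) = ⇑(q - b * driftSolutionDeriv b q) :=
  funext fun x ↦ (hasDerivAt_driftSolutionDeriv b q x).deriv

lemma deriv_deriv_driftSolution_add (q : C(ℝ, ℝ)) (x : ℝ) :
    deriv (deriv (driftSolution b q)) x + b x * deriv (driftSolution b q) x = q x := by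
  rw [deriv_driftSolution, deriv_driftSolutionDeriv]
  exact sub_add_cancel _ _

lemma contDiff_driftSolution (q : C(ℝ, ℝ)) : ContDiff ℝ 2 (driftSolution b q) := by
  rw [← one_add_one_eq_two, contDiff_succ_iff_deriv, deriv_driftSolution]
  refine ⟨fun x ↦ (hasDerivAt_driftSolution b q x).differentiableAt, by simp, ?_⟩
  rw [contDiff_one_iff_deriv, deriv_driftSolutionDeriv]
  exact ⟨fun x ↦ (hasDerivAt_driftSolutionDeriv b q x).differentiableAt, map_continuous _⟩

variable {b}

lemma driftSolution_eq_sub {v v' : ℝ → ℝ} {q : C(ℝ, ℝ)} (hv : ∀ x, HasDerivAt v (v' x) x)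
    (hv' : ∀ x, HasDerivAt v' (q x - b x * v' x) x) (h0 : v' 0 = 0) (x : ℝ) :
    driftSolution b q x = v x - v 0 := by
  have hweighted (y : ℝ) :
      HasDerivAt (fun z ↦ integratingFactor b z * v' z) ((integratingFactor b * q) y) y := by
    refine ((hasDerivAt_integratingFactor b y).mul (hv' y)).congr_deriv ?_
    rw [ContinuousMap.mul_apply]
    ring
  have hderiv (y : ℝ) : driftSolutionDeriv b q y = v' y := by
    rw [driftSolutionDeriv_apply, primitive_eq_sub hweighted, h0]
    linear_combination v' y * integratingFactor_neg_mul_self b y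
  exact primitive_eq_sub (fun y ↦ (hv y).congr_deriv (hderiv y).symm) x

lemma driftSolution_nonneg {q : C(ℝ, ℝ)} (hq : 0 ≤ q) (x : ℝ) : 0 ≤ driftSolution b q x := by
  refine primitive_nonneg_of_mul_nonneg (fun y ↦ ?_) x
  have hρq : 0 ≤ integratingFactor b * q :=
    fun z ↦ mul_nonneg (integratingFactor_pos b z).le (hq z)
  rw [driftSolutionDeriv_apply, mul_left_comm]
  exact mul_nonneg (integratingFactor_pos (-b) y).le (mul_primitive_nonneg hρq y)

lemma driftSolution_mono : Monotone (driftSolution b) := fun p q hpq x ↦ by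
  simpa using driftSolution_nonneg (b := b) (sub_nonneg.2 hpq) x

lemma abs_driftSolution_le {q g : C(ℝ, ℝ)} (h : ∀ x, |q x| ≤ g x) (x : ℝ) :
    |driftSolution b q x| ≤ driftSolution b g x := by
  have lower := driftSolution_mono (b := b) (show -g ≤ q from fun y ↦ (abs_le.1 (h y)).1) x
  have upper := driftSolution_mono (b := b) (show q ≤ g from fun y ↦ (abs_le.1 (h y)).2) x
  rw [map_neg] at lower
  exact abs_le.2 ⟨lower, upper⟩

lemma driftSolution_one_pow_le (n : ℕ) (x : ℝ) :
    driftSolution b (driftSolution b 1 ^ n) x ≤ driftSolution b 1 x ^ (n + 1) / (n + 1) := by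
  set h := driftSolution b 1
  set h' := driftSolutionDeriv b 1
  have hh (y : ℝ) : HasDerivAt h (h' y) y := hasDerivAt_driftSolution b 1 y
  have hh' (y : ℝ) : HasDerivAt h' (1 - b y * h' y) y := hasDerivAt_driftSolutionDeriv b 1 y
  let g : C(ℝ, ℝ) := h ^ n + n * h ^ (n - 1) * h' ^ 2
  have hle : h ^ n ≤ g := fun y ↦ by
    have : 0 ≤ h y := driftSolution_nonneg zero_le_one y
    have : 0 ≤ n * h y ^ (n - 1) * h' y ^ 2 := by positivity
    simpa [g] using this
  calc driftSolution b (h ^ n) x ≤ driftSolution b g x := driftSolution_mono hle x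
    _ = h x ^ (n + 1) / (n + 1) - h 0 ^ (n + 1) / (n + 1) := by
      refine driftSolution_eq_sub (v := fun y ↦ h y ^ (n + 1) / (n + 1))
        (v' := fun y ↦ h y ^ n * h' y) (fun y ↦ ?_) (fun y ↦ ?_) ?_ x
      · refine (((hh y).pow (n + 1)).div_const _).congr_deriv ?_
        push_cast [Nat.add_sub_cancel]
        field_simp
      · refine (((hh y).pow n).mul (hh' y)).congr_deriv ?_
        change n * h y ^ (n - 1) * h' y * h' y + h y ^ n * (1 - b y * h' y)
          = h y ^ n + n * h y ^ (n - 1) * h' y ^ 2 - b y * (h y ^ n * h' y)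
        ring
      · simp only [h', driftSolutionDeriv_zero_right, mul_zero]
    _ = h x ^ (n + 1) / (n + 1) := by simp [h, driftSolution_zero_right]

lemma abs_driftSolution_le_pow {q : C(ℝ, ℝ)} {C : ℝ} {n : ℕ}
    (hq : ∀ x, |q x| ≤ C * (driftSolution b 1 x ^ n / n !)) (hC : 0 ≤ C) (x : ℝ) :
    |driftSolution b q x| ≤ C * (driftSolution b 1 x ^ (n + 1) / (n + 1)!) := by
  calc |driftSolution b q x|
      ≤ driftSolution b ((C / n !) • driftSolution b 1 ^ n) x :=
        abs_driftSolution_le (fun y ↦ (hq y).trans_eq <| by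
          rw [ContinuousMap.smul_apply, ContinuousMap.pow_apply, smul_eq_mul]; ring) x
    _ = C / n ! * driftSolution b (driftSolution b 1 ^ n) x := by
        rw [map_smul, ContinuousMap.smul_apply, smul_eq_mul]
    _ ≤ C / n ! * (driftSolution b 1 x ^ (n + 1) / (n + 1)) := by
        gcongr
        exact driftSolution_one_pow_le n x
    _ = C * (driftSolution b 1 x ^ (n + 1) / (n + 1)!) := by
        rw [Nat.factorial_succ]
        push_cast
        field_simp

end DriftSolution

section BoundedDriftSolution

variable {b : C(ℝ, ℝ)} {M : ℝ}

lemma abs_driftSolution_le_mul_norm (hM : ∀ x, driftSolution b 1 x ≤ M) (q : ℝ →ᵇ ℝ) (x : ℝ) :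
    |driftSolution b q x| ≤ M * ‖q‖ := by
  have := abs_driftSolution_le_pow (b := b) (q := q) (n := 0)
    (fun y ↦ by simpa using q.norm_coe_le_norm y) (norm_nonneg q) x
  calc |driftSolution b q x| ≤ ‖q‖ * driftSolution b 1 x := by simpa using this
    _ ≤ ‖q‖ * M := by gcongr; exact hM x
    _ = M * ‖q‖ := mul_comm _ _

/-- The solution operator `driftSolution b` on bounded continuous functions; it preserves
boundedness as soon as its value at the constant `1` is bounded. -/
def boundedDriftSolution (hM : ∀ x, driftSolution b 1 x ≤ M) : (ℝ →ᵇ ℝ) →L[ℝ] (ℝ →ᵇ ℝ) :=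
  LinearMap.mkContinuous
    { toFun := fun q ↦ .ofNormedAddCommGroup (driftSolution b q) (map_continuous _) (M * ‖q‖)
        (abs_driftSolution_le_mul_norm hM q)
      map_add' := fun p q ↦ BoundedContinuousFunction.ext fun x ↦
        DFunLike.congr_fun (map_add (driftSolution b) p.toContinuousMap q.toContinuousMap) x
      map_smul' := fun c q ↦ BoundedContinuousFunction.ext fun x ↦
        DFunLike.congr_fun (map_smul (driftSolution b) c q.toContinuousMap) x }
    M fun q ↦ BoundedContinuousFunction.norm_ofNormedAddCommGroup_le _
      ((abs_nonneg _).trans (abs_driftSolution_le_mul_norm hM q 0))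
      (abs_driftSolution_le_mul_norm hM q)

lemma boundedDriftSolution_apply (hM : ∀ x, driftSolution b 1 x ≤ M) (q : ℝ →ᵇ ℝ) (x : ℝ) :
    boundedDriftSolution hM q x = driftSolution b q x := rfl

lemma abs_boundedDriftSolution_pow_le (hM : ∀ x, driftSolution b 1 x ≤ M) (n : ℕ)
    (q : ℝ →ᵇ ℝ) (x : ℝ) :
    |(boundedDriftSolution hM ^ n) q x| ≤ ‖q‖ * (driftSolution b 1 x ^ n / n !) := by
  induction n generalizing x with
  | zero => simpa using q.norm_coe_le_norm x
  | succ n ih =>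
    rw [pow_succ', mul_apply_eq_comp, boundedDriftSolution_apply]
    exact abs_driftSolution_le_pow ih (norm_nonneg q) x

lemma norm_boundedDriftSolution_pow_le (hM : ∀ x, driftSolution b 1 x ≤ M) (n : ℕ) :
    ‖boundedDriftSolution hM ^ n‖ ≤ M ^ n / n ! := by
  have h_nonneg (x : ℝ) : 0 ≤ driftSolution b 1 x := driftSolution_nonneg zero_le_one x
  have hM0 : 0 ≤ M := (h_nonneg 0).trans (hM 0)
  refine ContinuousLinearMap.opNorm_le_bound _ (by positivity) fun q ↦ ?_
  refine (BoundedContinuousFunction.norm_le (by positivity)).2 fun x ↦ ?_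
  calc ‖(boundedDriftSolution hM ^ n) q x‖
      ≤ ‖q‖ * (driftSolution b 1 x ^ n / n !) := abs_boundedDriftSolution_pow_le hM n q x
    _ ≤ ‖q‖ * (M ^ n / n !) := by
        gcongr
        exacts [h_nonneg x, hM x]
    _ = M ^ n / n ! * ‖q‖ := mul_comm _ _

end BoundedDriftSolution

section Quasinilpotent

variable {A : Type*} [NormedRing A] [HasSummableGeomSeries A]

lemma isUnit_one_sub_of_norm_pow_lt_one {T : A} {n : ℕ} (h : ‖T ^ n‖ < 1) : IsUnit (1 - T) := by
  have hfactor : IsUnit ((1 - T) * ∑ i ∈ Finset.range n, T ^ i) := by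
    rw [mul_neg_geom_sum]
    exact isUnit_one_sub_of_norm_lt_one h
  have hcomm : Commute (1 - T) (∑ i ∈ Finset.range n, T ^ i) :=
    Commute.sum_right _ _ _ fun i _ ↦ ((Commute.one_left _).sub_left (Commute.self_pow T i))
  exact (hcomm.isUnit_mul_iff.1 hfactor).1

lemma isUnit_one_sub_smul_of_norm_pow_le [NormedAlgebra ℝ A] {T : A} {M : ℝ}
    (hT : ∀ n : ℕ, ‖T ^ n‖ ≤ M ^ n / n !) (μ : ℝ) : IsUnit (1 - μ • T) := by
  obtain ⟨n, hn⟩ := ((FloorSemiring.tendsto_pow_div_factorial_atTop (|μ| * M)).eventually_lt_const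
    zero_lt_one).exists
  refine isUnit_one_sub_of_norm_pow_lt_one (n := n) ?_
  calc ‖(μ • T) ^ n‖ = |μ| ^ n * ‖T ^ n‖ := by
        rw [smul_pow, norm_smul, norm_pow, Real.norm_eq_abs]
    _ ≤ |μ| ^ n * (M ^ n / n !) := by gcongr; exact hT n
    _ = (|μ| * M) ^ n / n ! := by ring
    _ < 1 := hn

end Quasinilpotent

lemma exists_eq_const_add_driftSolution {b : C(ℝ, ℝ)}
    (hb : BddAbove (range (driftSolution b 1))) (μ : ℝ) (f : ℝ →ᵇ ℝ) (a : ℝ) :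
    ∃ u : ℝ →ᵇ ℝ, ∀ x, u x = a + driftSolution b (μ • u - f : ℝ →ᵇ ℝ) x := by
  obtain ⟨M, hM⟩ := hb
  let S := boundedDriftSolution (b := b) (forall_mem_range.1 hM)
  have hunit : IsUnit (1 - μ • S) :=
    isUnit_one_sub_smul_of_norm_pow_le (T := S) (norm_boundedDriftSolution_pow_le _) μ
  obtain ⟨R, hR⟩ := hunit.exists_right_inv
  let c := BoundedContinuousFunction.const ℝ a
  let u := R (c - S f)
  have hu : u = c + S (μ • u - f) := by
    have : u - μ • S u = c - S f := DFunLike.congr_fun hR (c - S f)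
    rw [map_sub, map_smul, add_sub, add_sub_right_comm, ← this, sub_add_cancel]
  exact ⟨u, DFunLike.congr_fun hu⟩

theorem infinitely_many_bounded_solutions_general {b : C(ℝ, ℝ)}
    (hb : BddAbove (range (driftSolution b 1))) (μ : ℝ) (f : ℝ →ᵇ ℝ) :
    {u : ℝ → ℝ | ContDiff ℝ 2 u ∧ (∃ M, ∀ x, |u x| ≤ M) ∧
      (∀ x : ℝ, μ * u x - deriv (deriv u) x - b x * deriv u x = f x)}.Infinite := by
  choose u hu using exists_eq_const_add_driftSolution hb μ f
  have hu0 (a : ℝ) : u a 0 = a := by rw [hu, driftSolution_zero_right, add_zero]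
  refine infinite_of_injective_forall_mem (f := fun a ↦ ⇑(u a)) (fun a₁ a₂ h ↦ ?_) fun a ↦ ?_
  · rw [← hu0 a₁, ← hu0 a₂]
    exact congrFun h 0
  · let q : ℝ →ᵇ ℝ := μ • u a - f
    have hua : ⇑(u a) = fun x ↦ a + driftSolution b q x := funext (hu a)
    refine ⟨hua ▸ contDiff_const.add (contDiff_driftSolution b q),
      ⟨‖u a‖, (u a).norm_coe_le_norm⟩, fun x ↦ ?_⟩
    have hderiv : deriv (u a) = deriv (driftSolution b q) := by
      rw [hua, deriv_const_add']
    have hode : deriv (deriv (driftSolution b q)) x + b x * deriv (driftSolution b q) x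
        = μ * u a x - f x := deriv_deriv_driftSolution_add b q x
    rw [hderiv]
    linarith

section CubicDrift

/-- The drift coefficient `x ^ 3` of the operator `A₊`. -/
def cubicDrift : C(ℝ, ℝ) := ⟨fun x ↦ x ^ 3, by fun_prop⟩

lemma hasDerivAt_two_mul_arctan_sq_div_two (x : ℝ) :
    HasDerivAt (fun y : ℝ ↦ 2 * Real.arctan (y ^ 2 / 2)) (8 * x / (4 + x ^ 4)) x := by
  refine ((((hasDerivAt_pow 2 x).div_const 2).arctan).const_mul 2).congr_deriv ?_
  field_simp
  ring

lemma hasDerivAt_eight_mul_div_four_add_pow (x : ℝ) :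
    HasDerivAt (fun y : ℝ ↦ 8 * y / (4 + y ^ 4))
      ((32 + 8 * x ^ 4 + 8 * x ^ 8) / (4 + x ^ 4) ^ 2 - x ^ 3 * (8 * x / (4 + x ^ 4))) x := by
  refine (((hasDerivAt_id x).const_mul 8).div ((hasDerivAt_pow 4 x).const_add 4)
    (by positivity)).congr_deriv ?_
  simp only [id]
  field_simp
  ring

lemma bddAbove_range_driftSolution_cubicDrift_one :
    BddAbove (range (driftSolution cubicDrift 1)) := by
  let g : C(ℝ, ℝ) := ⟨fun x ↦ (32 + 8 * x ^ 4 + 8 * x ^ 8) / (4 + x ^ 4) ^ 2,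
    by fun_prop (disch := intro x; positivity)⟩
  have hg : 1 ≤ g := fun x ↦ by
    change 1 ≤ (32 + 8 * x ^ 4 + 8 * x ^ 8) / (4 + x ^ 4) ^ 2
    rw [one_le_div (by positivity)]
    nlinarith [sq_nonneg (x ^ 4)]
  refine ⟨Real.pi, forall_mem_range.2 fun x ↦ ?_⟩
  calc driftSolution cubicDrift 1 x ≤ driftSolution cubicDrift g x := driftSolution_mono hg x
    _ = 2 * Real.arctan (x ^ 2 / 2) - 2 * Real.arctan (0 ^ 2 / 2) :=
        driftSolution_eq_sub (b := cubicDrift) (q := g) hasDerivAt_two_mul_arctan_sq_div_two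
          hasDerivAt_eight_mul_div_four_add_pow (by norm_num) x
    _ ≤ Real.pi := by
        simp only [ne_eq, OfNat.ofNat_ne_zero, not_false_eq_true, zero_pow, zero_div,
          Real.arctan_zero, mul_zero, sub_zero]
        linarith [Real.arctan_lt_pi_div_two (x ^ 2 / 2)]

end CubicDrift

/-- for every bounded continuous `f`, the resolvent equation
`u − u'' − x³u' = f` has infinitely many bounded `C²` solutions. -/
theorem infinitely_many_bounded_solutions
    (f : ℝ → ℝ) (hfc : Continuous f) (hfb : ∃ M, ∀ x, |f x| ≤ M) :
    {u : ℝ → ℝ | ContDiff ℝ 2 u ∧ (∃ M, ∀ x, |u x| ≤ M) ∧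
      (∀ x : ℝ, u x - deriv (deriv u) x - x ^ 3 * deriv u x = f x)}.Infinite := by
  obtain ⟨M, hM⟩ := hfb
  have h := infinitely_many_bounded_solutions_general
    bddAbove_range_driftSolution_cubicDrift_one 1 (.ofNormedAddCommGroup f hfc M hM)
  simp only [one_mul] at h
  exact h
end
end

section
/- The function R₊ : ℝ → ℝ defined by R₊(x) = e^{−x⁴/4} ∫₀^x e^{s⁴/4} ds is Lebesgue integrable on (0,+∞) and on (−∞,0); i.e. R₊ ∈ L¹((−∞,0)) ∩ L¹((0,+∞)). -/
open Set Filter MeasureTheory intervalIntegral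

noncomputable section

/-!
The substitution `s = x t` turns the Feller function of a potential `Q` into
`x * ∫ t in 0..1, exp (Q (x t) - Q x)`. If `Q` is convex, then on the segment from `0` to `x` it
lies below its chord, so the exponent is at most `-(1 - t) (Q x - Q 0)` and the integral at most
`1 / (Q x - Q 0)`. Hence `|R x| ≤ |x| / (Q x - Q 0)` on both half-lines at once; for the quartic
potential this decays like `|x|⁻³`.
-/

open Asymptotics Bornology Real

/-- The Feller function of the potential `Q`, attached to the operator `ψ ↦ ψ'' + Q' ψ'` on the
line. It is based at `0`; the function `R₊` is the case `Q s = s ^ 4 / 4`. -/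
def fellerFunction (Q : ℝ → ℝ) (x : ℝ) : ℝ :=
  exp (-Q x) * ∫ s in (0 : ℝ)..x, exp (Q s)

lemma fellerFunction_eq_mul_integral (Q : ℝ → ℝ) (x : ℝ) :
    fellerFunction Q x = x * ∫ t in (0 : ℝ)..1, exp (Q (x * t) - Q x) := by
  have hsubst : x * ∫ t in (0 : ℝ)..1, exp (Q (x * t)) = ∫ s in (0 : ℝ)..x, exp (Q s) := by
    simpa only [mul_zero, mul_one] using
      mul_integral_comp_mul_left (a := 0) (b := 1) (f := fun s ↦ exp (Q s)) x
  simp only [fellerFunction, sub_eq_neg_add, exp_add, intervalIntegral.integral_const_mul, ← hsubst]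
  ring

lemma continuous_fellerFunction {Q : ℝ → ℝ} (hQ : Continuous Q) :
    Continuous (fellerFunction Q) := by
  have hprim : Continuous fun x ↦ ∫ s in (0 : ℝ)..x, exp (Q s) :=
    continuous_primitive (fun a b ↦ hQ.rexp.intervalIntegrable a b) 0
  exact hQ.neg.rexp.mul hprim

lemma integral_exp_mul_sub_le_inv {c : ℝ} (hc : 0 < c) :
    ∫ t in (0 : ℝ)..1, exp (c * t - c) ≤ c⁻¹ := by
  rw [integral_comp_mul_sub exp hc.ne', integral_exp, smul_eq_mul, mul_one, sub_self, exp_zero]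
  exact mul_le_of_le_one_right (inv_nonneg.2 hc.le) (sub_le_self _ (exp_pos _).le)

section ConvexPotential

variable {Q : ℝ → ℝ}

lemma sub_le_mul_sub_of_convexOn (hQ : ConvexOn ℝ univ Q) {x t : ℝ} (ht : t ∈ Icc (0 : ℝ) 1) :
    Q (x * t) - Q x ≤ (Q x - Q 0) * t - (Q x - Q 0) := by
  have hchord := hQ.2 (mem_univ 0) (mem_univ x) (sub_nonneg.2 ht.2) ht.1 (sub_add_cancel 1 t)
  simp only [smul_eq_mul, mul_zero, zero_add, mul_comm t x] at hchord
  linarith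

lemma abs_fellerFunction_le_div (hQ : ConvexOn ℝ univ Q) {x : ℝ} (hx : Q 0 < Q x) :
    |fellerFunction Q x| ≤ |x| / (Q x - Q 0) := by
  have hcont : Continuous Q := continuousOn_univ.1 (hQ.continuousOn isOpen_univ)
  have hnonneg : 0 ≤ ∫ t in (0 : ℝ)..1, exp (Q (x * t) - Q x) :=
    integral_nonneg zero_le_one fun _ _ ↦ (exp_pos _).le
  rw [fellerFunction_eq_mul_integral, abs_mul, abs_of_nonneg hnonneg, div_eq_mul_inv]
  gcongr
  calc ∫ t in (0 : ℝ)..1, exp (Q (x * t) - Q x)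
      ≤ ∫ t in (0 : ℝ)..1, exp ((Q x - Q 0) * t - (Q x - Q 0)) :=
        integral_mono_on zero_le_one
          (Continuous.intervalIntegrable (by fun_prop) 0 1)
          (Continuous.intervalIntegrable (by fun_prop) 0 1)
          fun t ht ↦ exp_le_exp.2 (sub_le_mul_sub_of_convexOn hQ ht)
    _ ≤ (Q x - Q 0)⁻¹ := integral_exp_mul_sub_le_inv (sub_pos.2 hx)

theorem feller_function_integrable_general (hQ : ConvexOn ℝ univ Q)
    (hpos : ∀ᶠ x in cocompact ℝ, Q 0 < Q x)
    (hint : IntegrableAtFilter (fun x ↦ x / (Q x - Q 0)) (cocompact ℝ)) :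
    Integrable (fellerFunction Q) := by
  have hcont : Continuous Q := continuousOn_univ.1 (hQ.continuousOn isOpen_univ)
  have hbound : fellerFunction Q =O[cocompact ℝ] fun x ↦ x / (Q x - Q 0) := by
    refine .of_bound' (hpos.mono fun x hx ↦ ?_)
    simpa only [norm_eq_abs, abs_div, abs_of_pos (sub_pos.2 hx)] using
      abs_fellerFunction_le_div hQ hx
  exact (continuous_fellerFunction hcont).locallyIntegrable.integrable_of_isBigO_cocompact
    hbound hint

end ConvexPotential

lemma inv_pow_isBigO_inv_one_add_sq {n : ℕ} (hn : 2 ≤ n) :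
    (fun x : ℝ ↦ (x ^ n)⁻¹) =O[cocompact ℝ] fun x ↦ (1 + x ^ 2)⁻¹ := by
  rw [← Metric.cobounded_eq_cocompact]
  refine .of_bound 2 ((eventually_cobounded_le_norm 1).mono fun x hx ↦ ?_)
  have hsq : 1 + x ^ 2 ≤ 2 * ‖x‖ ^ n := by
    have hone : 1 ≤ ‖x‖ ^ n := one_le_pow₀ hx
    have hpow : x ^ 2 ≤ ‖x‖ ^ n := by
      simpa only [norm_eq_abs, sq_abs] using pow_le_pow_right₀ hx hn
    linarith
  rw [norm_inv, norm_inv, norm_pow, norm_of_nonneg (by positivity : 0 ≤ 1 + x ^ 2),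
    ← div_eq_mul_inv, le_div_iff₀ (by positivity), inv_mul_le_iff₀ (by positivity)]
  linarith

lemma integrableAtFilter_inv_pow_cocompact {n : ℕ} (hn : 2 ≤ n) :
    IntegrableAtFilter (fun x : ℝ ↦ (x ^ n)⁻¹) (cocompact ℝ) :=
  (inv_pow_isBigO_inv_one_add_sq hn).integrableAtFilter
    (by fun_prop : Measurable fun x : ℝ ↦ (x ^ n)⁻¹).aestronglyMeasurable.stronglyMeasurableAtFilter
    (integrable_inv_one_add_sq.integrableAtFilter _)

theorem integrable_fellerFunction_pow_div {n : ℕ} (hn : Even n) (hn2 : 2 < n) {c : ℝ}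
    (hc : 0 < c) : Integrable (fellerFunction fun s ↦ s ^ n / c) := by
  have hn0 : n ≠ 0 := by omega
  have hconv : ConvexOn ℝ univ fun s : ℝ ↦ s ^ n / c := by
    simpa only [smul_eq_mul, div_eq_inv_mul] using hn.convexOn_pow.smul (inv_nonneg.2 hc.le)
  apply feller_function_integrable_general hconv
  · rw [← Metric.cobounded_eq_cocompact]
    filter_upwards [eventually_ne_cobounded (0 : ℝ)] with x hx
    rw [zero_pow hn0, zero_div]
    exact div_pos (hn.pow_pos hx) hc
  · have hquot (x : ℝ) : x / (x ^ n / c - 0 ^ n / c) = c • (x ^ (n - 1))⁻¹ := by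
      obtain ⟨m, rfl⟩ := Nat.exists_eq_succ_of_ne_zero hn0
      rcases eq_or_ne x 0 with rfl | hx
      · simp [show m ≠ 0 by omega]
      · rw [zero_pow hn0, zero_div, sub_zero, Nat.succ_sub_one, smul_eq_mul, pow_succ]
        field_simp
    simp only [hquot]
    exact (integrableAtFilter_inv_pow_cocompact (by omega)).smul c

/-- the Feller function `R₊(x) = e^{−x⁴/4}∫₀^x e^{s⁴/4} ds` is Lebesgue
integrable on `(0,+∞)` and on `(−∞,0)`. -/
theorem feller_function_integrable :
    IntegrableOn (fun x : ℝ => Real.exp (-x ^ 4 / 4) * ∫ s in (0:ℝ)..x, Real.exp (s ^ 4 / 4))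
      (Ioi (0:ℝ)) volume ∧
    IntegrableOn (fun x : ℝ => Real.exp (-x ^ 4 / 4) * ∫ s in (0:ℝ)..x, Real.exp (s ^ 4 / 4))
      (Iio (0:ℝ)) volume := by
  simp only [neg_div]
  have hint : Integrable (fellerFunction fun s ↦ s ^ 4 / 4) :=
    integrable_fellerFunction_pow_div (by decide) (by norm_num) four_pos
  exact ⟨hint.integrableOn, hint.integrableOn⟩
end
end

section
/- Let ε > 0, λ > 0 and p ∈ [1,+∞), and let f : ℝ → ℝ be a smooth, compactly supported, nonnegative function which is not identically zero. Then there is no twice continuously differentiable function u : ℝ → ℝ satisfying λu(x) − u''(x) + x|x|^ε u'(x) = f(x) for all x ∈ ℝ and ∫_ℝ |u|^p dx < ∞. In other words, the equation λu − Au = f admits no solution in L^p(ℝ). -/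
open Set Filter MeasureTheory

noncomputable section

/-!
Let `u ∈ L^p` satisfy `λu - u'' + bu' ≥ 0`, where `b(x) ≥ κ x^(1 + ε)` for large `x`. Since `|u|` is
arbitrarily small at points arbitrarily far out on both sides, the minimum principle gives `u ≥ 0`.
For large `R` the function `ψ(x) = 1 + (R/x)^ε`, which lies between `1` and `2` on `[R, ∞)`, is a
subsolution there, because `ψ'' ≥ 0` and the superlinear drift makes `-bψ'` at least `κεR^ε`, hence
at least `λψ`. Comparing `u + δx` with `(u(R)/2) ψ` and letting `δ → 0` gives `u ≥ u(R)/2` on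
`[R, ∞)`, which integrability allows only if `u(R) = 0`. The strong minimum principle then forces
`u = 0`, so the right-hand side vanishes identically.
-/

/-- `v` is a supersolution of `λv - v'' + b v' = 0` on `s`. The two derivatives are quantified
existentially, so that differentiability is part of the notion; they are two-sided also at the
boundary points of `s`. -/
def IsSupersolutionOn (b : ℝ → ℝ) (lam : ℝ) (v : ℝ → ℝ) (s : Set ℝ) : Prop :=
  ∃ v' v'' : ℝ → ℝ, ∀ x ∈ s, HasDerivAt v (v' x) x ∧ HasDerivAt v' (v'' x) x ∧
    v'' x ≤ b x * v' x + lam * v x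

section DifferentialInequality

variable {g h h' : ℝ → ℝ} {s : Set ℝ} {x₀ x : ℝ}

lemma antitoneOn_exp_neg_integral_mul (hg : Continuous g) (hs : Convex ℝ s)
    (hderiv : ∀ x ∈ s, HasDerivAt h (h' x) x) (hle : ∀ x ∈ s, h' x ≤ g x * h x) :
    AntitoneOn (fun x => Real.exp (-∫ t in (0 : ℝ)..x, g t) * h x) s := by
  have hprod : ∀ x ∈ s, HasDerivAt (fun x => Real.exp (-∫ t in (0 : ℝ)..x, g t) * h x)
      (Real.exp (-∫ t in (0 : ℝ)..x, g t) * (h' x - g x * h x)) x := fun x hx =>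
    ((hg.integral_hasStrictDerivAt 0 x).hasDerivAt.neg.exp.mul (hderiv x hx)).congr_deriv (by
      simp only [Pi.neg_apply]; ring)
  refine antitoneOn_of_hasDerivWithinAt_nonpos hs
    (fun x hx => (hprod x hx).continuousAt.continuousWithinAt)
    (fun x hx => (hprod x (interior_subset hx)).hasDerivWithinAt) fun x hx => ?_
  exact mul_nonpos_of_nonneg_of_nonpos (Real.exp_pos _).le
    (sub_nonpos.2 (hle x (interior_subset hx)))

lemma nonpos_of_hasDerivAt_le_mul (hg : Continuous g) (hs : Convex ℝ s)
    (hderiv : ∀ x ∈ s, HasDerivAt h (h' x) x) (hle : ∀ x ∈ s, h' x ≤ g x * h x)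
    (hx₀ : x₀ ∈ s) (hx : x ∈ s) (hxx : x₀ ≤ x) (h₀ : h x₀ ≤ 0) : h x ≤ 0 := by
  have hanti := antitoneOn_exp_neg_integral_mul hg hs hderiv hle hx₀ hx hxx
  exact nonpos_of_mul_nonpos_right
    (hanti.trans (mul_nonpos_of_nonneg_of_nonpos (Real.exp_pos _).le h₀)) (Real.exp_pos _)

lemma nonneg_of_hasDerivAt_le_mul (hg : Continuous g) (hs : Convex ℝ s)
    (hderiv : ∀ x ∈ s, HasDerivAt h (h' x) x) (hle : ∀ x ∈ s, h' x ≤ g x * h x)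
    (hx₀ : x₀ ∈ s) (hx : x ∈ s) (hxx : x ≤ x₀) (h₀ : 0 ≤ h x₀) : 0 ≤ h x := by
  have hanti := antitoneOn_exp_neg_integral_mul hg hs hderiv hle hx hx₀ hxx
  exact nonneg_of_mul_nonneg_right ((mul_nonneg (Real.exp_pos _).le h₀).trans hanti)
    (Real.exp_pos _)

lemma eqOn_zero_of_hasDerivAt_mul_bounds (hg : Continuous g) (hs : Convex ℝ s)
    (hderiv : ∀ x ∈ s, HasDerivAt h (h' x) x) (hnonneg : ∀ x ∈ s, 0 ≤ h x)
    (hright : ∀ x ∈ s, x₀ ≤ x → h' x ≤ g x * h x) (hleft : ∀ x ∈ s, x ≤ x₀ → g x * h x ≤ h' x)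
    (hx₀ : x₀ ∈ s) (h₀ : h x₀ = 0) : EqOn h 0 s := by
  intro x hx
  refine le_antisymm ?_ (hnonneg x hx)
  rcases le_total x₀ x with hxx | hxx
  · exact nonpos_of_hasDerivAt_le_mul hg (hs.inter (convex_Ici x₀)) (fun y hy => hderiv y hy.1)
      (fun y hy => hright y hy.1 hy.2) ⟨hx₀, self_mem_Ici⟩ ⟨hx, hxx⟩ hxx h₀.le
  · exact neg_nonneg.1 <| nonneg_of_hasDerivAt_le_mul (h := fun x => -h x) hg
      (hs.inter (convex_Iic x₀)) (fun y hy => (hderiv y hy.1).neg)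
      (fun y hy => by linarith [hleft y hy.1 hy.2]) ⟨hx₀, self_mem_Iic⟩ ⟨hx, hxx⟩ hxx
      (neg_nonneg.2 h₀.le)

end DifferentialInequality

lemma isSupersolutionOn_const {b : ℝ → ℝ} {lam c : ℝ} (s : Set ℝ) (hc : 0 ≤ lam * c) :
    IsSupersolutionOn b lam (fun _ => c) s :=
  ⟨fun _ => 0, fun _ => 0, fun x _ =>
    ⟨hasDerivAt_const x c, hasDerivAt_const x 0, by simpa only [mul_zero, zero_add]⟩⟩

lemma isSupersolutionOn_id {b : ℝ → ℝ} {lam : ℝ} {s : Set ℝ}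
    (hs : ∀ x ∈ s, 0 ≤ b x + lam * x) : IsSupersolutionOn b lam (fun x => x) s :=
  ⟨fun _ => 1, fun _ => 0, fun x hx =>
    ⟨hasDerivAt_id x, hasDerivAt_const x 1, by simpa only [mul_one] using hs x hx⟩⟩

lemma isSupersolutionOn_univ_of_eq {b f u : ℝ → ℝ} {lam : ℝ} (hu : Differentiable ℝ u)
    (hu' : Differentiable ℝ (deriv u))
    (heq : ∀ x, lam * u x - deriv (deriv u) x + b x * deriv u x = f x) (hf : ∀ x, 0 ≤ f x) :
    IsSupersolutionOn b lam u univ :=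
  ⟨deriv u, deriv (deriv u), fun x _ =>
    ⟨(hu x).hasDerivAt, (hu' x).hasDerivAt, by linarith [heq x, hf x]⟩⟩

namespace IsSupersolutionOn

variable {b v w : ℝ → ℝ} {lam : ℝ} {s : Set ℝ}

lemma mono {t : Set ℝ} (hv : IsSupersolutionOn b lam v s) (hts : t ⊆ s) :
    IsSupersolutionOn b lam v t :=
  let ⟨v', v'', h⟩ := hv
  ⟨v', v'', fun x hx => h x (hts hx)⟩

lemma continuousOn (hv : IsSupersolutionOn b lam v s) : ContinuousOn v s :=
  let ⟨_, _, h⟩ := hv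
  fun x hx => (h x hx).1.continuousAt.continuousWithinAt

lemma add (hv : IsSupersolutionOn b lam v s) (hw : IsSupersolutionOn b lam w s) :
    IsSupersolutionOn b lam (fun x => v x + w x) s := by
  obtain ⟨v', v'', hv⟩ := hv
  obtain ⟨w', w'', hw⟩ := hw
  refine ⟨fun x => v' x + w' x, fun x => v'' x + w'' x, fun x hx => ?_⟩
  obtain ⟨hv₁, hv₂, hv₃⟩ := hv x hx
  obtain ⟨hw₁, hw₂, hw₃⟩ := hw x hx
  exact ⟨hv₁.add hw₁, hv₂.add hw₂, by linarith⟩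

lemma const_mul {c : ℝ} (hc : 0 ≤ c) (hv : IsSupersolutionOn b lam v s) :
    IsSupersolutionOn b lam (fun x => c * v x) s := by
  obtain ⟨v', v'', hv⟩ := hv
  refine ⟨fun x => c * v' x, fun x => c * v'' x, fun x hx => ?_⟩
  obtain ⟨hv₁, hv₂, hv₃⟩ := hv x hx
  exact ⟨hv₁.const_mul c, hv₂.const_mul c, by linarith [mul_le_mul_of_nonneg_left hv₃ hc]⟩

/- With `k` so large that `k² - bk - λ ≥ 0`, the function `v' - kv` satisfies a first order
differential inequality, which makes it nonpositive to the right and nonnegative to the left of a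
zero of `v`; this is in turn a first order differential inequality for `v`. -/
theorem eqOn_zero {α β x₀ : ℝ} (hv : IsSupersolutionOn b lam v (Icc α β)) (hb : Continuous b)
    (hnonneg : ∀ x ∈ Icc α β, 0 ≤ v x) (hx₀ : x₀ ∈ Ioo α β) (hzero : v x₀ = 0) :
    EqOn v 0 (Icc α β) := by
  obtain ⟨v', v'', hv⟩ := hv
  have hx₀' : x₀ ∈ Icc α β := Ioo_subset_Icc_self hx₀
  obtain ⟨C, hC⟩ := isCompact_Icc.bddAbove_image (hb.continuousOn (s := Icc α β))
  obtain ⟨k, hk⟩ : ∃ k, ∀ x ∈ Icc α β, lam ≤ k * (k - b x) := by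
    refine ⟨|C| + |lam| + 1, fun x hx => ?_⟩
    have hbC : b x ≤ |C| := (hC (mem_image_of_mem b hx)).trans (le_abs_self C)
    nlinarith [le_abs_self lam, abs_nonneg lam, abs_nonneg C]
  have hcrit : v' x₀ = 0 := by
    have hmin : IsLocalMin v x₀ := by
      filter_upwards [Icc_mem_nhds hx₀.1 hx₀.2] with x hx using hzero.trans_le (hnonneg x hx)
    exact hmin.hasDerivAt_eq_zero (hv x₀ hx₀').1
  have hstart : v' x₀ - k * v x₀ = 0 := by rw [hcrit, hzero, mul_zero, sub_zero]
  have hderiv : ∀ x ∈ Icc α β, HasDerivAt (fun x => v' x - k * v x) (v'' x - k * v' x) x :=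
    fun x hx => (hv x hx).2.1.sub ((hv x hx).1.const_mul k)
  have hle : ∀ x ∈ Icc α β, v'' x - k * v' x ≤ (b x - k) * (v' x - k * v x) := fun x hx => by
    linarith [(hv x hx).2.2, mul_nonneg (sub_nonneg.2 (hk x hx)) (hnonneg x hx)]
  have hbk : Continuous fun x => b x - k := hb.sub continuous_const
  refine eqOn_zero_of_hasDerivAt_mul_bounds (g := fun _ => k) continuous_const (convex_Icc α β)
    (fun x hx => (hv x hx).1) hnonneg (fun x hx hxx => sub_nonpos.1 ?_)
    (fun x hx hxx => sub_nonneg.1 ?_) hx₀' hzero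
  · exact nonpos_of_hasDerivAt_le_mul (h := fun x => v' x - k * v x) hbk (convex_Icc α β) hderiv
      hle hx₀' hx hxx hstart.le
  · exact nonneg_of_hasDerivAt_le_mul (h := fun x => v' x - k * v x) hbk (convex_Icc α β) hderiv
      hle hx₀' hx hxx hstart.ge

theorem nonneg_of_nonneg_endpoints {α β : ℝ} (hv : IsSupersolutionOn b lam v (Icc α β))
    (hb : Continuous b) (hlam : 0 ≤ lam) (hα : 0 ≤ v α) (hβ : 0 ≤ v β) :
    ∀ x ∈ Icc α β, 0 ≤ v x := by
  intro x hx
  obtain ⟨m, hm, hmin⟩ := isCompact_Icc.exists_isMinOn ⟨x, hx⟩ hv.continuousOn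
  by_contra! hneg
  have hvm : v m < 0 := (hmin hx).trans_lt hneg
  have hm' : m ∈ Ioo α β :=
    ⟨hm.1.lt_of_ne (by rintro rfl; exact hvm.not_ge hα),
      hm.2.lt_of_ne (by rintro rfl; exact hvm.not_ge hβ)⟩
  have hshift : IsSupersolutionOn b lam (fun x => v x + -v m) (Icc α β) :=
    hv.add (isSupersolutionOn_const _ (mul_nonneg hlam (neg_nonneg.2 hvm.le)))
  have hconst := hshift.eqOn_zero hb (fun y hy => le_add_neg_iff_le.2 (hmin hy)) hm'
    (add_neg_cancel _) (left_mem_Icc.2 (hm.1.trans hm.2))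
  simp only [Pi.zero_apply] at hconst
  linarith

theorem nonneg_of_frequently_neg_lt (hv : IsSupersolutionOn b lam v univ) (hb : Continuous b)
    (hlam : 0 ≤ lam) (htop : ∀ η > 0, ∃ᶠ y in atTop, -η < v y)
    (hbot : ∀ η > 0, ∃ᶠ y in atBot, -η < v y) (x : ℝ) : 0 ≤ v x := by
  refine le_of_forall_pos_le_add fun η hη => ?_
  obtain ⟨α, hα, hvα⟩ := frequently_atBot.1 (hbot η hη) x
  obtain ⟨β, hβ, hvβ⟩ := frequently_atTop.1 (htop η hη) x
  have hshift : IsSupersolutionOn b lam (fun x => v x + η) (Icc α β) :=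
    (hv.add (isSupersolutionOn_const univ (mul_nonneg hlam hη.le))).mono (subset_univ _)
  exact hshift.nonneg_of_nonneg_endpoints hb hlam (neg_le_iff_add_nonneg.1 hvα.le)
    (neg_le_iff_add_nonneg.1 hvβ.le) x ⟨hα, hβ⟩

end IsSupersolutionOn

section Superlinear

variable {b u : ℝ → ℝ} {lam ε κ R : ℝ}

lemma rpow_mul_rpow_neg_le_one (hε : 0 ≤ ε) (hR : 0 < R) {x : ℝ} (hx : R ≤ x) :
    R ^ ε * x ^ (-ε) ≤ 1 := by
  have hx₀ : 0 < x := hR.trans_le hx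
  rw [Real.rpow_neg hx₀.le, ← div_eq_mul_inv, div_le_one (Real.rpow_pos_of_pos hx₀ ε)]
  exact Real.rpow_le_rpow hR.le hx hε

lemma isSupersolutionOn_neg_barrier (hlam : 0 ≤ lam) (hε : 0 ≤ ε) (hR : 0 < R)
    (hRlam : 2 * lam ≤ κ * ε * R ^ ε) (hb : ∀ x ∈ Ici R, κ * x ^ (1 + ε) ≤ b x) :
    IsSupersolutionOn b lam (fun x => -(1 + R ^ ε * x ^ (-ε))) (Ici R) := by
  refine ⟨fun x => ε * R ^ ε * x ^ (-ε - 1),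
    fun x => ε * R ^ ε * ((-ε - 1) * x ^ (-ε - 1 - 1)), fun x hx => ?_⟩
  have hx₀ : 0 < x := hR.trans_le hx
  refine ⟨?_, (Real.hasDerivAt_rpow_const (Or.inl hx₀.ne')).const_mul _, ?_⟩
  · exact (((Real.hasDerivAt_rpow_const (Or.inl hx₀.ne')).const_mul _).const_add 1).neg.congr_deriv
      (by ring)
  · have hconvex : 0 ≤ ε * R ^ ε * ((ε + 1) * x ^ (-ε - 1 - 1)) := by positivity
    have hcancel : x ^ (1 + ε) * x ^ (-ε - 1) = 1 := by
      rw [← Real.rpow_add hx₀, show 1 + ε + (-ε - 1) = 0 by ring, Real.rpow_zero]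
    have hdrift : κ * ε * R ^ ε ≤ b x * (ε * R ^ ε * x ^ (-ε - 1)) :=
      calc κ * ε * R ^ ε = κ * x ^ (1 + ε) * (ε * R ^ ε * x ^ (-ε - 1)) := by
            linear_combination (-κ * ε * R ^ ε) * hcancel
        _ ≤ b x * (ε * R ^ ε * x ^ (-ε - 1)) :=
            mul_le_mul_of_nonneg_right (hb x hx) (by positivity)
    have hzeroth : lam * (R ^ ε * x ^ (-ε)) ≤ lam :=
      mul_le_of_le_one_right hlam (rpow_mul_rpow_neg_le_one hε hR hx)
    linarith

theorem IsSupersolutionOn.half_apply_le (hu : IsSupersolutionOn b lam u (Ici R)) (hb : Continuous b)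
    (hlam : 0 ≤ lam) (hε : 0 ≤ ε) (hκ : 0 ≤ κ) (hR : 0 < R)
    (hRlam : 2 * lam ≤ κ * ε * R ^ ε) (hgrowth : ∀ x ∈ Ici R, κ * x ^ (1 + ε) ≤ b x)
    (hnonneg : ∀ x ∈ Ici R, 0 ≤ u x) {x : ℝ} (hx : R ≤ x) : u R / 2 ≤ u x := by
  have hx₀ : 0 < x := hR.trans_le hx
  set c := u R / 2 with hc
  have hc₀ : 0 ≤ c := div_nonneg (hnonneg R self_mem_Ici) zero_le_two
  suffices hδ : ∀ δ > 0, c ≤ u x + δ * x by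
    refine le_of_forall_pos_le_add fun η hη => ?_
    simpa only [div_mul_cancel₀ η hx₀.ne'] using hδ (η / x) (div_pos hη hx₀)
  intro δ hδ
  have hbarrier := isSupersolutionOn_neg_barrier hlam hε hR hRlam hgrowth
  have hlinear : IsSupersolutionOn b lam (fun x => x) (Ici R) := isSupersolutionOn_id fun y hy => by
    have hy₀ : 0 ≤ y := hR.le.trans hy
    exact add_nonneg ((by positivity : 0 ≤ κ * y ^ (1 + ε)).trans (hgrowth y hy))
      (mul_nonneg hlam hy₀)
  have hcomp := (hu.add (hlinear.const_mul hδ.le)).add (hbarrier.const_mul hc₀)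
  have hendpoint : ∀ y, R ≤ y → 2 * c ≤ u y + δ * y →
      0 ≤ u y + δ * y + c * -(1 + R ^ ε * y ^ (-ε)) := fun y hy hle => by
    linarith [mul_le_of_le_one_right hc₀ (rpow_mul_rpow_neg_le_one hε hR hy)]
  set y := max x (2 * c / δ)
  have hxy : x ≤ y := le_max_left _ _
  have hδy : 2 * c ≤ δ * y := (div_le_iff₀' hδ).1 (le_max_right _ _)
  have hle := (hcomp.mono Icc_subset_Ici_self).nonneg_of_nonneg_endpoints hb hlam
    (hendpoint R le_rfl (by linarith [mul_pos hδ hR]))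
    (hendpoint y (hx.trans hxy) (by linarith [hnonneg y (hx.trans hxy)])) x ⟨hx, hxy⟩
  have : 0 ≤ c * (R ^ ε * x ^ (-ε)) := by positivity
  linarith

theorem IsSupersolutionOn.eq_zero (hu : IsSupersolutionOn b lam u univ) (hb : Continuous b)
    (hlam : 0 ≤ lam) (hε : 0 < ε) (hκ : 0 < κ)
    (hgrowth : ∀ᶠ x in atTop, κ * x ^ (1 + ε) ≤ b x)
    (htop : ∀ η > 0, ∃ᶠ y in atTop, |u y| < η) (hbot : ∀ η > 0, ∃ᶠ y in atBot, |u y| < η) :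
    u = 0 := by
  have hnonneg := hu.nonneg_of_frequently_neg_lt hb hlam
    (fun η hη => (htop η hη).mono fun _ hy => (abs_lt.1 hy).1)
    (fun η hη => (hbot η hη).mono fun _ hy => (abs_lt.1 hy).1)
  have hlarge : ∀ᶠ R in atTop, 2 * lam ≤ κ * ε * R ^ ε :=
    ((tendsto_rpow_atTop hε).const_mul_atTop (mul_pos hκ hε)).eventually_ge_atTop (2 * lam)
  obtain ⟨R, hR, hRlam, hgrowthR⟩ :=
    ((eventually_gt_atTop 0).and (hlarge.and (eventually_forall_ge_atTop.2 hgrowth))).exists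
  have huR : u R = 0 := by
    by_contra hne
    have hpos : 0 < u R := (hnonneg R).lt_of_ne' hne
    obtain ⟨y, hy, huy⟩ := frequently_atTop.1 (htop (u R / 2) (half_pos hpos)) R
    have hle := (hu.mono (subset_univ _)).half_apply_le hb hlam hε.le hκ.le hR hRlam hgrowthR
      (fun x _ => hnonneg x) hy
    exact (hle.trans (le_abs_self _)).not_gt huy
  funext x
  have hRmem : R ∈ Ioo (-(|x| + R + 1)) (|x| + R + 1) := by
    constructor <;> linarith [abs_nonneg x]
  exact (hu.mono (subset_univ _)).eqOn_zero hb (fun y _ => hnonneg y) hRmem huR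
    (abs_le.1 (by linarith))

end Superlinear

lemma exists_mem_abs_lt_of_integrable_abs_rpow {X : Type*} [MeasurableSpace X] {μ : Measure X}
    {u : X → ℝ} {p η : ℝ} {s : Set X} (hint : Integrable (fun x => |u x| ^ p) μ) (hp : 0 < p)
    (hs : μ s = ⊤) (hη : 0 < η) : ∃ x ∈ s, |u x| < η := by
  by_contra! hlarge
  have hsub : s ⊆ {x | η ^ p ≤ ‖|u x| ^ p‖} := fun x hx =>
    (Real.rpow_le_rpow hη.le (hlarge x hx) hp.le).trans (le_abs_self _)
  exact ((measure_mono hsub).trans_lt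
    (hint.measure_norm_ge_lt_top (Real.rpow_pos_of_pos hη p))).ne hs

theorem no_Lp_solution_of_resolvent_equation_general
    {b f : ℝ → ℝ} {ε κ lam p : ℝ} (hb : Continuous b) (hε : 0 < ε) (hκ : 0 < κ)
    (hgrowth : ∀ᶠ x in atTop, κ * x ^ (1 + ε) ≤ b x) (hlam : 0 ≤ lam) (hp : 0 < p)
    (hfpos : ∀ x, 0 ≤ f x) (hfne : f ≠ 0) :
    ¬ ∃ u : ℝ → ℝ, Differentiable ℝ u ∧ Differentiable ℝ (deriv u) ∧
      (∀ x : ℝ, lam * u x - deriv (deriv u) x + b x * deriv u x = f x) ∧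
      Integrable (fun x : ℝ => |u x| ^ p) volume := by
  rintro ⟨u, hu, hu', heq, hint⟩
  have htop : ∀ η > 0, ∃ᶠ y in atTop, |u y| < η := fun η hη => frequently_atTop.2 fun _ =>
    exists_mem_abs_lt_of_integrable_abs_rpow hint hp Real.volume_Ici hη
  have hbot : ∀ η > 0, ∃ᶠ y in atBot, |u y| < η := fun η hη => frequently_atBot.2 fun _ =>
    exists_mem_abs_lt_of_integrable_abs_rpow hint hp Real.volume_Iic hη
  have hzero : u = 0 :=
    (isSupersolutionOn_univ_of_eq hu hu' heq hfpos).eq_zero hb hlam hε hκ hgrowth htop hbot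
  refine hfne (funext fun x => ?_)
  simp [← heq x, hzero]

lemma continuous_mul_abs_rpow {ε : ℝ} (hε : 0 ≤ ε) : Continuous fun x : ℝ => x * |x| ^ ε :=
  continuous_id.mul (continuous_abs.rpow_const fun _ => Or.inr hε)

lemma eventually_rpow_one_add_le_mul_abs_rpow (ε : ℝ) :
    ∀ᶠ x : ℝ in atTop, 1 * x ^ (1 + ε) ≤ x * |x| ^ ε := by
  filter_upwards [eventually_gt_atTop 0] with x hx
  rw [one_mul, abs_of_pos hx, Real.rpow_add hx, Real.rpow_one]

/-- for `ε, λ > 0`, `p ∈ [1,∞)` and a nonnegative, not identically vanishing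
`f ∈ C_c^∞(ℝ)`, the equation `λu − u'' + x|x|^ε u' = f` has no `C²` solution with
`∫|u|^p < ∞`. -/
theorem no_Lp_solution_of_resolvent_equation
    (ε lam p : ℝ) (hε : 0 < ε) (hlam : 0 < lam) (hp : 1 ≤ p)
    (f : ℝ → ℝ) (hfsm : ContDiff ℝ (⊤ : ℕ∞) f) (hfsupp : HasCompactSupport f)
    (hfpos : ∀ x, 0 ≤ f x) (hfne : f ≠ 0) :
    ¬ ∃ u : ℝ → ℝ, ContDiff ℝ 2 u ∧
      (∀ x : ℝ, lam * u x - deriv (deriv u) x + x * |x| ^ ε * deriv u x = f x) ∧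
      Integrable (fun x : ℝ => |u x| ^ p) volume := by
  rintro ⟨u, hu, heq, hint⟩
  exact no_Lp_solution_of_resolvent_equation_general (continuous_mul_abs_rpow hε.le) hε one_pos
    (eventually_rpow_one_add_le_mul_abs_rpow ε) hlam.le (one_pos.trans_le hp) hfpos hfne
    ⟨u, hu.differentiable two_ne_zero, hu.differentiable_deriv_two, heq, hint⟩
end
end
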